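/- arXiv:2109.14177 — 7 statements merged into one kernel-verified Lean document; each statement's English description precedes it below -/
import Mathlib

section
/- There exists an absolute constant c > 0 such that the following holds. Let X be a finite set of positive reals with |X| ≥ 3, and suppose z₁ < z₁' and z₂ < z₂' are elements of X such that log z₁ < log z₁' is a nearest consecutive pair of elements of log X and log z₂ < log z₂' is a second nearest consecutive pair of elements of log X. Then |(z₁X+1)(z₁'X+1)/(z₁X+1)| ≥ c · |X|² and |(z₂X+1)(z₂'X+1)/(z₂X+1)| ≥ c · |X|². -/
/-!
Write `r = z' / z` for the ratio of the chosen pair. If `x < y` in `X` always forces `y / x ≥ r`,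
except possibly when `x` is one exceptional element `e`, then for `y ≠ e` and `x ≤ y` the element
`(z y + 1) * ((z' x + 1) / (z x + 1))` of the ratio set lies in the interval
`(z y + 1, z' y + 1]`, because `x ↦ (z' x + 1) / (z x + 1)` exceeds `1` and is strictly increasing
for `x > 0`. The gap hypothesis says that `z' y + 1 ≤ z w + 1` for the elements `w > y` of `X`, so
these intervals are disjoint for different `y`; within one interval the elements are distinct by
strict monotonicity. Hence the ratio set has at least as many elements as there are pairs `x ≤ y`
in `X \ {e}`, that is, at least `(|X| - 1)² / 2 ≥ 2 |X|² / 9`.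

For the nearest pair there is no exception at all, and for the second nearest pair the only
exceptional element is `z₁`; so `e = z₁` serves in both cases.
-/

open Finset Pointwise

/-- For `z : ℝ` and a finite set `X ⊆ ℝ`, the set `zX + 1 = {z * x + 1 : x ∈ X}`. -/
noncomputable def pshift (z : ℝ) (X : Finset ℝ) : Finset ℝ := X.image fun x => z * x + 1

/-- `a < a'` are consecutive elements of the finite set `A`. -/
noncomputable def ConsecPair (A : Finset ℝ) (a a' : ℝ) : Prop :=
  a ∈ A ∧ a' ∈ A ∧ a < a' ∧ ∀ x ∈ A, ¬(a < x ∧ x < a')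

/-- `a < a'` is a nearest consecutive pair of `A`: consecutive elements whose difference
`a' - a` is the minimum positive element of `A - A`. -/
noncomputable def NearestPair (A : Finset ℝ) (a a' : ℝ) : Prop :=
  ConsecPair A a a' ∧ ∀ x ∈ A, ∀ y ∈ A, x < y → a' - a ≤ y - x

/-- `b < b'` is a second nearest consecutive pair of `A` (relative to the nearest pair
`(a, a')`). -/
noncomputable def SecondNearestPair (A : Finset ℝ) (a a' b b' : ℝ) : Prop :=
  ConsecPair A b b' ∧
    ∀ c ∈ A, ∀ c' ∈ A, ConsecPair A c c' → c' - c < b' - b → c = a ∧ c' = a'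

/-- The pairs `x ≤ y` in `Y` and their transposes cover `Y ×ˢ Y`. -/
lemma sq_card_le_two_mul_card_le_pairs (Y : Finset ℝ) :
    Y.card ^ 2 ≤ 2 * ((Y ×ˢ Y).filter fun p => p.1 ≤ p.2).card := by
  set P := (Y ×ˢ Y).filter fun p => p.1 ≤ p.2 with hP
  have hsub : Y ×ˢ Y ⊆ P ∪ P.image Prod.swap := by
    rintro ⟨a, b⟩ hab
    rw [mem_product] at hab
    rw [mem_union]
    rcases le_total a b with h | h
    · left
      simp only [hP, mem_filter, mem_product]
      exact ⟨hab, h⟩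
    · right
      refine mem_image.2 ⟨(b, a), ?_, rfl⟩
      simp only [hP, mem_filter, mem_product]
      exact ⟨⟨hab.2, hab.1⟩, h⟩
  have h1 := card_le_card hsub
  have h2 := card_union_le P (P.image Prod.swap)
  have h3 : (P.image Prod.swap).card ≤ P.card := card_image_le
  rw [card_product] at h1
  nlinarith

lemma shift_ratio_strictMono {z z' x u : ℝ} (hz : 0 < z) (hzz : z < z') (hx : 0 < x)
    (hxu : x < u) : (z' * x + 1) / (z * x + 1) < (z' * u + 1) / (z * u + 1) := by
  have hu : 0 < u := hx.trans hxu
  rw [div_lt_div_iff₀ (by positivity) (by positivity)]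
  nlinarith [mul_pos (sub_pos.2 hzz) (sub_pos.2 hxu)]

/-- The interval containing `(z y + 1) * ((z' x + 1) / (z x + 1))` when `x ≤ y`. -/
lemma shift_value_mem_Ioc {z z' x y : ℝ} (hz : 0 < z) (hzz : z < z') (hx : 0 < x)
    (hxy : x ≤ y) :
    z * y + 1 < (z * y + 1) * ((z' * x + 1) / (z * x + 1)) ∧
      (z * y + 1) * ((z' * x + 1) / (z * x + 1)) ≤ z' * y + 1 := by
  have hy : 0 < y := hx.trans_le hxy
  have hy' : 0 < z * y + 1 := by positivity
  constructor
  · have : 1 < (z' * x + 1) / (z * x + 1) := by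
      rw [one_lt_div (by positivity)]
      nlinarith [mul_pos (sub_pos.2 hzz) hx]
    nlinarith
  · have : (z' * x + 1) / (z * x + 1) ≤ (z' * y + 1) / (z * y + 1) := by
      rcases hxy.eq_or_lt with rfl | h
      · exact le_rfl
      · exact (shift_ratio_strictMono hz hzz hx h).le
    calc _ ≤ (z * y + 1) * ((z' * y + 1) / (z * y + 1)) := by gcongr
      _ = _ := by field_simp

/-- Expansion when all multiplicative gaps of `X`, apart from those above the single element `e`,
are at least `z' / z`. -/
lemma expander_of_gaps (X : Finset ℝ) (z z' e : ℝ) (hX : ∀ x ∈ X, 0 < x) (h3 : 3 ≤ X.card)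
    (hz : 0 < z) (hzz : z < z')
    (H : ∀ x ∈ X, ∀ y ∈ X, x < y → x ≠ e → z' * x ≤ z * y) :
    2 / 9 * (X.card : ℝ) ^ 2 ≤ (((pshift z X * pshift z' X) / pshift z X).card : ℝ) := by
  set Y := X.erase e
  set P := (Y ×ˢ Y).filter fun p => p.1 ≤ p.2 with hP
  have hmem : ∀ p ∈ P, p.1 ∈ X ∧ p.2 ∈ X ∧ p.2 ≠ e ∧ p.1 ≤ p.2 := by
    intro p hp
    simp only [hP, mem_filter, mem_product] at hp
    exact ⟨mem_of_mem_erase hp.1.1, mem_of_mem_erase hp.1.2, ne_of_mem_erase hp.1.2, hp.2⟩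
  have hcard : P.card ≤ ((pshift z X * pshift z' X) / pshift z X).card := by
    have hlt : ∀ p ∈ P, ∀ q ∈ P, p.2 < q.2 →
        (z * p.2 + 1) * ((z' * p.1 + 1) / (z * p.1 + 1)) <
          (z * q.2 + 1) * ((z' * q.1 + 1) / (z * q.1 + 1)) := by
      intro p hp q hq hpq
      obtain ⟨hp1, hp2, hpe, hple⟩ := hmem p hp
      obtain ⟨hq1, hq2, hqe, hqle⟩ := hmem q hq
      have h1 := (shift_value_mem_Ioc hz hzz (hX _ hp1) hple).2
      have h2 := (shift_value_mem_Ioc hz hzz (hX _ hq1) hqle).1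
      have h3 := H _ hp2 _ hq2 hpq hpe
      linarith
    refine card_le_card_of_injOn
      (fun p => (z * p.2 + 1) * ((z' * p.1 + 1) / (z * p.1 + 1))) ?_ ?_
    · intro p hp
      obtain ⟨hp1, hp2, -, -⟩ := hmem p hp
      simp only [← mul_div_assoc]
      exact div_mem_div (mul_mem_mul (mem_image_of_mem _ hp2) (mem_image_of_mem _ hp1))
        (mem_image_of_mem _ hp1)
    · intro p hp q hq hpq
      simp only at hpq
      rcases lt_trichotomy p.2 q.2 with h | h | h
      · exact absurd hpq (hlt p hp q hq h).ne
      · obtain ⟨hp1, hp2, -, -⟩ := hmem p hp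
        obtain ⟨hq1, hq2, -, -⟩ := hmem q hq
        have hpos : 0 < z * q.2 + 1 := by
          have := hX _ hq2
          positivity
        rw [h] at hpq
        have heq := mul_left_cancel₀ hpos.ne' hpq
        refine Prod.ext ?_ h
        rcases lt_trichotomy p.1 q.1 with h' | h' | h'
        · exact absurd heq (shift_ratio_strictMono hz hzz (hX _ hp1) h').ne
        · exact h'
        · exact absurd heq (shift_ratio_strictMono hz hzz (hX _ hq1) h').ne'
      · exact absurd hpq (hlt q hq p hp h).ne'
  have h1 : X.card - 1 ≤ Y.card := pred_card_le_card_erase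
  have h2 : Y.card ^ 2 ≤ 2 * P.card := sq_card_le_two_mul_card_le_pairs Y
  have h1' : (X.card : ℝ) ≤ Y.card + 1 := by
    have : X.card ≤ Y.card + 1 := by omega
    exact_mod_cast this
  have h2' : (Y.card : ℝ) ^ 2 ≤ 2 * P.card := by exact_mod_cast h2
  have h3' : (3 : ℝ) ≤ X.card := by exact_mod_cast h3
  have hcard' : (P.card : ℝ) ≤ (((pshift z X * pshift z' X) / pshift z X).card : ℝ) := by
    exact_mod_cast hcard
  -- `|Y| ≥ |X| - 1 ≥ 2 |X| / 3` since `|X| ≥ 3`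
  have h4 : 2 / 3 * (X.card : ℝ) ≤ Y.card := by linarith
  have h5 : (2 / 3 * (X.card : ℝ)) ^ 2 ≤ (Y.card : ℝ) ^ 2 := by gcongr
  nlinarith

lemma mul_le_mul_of_log_gap {z z' x y : ℝ} (hz : 0 < z) (hz' : 0 < z') (hx : 0 < x) (hy : 0 < y)
    (h : Real.log z' - Real.log z ≤ Real.log y - Real.log x) : z' * x ≤ z * y := by
  rw [← Real.log_le_log_iff (by positivity) (by positivity), Real.log_mul hz'.ne' hx.ne',
    Real.log_mul hz.ne' hy.ne']
  linarith

/-- Every element of `A` other than `a` has gap at least `b' - b` to all larger elements: compare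
with its immediate successor in `A`. -/
lemma SecondNearestPair.le_sub {A : Finset ℝ} {a a' b b' s t : ℝ}
    (h : SecondNearestPair A a a' b b') (hs : s ∈ A) (ht : t ∈ A) (hst : s < t) (hsa : s ≠ a) :
    b' - b ≤ t - s := by
  have hne : (A.filter fun x => s < x).Nonempty := ⟨t, mem_filter.2 ⟨ht, hst⟩⟩
  obtain ⟨c, hc, hmin⟩ := exists_min_image _ id hne
  obtain ⟨hcA, hsc⟩ := mem_filter.1 hc
  have hct : c ≤ t := hmin t (mem_filter.2 ⟨ht, hst⟩)
  by_contra! hlt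
  refine hsa (h.2 s hs c hcA ⟨hs, hcA, hsc, ?_⟩ (by linarith)).1
  rintro x hx ⟨hsx, hxc⟩
  exact absurd (hmin x (mem_filter.2 ⟨hx, hsx⟩)) (not_le.2 hxc)

theorem quadratic_product_shift_expander :
    ∃ c : ℝ, 0 < c ∧
      ∀ (X : Finset ℝ) (z₁ z₁' z₂ z₂' : ℝ),
        (∀ x ∈ X, 0 < x) → 3 ≤ X.card →
        z₁ ∈ X → z₁' ∈ X → z₂ ∈ X → z₂' ∈ X →
        z₁ < z₁' → z₂ < z₂' →
        NearestPair (X.image Real.log) (Real.log z₁) (Real.log z₁') →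
        SecondNearestPair (X.image Real.log) (Real.log z₁) (Real.log z₁')
          (Real.log z₂) (Real.log z₂') →
        c * (X.card : ℝ) ^ 2 ≤
          (((pshift z₁ X * pshift z₁' X) / pshift z₁ X).card : ℝ) ∧
        c * (X.card : ℝ) ^ 2 ≤
          (((pshift z₂ X * pshift z₂' X) / pshift z₂ X).card : ℝ) := by
  refine ⟨2 / 9, by norm_num, ?_⟩
  intro X z₁ z₁' z₂ z₂' hX h3 h₁ h₁' h₂ h₂' hlt₁ hlt₂ hN hS
  constructor
  · refine expander_of_gaps X z₁ z₁' z₁ hX h3 (hX _ h₁) hlt₁ ?_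
    intro x hx y hy hxy _
    exact mul_le_mul_of_log_gap (hX _ h₁) (hX _ h₁') (hX _ hx) (hX _ hy)
      (hN.2 _ (mem_image_of_mem _ hx) _ (mem_image_of_mem _ hy) (Real.log_lt_log (hX _ hx) hxy))
  · refine expander_of_gaps X z₂ z₂' z₁ hX h3 (hX _ h₂) hlt₂ ?_
    intro x hx y hy hxy hne
    refine mul_le_mul_of_log_gap (hX _ h₂) (hX _ h₂') (hX _ hx) (hX _ hy)
      (hS.le_sub (mem_image_of_mem _ hx) (mem_image_of_mem _ hy)
        (Real.log_lt_log (hX _ hx) hxy) ?_)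
    exact fun h => hne (Real.log_injOn_pos (hX _ hx) (hX _ h₁) h)
end

section
/- There exist absolute constants c > 0 and C > 0 such that the following holds. Let X = {x₁ < x₂ < … < x_N} be a finite set of N ≥ 2 real numbers and let F be a function that is strictly increasing and strictly convex (or strictly concave) on the interval [x₁, x_N]. Then the number of points of the planar set (X × F(X)) + (X × F(X)) − (X × F(X)) lying in the region [x₁, x_N] × (F(x₁), F(x_N)] is at least c · (N / (C log N))³. -/
/-!
The threefold set is the Cartesian product of `X + X - X` and `F(X) + F(X) - F(X)`, so it is enough
to bound from below the product of the numbers of elements of these two sets in `[x₁, x_N]` and in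
`(F x₁, F x_N]`.

For `x ∈ X` other than the maximum let `s x` be its successor in `X` and `d x = s x - x` its gap.
A value that is a gap of at least `t` elements is called popular (at level `t`), and `m` denotes
the number of popular values. Summing over `t` (a layer-cake argument with a harmonic sum) gives a
level `t` with `t * m ≥ (N - 1) / H_{N-1}`, which is of order `N / log N`
(`exists_popular_level`).

Both sets are then bounded below by squeezing. If `e ≤ d x` with `e` popular, then `x + e` lies
in `(x, s x]`; these intervals are disjoint, so `X + X - X` has at least `t * m² / 2` elements in the
box (`card_squeeze_domain`). If `x, y` have the same popular gap and
`F (s y) - F y ≤ F (s x) - F x`, then `F x + (F (s y) - F y)` lies in `(F x, F (s x)]`; by strict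
convexity the increments of `F` over intervals of equal length are distinct, so
`F(X) + F(X) - F(X)` has at least `m * t² / 2` elements in the box (`card_squeeze_image`). The
product is at least `(t * m)³ / 4`.
-/

open Finset Pointwise

/-! ### Increments of strictly convex functions -/

/-- A strictly convex function has strictly larger increments, over steps of a fixed length, further
to the right. -/
lemma StrictConvexOn.increment_lt {I : Set ℝ} {F : ℝ → ℝ} (hF : StrictConvexOn ℝ I F)
    {x x' y y' : ℝ} (hx : x ∈ I) (hy' : y' ∈ I) (hd : x' - x = y' - y) (hpos : x < x')
    (hxy : x < y) : F x' - F x < F y' - F y := by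
  -- `x'` and `y` are the convex combinations of `x` and `y'` with weights `l, 1 - l` swapped.
  have hD : 0 < y' - x := by linarith
  set l := (x' - x) / (y' - x) with hl
  have hlD : l * (y' - x) = x' - x := by rw [hl]; field_simp
  have hl0 : 0 < l := div_pos (by linarith) hD
  have hl1 : 0 < 1 - l := by
    have : l < 1 := by rw [hl, div_lt_one hD]; linarith
    linarith
  have h1 := hF.2 hx hy' (by linarith : x ≠ y') hl1 hl0 (by ring)
  have h2 := hF.2 hx hy' (by linarith : x ≠ y') hl0 hl1 (by ring)
  simp only [smul_eq_mul] at h1 h2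
  have e1 : (1 - l) * x + l * y' = x' := by linarith
  have e2 : l * x + (1 - l) * y' = y := by linarith
  rw [e1] at h1
  rw [e2] at h2
  linarith

lemma eq_of_increment_eq {I : Set ℝ} {F : ℝ → ℝ}
    (hF : StrictConvexOn ℝ I F ∨ StrictConcaveOn ℝ I F)
    {x x' y y' : ℝ} (hx : x ∈ I) (hx' : x' ∈ I) (hy : y ∈ I) (hy' : y' ∈ I)
    (hd : x' - x = y' - y) (hpos : x < x') (hinc : F x' - F x = F y' - F y) : x = y := by
  rcases hF with hF | hF
  · rcases lt_trichotomy x y with h | h | h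
    · linarith [hF.increment_lt hx hy' hd hpos h]
    · exact h
    · linarith [hF.increment_lt hy hx' hd.symm (by linarith) h]
  · have hG := hF.neg
    rcases lt_trichotomy x y with h | h | h
    · have := hG.increment_lt hx hy' hd hpos h
      simp only [Pi.neg_apply] at this
      linarith
    · exact h
    · have := hG.increment_lt hy hx' hd.symm (by linarith) h
      simp only [Pi.neg_apply] at this
      linarith

/-! ### Counting -/

/-- At least half of the pairs from a finite set are weakly ordered by a given real function. -/
lemma card_sq_le_two_mul_card_ordered {α : Type*} (S : Finset α) (g : α → ℝ) :
    #S ^ 2 ≤ 2 * #((S ×ˢ S).filter fun p => g p.2 ≤ g p.1) := by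
  classical
  set A := (S ×ˢ S).filter fun p => g p.2 ≤ g p.1 with hA
  have h : S ×ˢ S ⊆ A ∪ A.image Prod.swap := by
    rintro ⟨p, q⟩ hpq
    rw [mem_product] at hpq
    rw [mem_union]
    rcases le_total (g q) (g p) with h | h
    · left; simp [hA, hpq.1, hpq.2, h]
    · right
      exact mem_image.2 ⟨(q, p), by simp [hA, hpq.1, hpq.2, h], rfl⟩
  have h1 := card_le_card h
  have h2 := card_union_le A (A.image Prod.swap)
  have h3 : #(A.image Prod.swap) ≤ #A := card_image_le
  rw [card_product] at h1
  nlinarith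

/-- The values taken by `d` on at least `t` elements of `S`. -/
noncomputable def popular (S : Finset ℝ) (d : ℝ → ℝ) (t : ℕ) : Finset ℝ :=
  (S.image d).filter fun e => t ≤ #(S.filter fun x => d x = e)

/-- The layer-cake identity `#S = ∑ₜ #(popular S d t)` forces some term of the sum to be at least
`#S / (t * H)`, where `H` is the harmonic number of `#S`. -/
lemma exists_popular_level (S : Finset ℝ) (hS : S.Nonempty) (d : ℝ → ℝ) :
    ∃ t : ℕ, (#S : ℝ) ≤ (t * #(popular S d t) : ℕ) * (harmonic #S : ℚ) := by
  by_contra! hcon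
  have hsum : #S = ∑ t ∈ range #S, #(popular S d (t + 1)) := by
    have h1 : #S = ∑ e ∈ S.image d, #(S.filter fun x => d x = e) :=
      card_eq_sum_card_image d S
    have h2 : ∀ e ∈ S.image d, #(S.filter fun x => d x = e) =
        ∑ t ∈ range #S, if t + 1 ≤ #(S.filter fun x => d x = e) then 1 else 0 := by
      intro e _
      rw [← card_filter]
      have hle : #(S.filter fun x => d x = e) ≤ #S := card_filter_le _ _
      have : (range #S).filter (fun t => t + 1 ≤ #(S.filter fun x => d x = e)) =
          range #(S.filter fun x => d x = e) := by
        ext t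
        simp only [mem_filter, mem_range]
        omega
      rw [this, card_range]
    calc #S = _ := h1
      _ = _ := sum_congr rfl h2
      _ = _ := sum_comm
      _ = _ := by
        refine sum_congr rfl fun t _ => ?_
        rw [← card_filter]
        rfl
  have hn : 0 < #S := hS.card_pos
  have hHq : (0 : ℚ) < harmonic #S := harmonic_pos hn.ne'
  have hH : (0 : ℝ) < (harmonic #S : ℚ) := by exact_mod_cast hHq
  have hlt : (#S : ℝ) * (harmonic #S : ℚ) < #S * (harmonic #S : ℚ) := by
    calc (#S : ℝ) * (harmonic #S : ℚ)
        = ∑ t ∈ range #S, (#(popular S d (t + 1)) : ℝ) * (harmonic #S : ℚ) := by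
          rw [← sum_mul]
          congr 1
          exact_mod_cast hsum
      _ < ∑ t ∈ range #S, (#S : ℝ) * ((t + 1 : ℕ) : ℝ)⁻¹ := by
          refine sum_lt_sum_of_nonempty (nonempty_range_iff.2 hn.ne') fun t _ => ?_
          have h := hcon (t + 1)
          have ht : (0 : ℝ) < ((t + 1 : ℕ) : ℝ) := by positivity
          rw [← div_eq_mul_inv, lt_div_iff₀ ht]
          rw [Nat.cast_mul] at h
          linarith
      _ = #S * (harmonic #S : ℚ) := by
          rw [← mul_sum, harmonic]
          push_cast
          rfl
  exact lt_irrefl _ hlt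

lemma card_mul_le_card_of_fibers {α β : Type*} [DecidableEq β] (A : Finset α) (B : Finset β)
    (f : α → β) (n k : ℕ) (h : ∀ b ∈ B, n ≤ k * #(A.filter fun a => f a = b)) :
    #B * n ≤ k * #A := by
  calc #B * n = ∑ _b ∈ B, n := by rw [sum_const, smul_eq_mul]
    _ ≤ ∑ b ∈ B, k * #(A.filter fun a => f a = b) := sum_le_sum h
    _ = k * #(A.filter fun a => f a ∈ B) := by
      rw [← mul_sum, sum_card_fiberwise_eq_card_filter]
    _ ≤ k * #A := Nat.mul_le_mul_left _ (card_filter_le _ _)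

/-- Among the pairs of popular values at least half are ordered, and the larger value is taken by `d`
at least `t` times. -/
lemma card_domain_pairs (S : Finset ℝ) (d : ℝ → ℝ) (t : ℕ) :
    t * #(popular S d t) ^ 2 ≤
      2 * #((S ×ˢ popular S d t).filter fun p => p.2 ≤ d p.1) := by
  set P := popular S d t with hP
  set A := (S ×ˢ P).filter fun p => p.2 ≤ d p.1 with hA
  set B := (P ×ˢ P).filter fun p => p.2 ≤ p.1 with hB
  have hB2 : #P ^ 2 ≤ 2 * #B := card_sq_le_two_mul_card_ordered P id
  -- each pair in `B` has at least `t` preimages under `(x, e) ↦ (d x, e)`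
  have hfib : #B * t ≤ 1 * #A := by
    refine card_mul_le_card_of_fibers A B (fun p : ℝ × ℝ => (d p.1, p.2)) t 1 ?_
    rintro ⟨e', e⟩ he
    simp only [hB, mem_filter, mem_product] at he
    obtain ⟨⟨he', he⟩, hle⟩ := he
    have ht : t ≤ #(S.filter fun x => d x = e') := (mem_filter.1 he').2
    rw [one_mul]
    refine ht.trans (card_le_card_of_injOn (fun x => (x, e)) ?_ ?_)
    · intro x hx
      have hx' := mem_filter.1 (mem_coe.1 hx)
      simp [hA, hx'.1, hx'.2, he, hle]
    · intro x _ y _ hxy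
      exact (Prod.ext_iff.1 hxy).1
  nlinarith

/-- Each popular value has a fiber of size at least `t`, and at least half of the pairs from that
fiber are ordered by `g`. -/
lemma card_image_pairs (S : Finset ℝ) (d g : ℝ → ℝ) (t : ℕ) :
    #(popular S d t) * t ^ 2 ≤
      2 * #((S ×ˢ S).filter fun p => d p.2 = d p.1 ∧ g p.2 ≤ g p.1) := by
  refine card_mul_le_card_of_fibers _ _ (fun p : ℝ × ℝ => d p.1) _ _ ?_
  intro e he
  have ht : t ≤ #(S.filter fun x => d x = e) := (mem_filter.1 he).2
  calc t ^ 2 ≤ #(S.filter fun x => d x = e) ^ 2 := Nat.pow_le_pow_left ht 2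
    _ ≤ _ := card_sq_le_two_mul_card_ordered _ g
    _ ≤ _ := by
      refine Nat.mul_le_mul_left _ (card_le_card ?_)
      rintro ⟨x, y⟩ h
      simp only [mem_filter, mem_product] at h ⊢
      obtain ⟨⟨⟨hx, hdx⟩, hy, hdy⟩, hg⟩ := h
      exact ⟨⟨⟨hx, hy⟩, hdy.trans hdx.symm, hg⟩, hdx⟩

/-! ### Squeezing -/

/-- `s` maps each element of `S ⊆ X` to its successor in `X`. -/
structure IsSucc (X S : Finset ℝ) (s : ℝ → ℝ) : Prop where
  mem : ∀ x ∈ S, x ∈ X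
  succ_mem : ∀ x ∈ S, s x ∈ X
  lt : ∀ x ∈ S, x < s x
  le : ∀ x ∈ S, ∀ y ∈ X, x < y → s x ≤ y

/-- If `F` is increasing on `X`, the intervals `(F x, F (s x)]` are disjoint. -/
lemma IsSucc.eq_of_mem {X S : Finset ℝ} {s F : ℝ → ℝ} (h : IsSucc X S s)
    (hF : MonotoneOn F X) {x y w : ℝ} (hx : x ∈ S) (hy : y ∈ S)
    (hxw : F x < w) (hwx : w ≤ F (s x)) (hyw : F y < w) (hwy : w ≤ F (s y)) : x = y := by
  rcases lt_trichotomy x y with hlt | heq | hlt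
  · have := hF (h.succ_mem x hx) (h.mem y hy) (h.le x hx y (h.mem y hy) hlt)
    linarith
  · exact heq
  · have := hF (h.succ_mem y hy) (h.mem x hx) (h.le y hy x (h.mem x hx) hlt)
    linarith

/-- For a popular gap `e ≤ s x - x` the point `x + e` lies in `(x, s x]`, so the pairs `(x, e)` give
distinct elements of `X + X - X` in `[a, b]`. -/
lemma card_squeeze_domain {X S : Finset ℝ} {s : ℝ → ℝ} (h : IsSucc X S s) {a b : ℝ}
    (hab : ∀ x ∈ X, a ≤ x ∧ x ≤ b) (t : ℕ) :
    t * #(popular S (fun x => s x - x) t) ^ 2 ≤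
      2 * #((X + X - X).filter fun u => a ≤ u ∧ u ≤ b) := by
  refine (card_domain_pairs S (fun x => s x - x) t).trans
    (Nat.mul_le_mul_left _ (card_le_card_of_injOn (fun p => p.1 + p.2) ?_ ?_))
  · rintro ⟨x, e⟩ hp
    simp only [coe_filter, Set.mem_ofPred_eq, mem_product] at hp
    obtain ⟨⟨hx, he⟩, hle⟩ := hp
    obtain ⟨y, hy, rfl⟩ := mem_image.1 (mem_filter.1 he).1
    simp only [coe_filter, Set.mem_ofPred_eq]
    have h1 := h.lt y hy
    have h2 := hab x (h.mem x hx)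
    have h3 := hab _ (h.succ_mem x hx)
    refine ⟨?_, by linarith, by linarith⟩
    rw [← add_sub_assoc]
    exact sub_mem_sub (add_mem_add (h.mem x hx) (h.succ_mem y hy)) (h.mem y hy)
  · rintro ⟨x, e⟩ hp ⟨x', e'⟩ hp' heq
    simp only [coe_filter, Set.mem_ofPred_eq, mem_product] at hp hp' heq
    have hpos : ∀ e ∈ popular S (fun x => s x - x) t, 0 < e := by
      intro e he
      obtain ⟨y, hy, rfl⟩ := mem_image.1 (mem_filter.1 he).1
      exact sub_pos.2 (h.lt y hy)
    have he := hpos e hp.1.2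
    have he' := hpos e' hp'.1.2
    have hxx : x = x' := h.eq_of_mem (F := id) (w := x + e) (monotoneOn_id) hp.1.1 hp'.1.1
      (by simp only [id]; linarith) (by simp only [id]; linarith)
      (by simp only [id]; linarith) (by simp only [id]; linarith)
    subst hxx
    rw [add_left_cancel heq]

/-- For `x, y` with equal gaps and `F (s y) - F y ≤ F (s x) - F x` the point `F x + (F (s y) - F y)`
lies in `(F x, F (s x)]`. It determines `x` by disjointness, and then `y` because increments of `F`
over intervals of equal length are distinct. -/
lemma card_squeeze_image {X S : Finset ℝ} {s F : ℝ → ℝ} (h : IsSucc X S s) {a b : ℝ}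
    (hab : ∀ x ∈ X, x ∈ Set.Icc a b) (ha : a ∈ X) (hb : b ∈ X)
    (hmono : StrictMonoOn F (Set.Icc a b))
    (hF : StrictConvexOn ℝ (Set.Icc a b) F ∨ StrictConcaveOn ℝ (Set.Icc a b) F) (t : ℕ) :
    #(popular S (fun x => s x - x) t) * t ^ 2 ≤
      2 * #((X.image F + X.image F - X.image F).filter fun u => F a < u ∧ u ≤ F b) := by
  have hinc : ∀ x ∈ S, F x < F (s x) := fun x hx =>
    hmono (hab _ (h.mem x hx)) (hab _ (h.succ_mem x hx)) (h.lt x hx)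
  have hmX : MonotoneOn F X := hmono.monotoneOn.mono fun x hx => hab x hx
  refine (card_image_pairs S (fun x => s x - x) (fun x => F (s x) - F x) t).trans
    (Nat.mul_le_mul_left _
      (card_le_card_of_injOn (fun p => F p.1 + (F (s p.2) - F p.2)) ?_ ?_))
  · rintro ⟨x, y⟩ hp
    simp only [coe_filter, Set.mem_ofPred_eq, mem_product] at hp ⊢
    obtain ⟨⟨hx, hy⟩, -, hle⟩ := hp
    have h1 := hinc y hy
    have h2 := hmX ha (h.mem x hx) (hab x (h.mem x hx)).1
    have h3 := hmX (h.succ_mem x hx) hb (hab _ (h.succ_mem x hx)).2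
    refine ⟨?_, by linarith, by linarith⟩
    rw [← add_sub_assoc]
    exact sub_mem_sub (add_mem_add (mem_image_of_mem F (h.mem x hx))
      (mem_image_of_mem F (h.succ_mem y hy))) (mem_image_of_mem F (h.mem y hy))
  · rintro ⟨x, y⟩ hp ⟨x', y'⟩ hp' heq
    simp only [coe_filter, Set.mem_ofPred_eq, mem_product] at hp hp' heq
    obtain ⟨⟨hx, hy⟩, hd, hle⟩ := hp
    obtain ⟨⟨hx', hy'⟩, hd', hle'⟩ := hp'
    have h1 := hinc y hy
    have h2 := hinc y' hy'
    have hxx : x = x' := h.eq_of_mem (F := F) (w := F x + (F (s y) - F y)) hmX hx hx'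
      (by linarith) (by linarith) (by linarith) (by linarith)
    subst hxx
    have hyy : y = y' := eq_of_increment_eq hF (hab _ (h.mem y hy)) (hab _ (h.succ_mem y hy))
      (hab _ (h.mem y' hy')) (hab _ (h.succ_mem y' hy')) (hd.trans hd'.symm) (h.lt y hy)
      (add_left_cancel heq)
    rw [hyy]

lemma exists_isSucc (X : Finset ℝ) (hX : X.Nonempty) :
    ∃ s : ℝ → ℝ, IsSucc X (X.erase (X.max' hX)) s := by
  have key : ∀ x ∈ X.erase (X.max' hX), ∃ y ∈ X, x < y ∧ ∀ z ∈ X, x < z → y ≤ z := by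
    intro x hx
    have hlt : x < X.max' hX := X.lt_max'_of_mem_erase_max' hX hx
    have hne : (X.filter fun z => x < z).Nonempty := ⟨_, mem_filter.2 ⟨X.max'_mem hX, hlt⟩⟩
    have hm := mem_filter.1 ((X.filter fun z => x < z).min'_mem hne)
    exact ⟨_, hm.1, hm.2, fun z hz hxz => min'_le _ _ (mem_filter.2 ⟨hz, hxz⟩)⟩
  choose! s hs using key
  exact ⟨s, fun x hx => mem_of_mem_erase hx, fun x hx => (hs x hx).1, fun x hx => (hs x hx).2.1,
    fun x hx => (hs x hx).2.2⟩

lemma harmonic_sub_one_le (n : ℕ) (hn : 2 ≤ n) :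
    ((harmonic (n - 1) : ℚ) : ℝ) ≤ 3 * Real.log n := by
  have h1 := harmonic_le_one_add_log (n - 1)
  have hn' : (2 : ℝ) ≤ n := by exact_mod_cast hn
  have h2 : Real.log ((n - 1 : ℕ) : ℝ) ≤ Real.log n := by
    refine Real.log_le_log ?_ ?_
    · exact_mod_cast (by omega : 0 < n - 1)
    · exact_mod_cast (by omega : n - 1 ≤ n)
  have h3 : Real.log 2 ≤ Real.log n := Real.log_le_log (by norm_num) hn'
  have h4 := Real.log_two_gt_d9
  linarith

theorem three_fold_expansion_in_box :
    ∃ c C : ℝ, 0 < c ∧ 0 < C ∧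
      ∀ (X : Finset ℝ) (hX : X.Nonempty) (F : ℝ → ℝ), 2 ≤ X.card →
        StrictMonoOn F (Set.Icc (X.min' hX) (X.max' hX)) →
        (StrictConvexOn ℝ (Set.Icc (X.min' hX) (X.max' hX)) F ∨
          StrictConcaveOn ℝ (Set.Icc (X.min' hX) (X.max' hX)) F) →
        c * ((X.card : ℝ) / (C * Real.log X.card)) ^ 3 ≤
          ((((X ×ˢ X.image F) + (X ×ˢ X.image F) - (X ×ˢ X.image F)).filter
            (fun p : ℝ × ℝ =>
              X.min' hX ≤ p.1 ∧ p.1 ≤ X.max' hX ∧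
              F (X.min' hX) < p.2 ∧ p.2 ≤ F (X.max' hX))).card : ℝ) := by
  -- `1 / 32` combines the factor `1 / 4` from squeezing with `N - 1 ≥ N / 2`, cubed.
  refine ⟨1 / 32, 3, by norm_num, by norm_num, ?_⟩
  intro X hX F hcard hmono hF
  obtain ⟨s, hs⟩ := exists_isSucc X hX
  set S := X.erase (X.max' hX) with hS
  have hScard : #S = #X - 1 := card_erase_of_mem (X.max'_mem hX)
  have hSne : S.Nonempty := card_pos.1 (by omega)
  obtain ⟨t, ht⟩ := exists_popular_level S hSne (fun x => s x - x)
  have hab : ∀ x ∈ X, x ∈ Set.Icc (X.min' hX) (X.max' hX) :=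
    fun x hx => ⟨X.min'_le x hx, X.le_max' x hx⟩
  have hA := card_squeeze_domain hs hab t
  have hB := card_squeeze_image hs hab (X.min'_mem hX) (X.max'_mem hX) hmono hF t
  set m := #(popular S (fun x => s x - x) t) with hm
  set A := (X + X - X).filter fun u => X.min' hX ≤ u ∧ u ≤ X.max' hX with hAdef
  set B := (X.image F + X.image F - X.image F).filter
    fun u => F (X.min' hX) < u ∧ u ≤ F (X.max' hX) with hBdef
  set T := ((X ×ˢ X.image F) + (X ×ˢ X.image F) - (X ×ˢ X.image F)).filter
            (fun p : ℝ × ℝ =>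
              X.min' hX ≤ p.1 ∧ p.1 ≤ X.max' hX ∧
              F (X.min' hX) < p.2 ∧ p.2 ≤ F (X.max' hX)) with hT
  have hsub : A ×ˢ B ⊆ T := by
    rintro ⟨u, v⟩ huv
    obtain ⟨hu, hv⟩ := mem_product.1 huv
    obtain ⟨hu, hu1, hu2⟩ := mem_filter.1 hu
    obtain ⟨hv, hv1, hv2⟩ := mem_filter.1 hv
    refine mem_filter.2 ⟨?_, hu1, hu2, hv1, hv2⟩
    obtain ⟨p, hp, q, hq, rfl⟩ := mem_sub.1 hu
    obtain ⟨x, hx, y, hy, rfl⟩ := mem_add.1 hp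
    obtain ⟨p', hp', q', hq', rfl⟩ := mem_sub.1 hv
    obtain ⟨x', hx', y', hy', rfl⟩ := mem_add.1 hp'
    exact mem_sub.2 ⟨(x, x') + (y, y'), add_mem_add (mem_product.2 ⟨hx, hx'⟩)
      (mem_product.2 ⟨hy, hy'⟩), (q, q'), mem_product.2 ⟨hq, hq'⟩, rfl⟩
  have hcardT : #A * #B ≤ #T := by
    rw [← card_product]
    exact card_le_card hsub
  have hcube : (t * m) ^ 3 ≤ 4 * #T := by
    calc (t * m) ^ 3 = (t * m ^ 2) * (m * t ^ 2) := by ring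
      _ ≤ (2 * #A) * (2 * #B) := Nat.mul_le_mul hA hB
      _ = 4 * (#A * #B) := by ring
      _ ≤ 4 * #T := Nat.mul_le_mul_left _ hcardT
  have hcubeR : ((t * m : ℕ) : ℝ) ^ 3 ≤ 4 * #T := by exact_mod_cast hcube
  have hN : (2 : ℝ) ≤ #X := by exact_mod_cast hcard
  have hlog : 0 < Real.log #X := Real.log_pos (by linarith)
  have hhalf : (#X : ℝ) / 2 ≤ #S := by
    rw [hScard, Nat.cast_sub (by omega)]
    push_cast
    linarith
  have hharm := harmonic_sub_one_le #X hcard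
  rw [← hScard] at hharm
  have hdiv : (#X : ℝ) / (3 * Real.log #X) ≤ 2 * (t * m : ℕ) := by
    rw [div_le_iff₀ (by positivity)]
    have := mul_le_mul_of_nonneg_left hharm (Nat.cast_nonneg (α := ℝ) (t * m))
    linarith
  have hpow : ((#X : ℝ) / (3 * Real.log #X)) ^ 3 ≤ (2 * (t * m : ℕ)) ^ 3 :=
    pow_le_pow_left₀ (by positivity) hdiv 3
  rw [mul_pow] at hpow
  linarith
end

section
/- Let h₁ < h₁' and h₂ < h₂' be real numbers, let A = {a₁ < a₂ < … < a_N} be a finite set of reals satisfying min{a_{i+1} − a_i : 1 ≤ i ≤ N−1} ≥ max{h₁' − h₁, h₂' − h₂}, and let f₁, f₂ : ℝ → ℝ be strictly increasing and strictly convex. For N/2 ≤ k₁, k₂ ≤ N define the box B_{k₁,k₂} = (f₁(a_{k₁}+h₁), f₁(a_{k₁}+h₁')] × (f₂(a_{k₂}+h₂), f₂(a_{k₂}+h₂')]. Then: (i) for all indices j₁, j₂ with 1 ≤ j₁, j₂ ≤ N/2, the point (f₁(a_{k₁}+h₁) + f₁(a_{j₁}+h₁') − f₁(a_{j₁}+h₁),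 f₂(a_{k₂}+h₂) + f₂(a_{j₂}+h₂') − f₂(a_{j₂}+h₂)) lies in B_{k₁,k₂}; and (ii) the boxes B_{k₁,k₂} are pairwise disjoint as (k₁, k₂) ranges over pairs with N/2 ≤ k₁, k₂ ≤ N. -/
/-!
The statement splits into two one-dimensional facts, applied in each coordinate.

* A convex function has monotone increments (`increment_le_of_convexOn`). Since `j ≤ N/2 ≤ k` gives
  `a j ≤ a k`, the increment of `f` over `(a j + h, a j + h']` is positive and at most the one over
  `(a k + h, a k + h']`, which places the shifted point in the interval (`shifted_mem_Ioc`).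
* Consecutive `a i` are at least `h' - h` apart, so the intervals `(a k + h, a k + h']` are pairwise
  disjoint for distinct `k`, and an increasing `f` preserves this (`disjoint_Ioc_of_spaced`). Two
  distinct boxes differ in some coordinate, where their sides are disjoint.
-/

/-- Increments of a convex function over intervals of equal length increase with the base point:
for `x < y`, both `x + d` and `y` lie on the segment `[x, y + d]`, with complementary weights. -/
lemma increment_le_of_convexOn {f : ℝ → ℝ} (hf : ConvexOn ℝ Set.univ f) {x y d : ℝ}
    (hxy : x ≤ y) (hd : 0 < d) : f (x + d) - f x ≤ f (y + d) - f y := by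
  have hL : 0 < y + d - x := by linarith
  obtain ⟨t, ht⟩ : ∃ t, t = d / (y + d - x) := ⟨_, rfl⟩
  have htL : t * (y + d - x) = d := by rw [ht]; field_simp
  have ht0 : 0 ≤ t := by rw [ht]; positivity
  have ht1 : 0 ≤ 1 - t := by
    rw [ht, sub_nonneg, div_le_one hL]; linarith
  have e1 := hf.2 (Set.mem_univ x) (Set.mem_univ (y + d)) ht1 ht0 (by ring)
  have e2 := hf.2 (Set.mem_univ x) (Set.mem_univ (y + d)) ht0 ht1 (by ring)
  simp only [smul_eq_mul] at e1 e2
  rw [show (1 - t) * x + t * (y + d) = x + d by linear_combination htL] at e1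
  rw [show t * x + (1 - t) * (y + d) = y by linear_combination -htL] at e2
  linarith

lemma shifted_mem_Ioc {f : ℝ → ℝ} (hfm : StrictMono f) (hf : ConvexOn ℝ Set.univ f)
    {x y h h' : ℝ} (hh : h < h') (hxy : x ≤ y) :
    f (y + h) + f (x + h') - f (x + h) ∈ Set.Ioc (f (y + h)) (f (y + h')) := by
  have h1 : f (x + h) < f (x + h') := hfm (by linarith)
  have h2 := increment_le_of_convexOn hf (add_le_add_left hxy h) (sub_pos.2 hh)
  rw [show x + h + (h' - h) = x + h' by ring, show y + h + (h' - h) = y + h' by ring] at h2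
  constructor <;> linarith

lemma disjoint_Ioc_of_spaced {f : ℝ → ℝ} (hfm : StrictMono f) {N : ℕ} {a : ℕ → ℝ} {h h' : ℝ}
    (hmono : ∀ i j : ℕ, 1 ≤ i → i < j → j ≤ N → a i < a j)
    (hspace : ∀ i : ℕ, 1 ≤ i → i + 1 ≤ N → h' - h ≤ a (i + 1) - a i)
    {k l : ℕ} (hk : 1 ≤ k) (hkN : k ≤ N) (hl : 1 ≤ l) (hlN : l ≤ N) (hkl : k ≠ l) :
    Disjoint (Set.Ioc (f (a k + h)) (f (a k + h'))) (Set.Ioc (f (a l + h)) (f (a l + h'))) := by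
  have key : ∀ i j : ℕ, 1 ≤ i → i < j → j ≤ N → f (a i + h') ≤ f (a j + h) := by
    intro i j hi hij hj
    apply hfm.monotone
    have h1 := hspace i hi (by omega)
    have h2 : a (i + 1) ≤ a j := by
      rcases (Nat.succ_le_of_lt hij).eq_or_lt with e | e
      · exact e ▸ le_rfl
      · exact (hmono _ _ (by omega) e hj).le
    linarith
  rw [Set.disjoint_left]
  rintro z ⟨hz1, hz2⟩ ⟨hz3, hz4⟩
  rcases lt_or_gt_of_ne hkl with e | e
  · linarith [key k l hk e hlN]
  · linarith [key l k hl e hkN]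

open Finset Pointwise

theorem disjoint_boxes_lemma
    (N : ℕ) (hN : 2 ≤ N) (h₁ h₁' h₂ h₂' : ℝ) (hh₁ : h₁ < h₁') (hh₂ : h₂ < h₂')
    (a : ℕ → ℝ)
    (hmono : ∀ i j : ℕ, 1 ≤ i → i < j → j ≤ N → a i < a j)
    (hspace : ∀ i : ℕ, 1 ≤ i → i + 1 ≤ N → max (h₁' - h₁) (h₂' - h₂) ≤ a (i + 1) - a i)
    (f₁ f₂ : ℝ → ℝ)
    (hf₁mono : StrictMono f₁) (hf₁conv : StrictConvexOn ℝ Set.univ f₁)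
    (hf₂mono : StrictMono f₂) (hf₂conv : StrictConvexOn ℝ Set.univ f₂) :
    (∀ k₁ k₂ j₁ j₂ : ℕ,
        (N : ℝ) / 2 ≤ (k₁ : ℝ) → k₁ ≤ N → (N : ℝ) / 2 ≤ (k₂ : ℝ) → k₂ ≤ N →
        1 ≤ j₁ → (j₁ : ℝ) ≤ (N : ℝ) / 2 → 1 ≤ j₂ → (j₂ : ℝ) ≤ (N : ℝ) / 2 →
        (f₁ (a k₁ + h₁) + f₁ (a j₁ + h₁') - f₁ (a j₁ + h₁),
          f₂ (a k₂ + h₂) + f₂ (a j₂ + h₂') - f₂ (a j₂ + h₂)) ∈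
          (Set.Ioc (f₁ (a k₁ + h₁)) (f₁ (a k₁ + h₁')) ×ˢ
            Set.Ioc (f₂ (a k₂ + h₂)) (f₂ (a k₂ + h₂')))) ∧
    (∀ k₁ k₂ l₁ l₂ : ℕ,
        (N : ℝ) / 2 ≤ (k₁ : ℝ) → k₁ ≤ N → (N : ℝ) / 2 ≤ (k₂ : ℝ) → k₂ ≤ N →
        (N : ℝ) / 2 ≤ (l₁ : ℝ) → l₁ ≤ N → (N : ℝ) / 2 ≤ (l₂ : ℝ) → l₂ ≤ N →
        (k₁, k₂) ≠ (l₁, l₂) →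
        Disjoint
          (Set.Ioc (f₁ (a k₁ + h₁)) (f₁ (a k₁ + h₁')) ×ˢ
            Set.Ioc (f₂ (a k₂ + h₂)) (f₂ (a k₂ + h₂')))
          (Set.Ioc (f₁ (a l₁ + h₁)) (f₁ (a l₁ + h₁')) ×ˢ
            Set.Ioc (f₂ (a l₂ + h₂)) (f₂ (a l₂ + h₂')))) := by
  have hle : ∀ k j : ℕ, (N : ℝ) / 2 ≤ k → k ≤ N → 1 ≤ j → (j : ℝ) ≤ (N : ℝ) / 2 → a j ≤ a k := by
    intro k j hk hkN hj hjN
    have hjk : j ≤ k := by exact_mod_cast hjN.trans hk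
    rcases hjk.eq_or_lt with e | e
    · exact e ▸ le_rfl
    · exact (hmono j k hj e hkN).le
  -- `N ≥ 2` keeps the indices `k ≥ N/2` away from the unconstrained value `a 0`.
  have hpos : ∀ k : ℕ, (N : ℝ) / 2 ≤ k → 1 ≤ k := by
    intro k hk
    have : (2 : ℝ) ≤ N := by exact_mod_cast hN
    have : (1 : ℝ) ≤ k := by linarith
    exact_mod_cast this
  constructor
  · intro k₁ k₂ j₁ j₂ hk₁ hk₁N hk₂ hk₂N hj₁ hj₁N hj₂ hj₂N
    exact ⟨shifted_mem_Ioc hf₁mono hf₁conv.convexOn hh₁ (hle _ _ hk₁ hk₁N hj₁ hj₁N),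
      shifted_mem_Ioc hf₂mono hf₂conv.convexOn hh₂ (hle _ _ hk₂ hk₂N hj₂ hj₂N)⟩
  · intro k₁ k₂ l₁ l₂ hk₁ hk₁N hk₂ hk₂N hl₁ hl₁N hl₂ hl₂N hne
    rw [Set.disjoint_prod]
    by_cases e : k₁ = l₁
    · right
      exact disjoint_Ioc_of_spaced hf₂mono hmono
        (fun i hi hiN => (le_max_right _ _).trans (hspace i hi hiN))
        (hpos _ hk₂) hk₂N (hpos _ hl₂) hl₂N (fun e' => hne (by rw [e, e']))
    · left
      exact disjoint_Ioc_of_spaced hf₁mono hmono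
        (fun i hi hiN => (le_max_left _ _).trans (hspace i hi hiN))
        (hpos _ hk₁) hk₁N (hpos _ hl₁) hl₁N e
end

section
/- There exist absolute constants c > 0, c' > 0 and C > 0 such that for every finite set X of positive reals with |X| ≥ 3, there exist z, z' ∈ X with z ≠ z' such that both |(zX+1)(z'X+1)/(zX+1)| ≥ c · |X|² and |(zX+1)^{(2)}(z'X+1)^{(2)} / ((zX+1)^{(2)}(z'X+1))| ≥ c' · |X|^{5/2} / (log |X|)^C hold. -/
/-!
The proof is an elementary squeezing argument. Order `X` as `x₀ < x₁ < ⋯`, and for a consecutive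
pair `z = x_p`, `z' = x_{p+1}` put `h(x) = log (z'x+1) - log (zx+1)`, a positive increasing
function. If the ratio `x_{j+1}/x_j` is at least `z'/z`, then
`log (zx_j+1) + h(x_j) ≤ log (zx_{j+1}+1)`, so the translates `log (zx_j+1) + T` of a set
`T ⊆ (0, h(x_j)]` are disjoint for different such `j` (`card_mul_card_le`). When the ratio `z'/z` is
among the two smallest, almost all `j` qualify. Taking `T = h(X₀)`, with `X₀` the smallest quarter
of `X`, gives the quadratic bound; taking for `T` the part of `h(X₀) + h(X₀) - h(X₀)` lying in
`(0, max h(X₀)]` gives the second bound as soon as `|T| ≫ |X|^{3/2}`.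

The last estimate holds for at least one of the two pairs of smallest ratio: the corresponding
functions `h₁`, `h₂` have strictly monotone derivative ratio, so the pairs of consecutive gaps of
the sequences `h₁(x_i)`, `h₂(x_i)` are all distinct (`gap_pair_ne`). Squeezing gaps into larger
gaps, `gapSums` has cardinality the sum of the ranks of the gaps, and distinctness of the
pairs of ranks gives `|T₁| |T₂| ≫ |X|³` (`gapSums_mul_gapSums`). No logarithmic loss occurs.
-/

open Finset Pointwise

/-- Finite sets lying in disjoint half-open intervals have union of the expected size. -/
lemma card_biUnion_squeezed (J : Finset ℕ) (lo hi : ℕ → ℝ) (T : ℕ → Finset ℝ)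
    (h1 : ∀ j ∈ J, ∀ t ∈ T j, lo j < t ∧ t ≤ hi j)
    (h2 : ∀ j ∈ J, ∀ k ∈ J, j < k → hi j ≤ lo k) :
    (J.biUnion T).card = ∑ j ∈ J, (T j).card := by
  apply Finset.card_biUnion
  intro i hi' j hj hij
  change Disjoint (T i) (T j)
  rw [Finset.disjoint_left]
  intro t ht ht'
  have a1 := h1 i hi' t ht
  have a2 := h1 j hj t ht'
  rcases lt_or_gt_of_ne hij with h | h
  · have := h2 i hi' j hj h
    linarith
  · have := h2 j hj i hi' h
    linarith

/-- The gaps of the sequence `a₀, …, a_m` that do not exceed its `i`-th gap, without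
multiplicity. -/
noncomputable def smallGaps (a : ℕ → ℝ) (m i : ℕ) : Finset ℝ :=
  ((range m).filter fun k => a (k + 1) - a k ≤ a (i + 1) - a i).image fun k => a (k + 1) - a k

/-- All sums `a_i + (a_{k+1} - a_k)` that lie in `(a_i, a_{i+1}]`, for `i, k < m`
(when `a` is increasing). -/
noncomputable def gapSums (a : ℕ → ℝ) (m : ℕ) : Finset ℝ :=
  (range m).biUnion fun i => (smallGaps a m i).image fun d => a i + d

lemma mem_gapSums {a : ℕ → ℝ} {m : ℕ} {t : ℝ} (ht : t ∈ gapSums a m) :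
    ∃ i < m, ∃ k < m, a (k + 1) - a k ≤ a (i + 1) - a i ∧ t = a i + (a (k + 1) - a k) := by
  simp only [gapSums, smallGaps, mem_biUnion, mem_image, mem_filter, mem_range] at ht
  obtain ⟨i, hi, d, ⟨k, ⟨hk, hle⟩, rfl⟩, rfl⟩ := ht
  exact ⟨i, hi, k, hk, hle, rfl⟩

lemma card_gapSums (a : ℕ → ℝ) (m : ℕ) (ha : ∀ i j, i < j → j ≤ m → a i < a j) :
    (gapSums a m).card = ∑ i ∈ range m, (smallGaps a m i).card := by
  rw [gapSums, card_biUnion_squeezed (range m) a (fun i => a (i + 1))]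
  · refine Finset.sum_congr rfl fun i _ => ?_
    exact Finset.card_image_of_injective _ (add_right_injective _)
  · intro j _ t ht
    simp only [smallGaps, mem_image, mem_filter, mem_range] at ht
    obtain ⟨d, ⟨k, ⟨hk, hle⟩, rfl⟩, rfl⟩ := ht
    have := ha k (k + 1) (by omega) (by omega)
    constructor <;> linarith
  · intro j _ k hk hjk
    rw [mem_range] at hk
    rcases Nat.lt_or_ge (j + 1) k with h | h
    · exact (ha _ _ h hk.le).le
    · rw [show k = j + 1 by omega]

/-- The number of `smallGaps` is a faithful rank of the gaps. -/
lemma gap_eq_of_card_smallGaps_eq (a : ℕ → ℝ) (m i j : ℕ) (hi : i < m) (hj : j < m)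
    (h : (smallGaps a m i).card = (smallGaps a m j).card) :
    a (i + 1) - a i = a (j + 1) - a j := by
  have key : ∀ i j, j < m → a (i + 1) - a i < a (j + 1) - a j →
      (smallGaps a m i).card < (smallGaps a m j).card := by
    intro i j hj hlt
    apply Finset.card_lt_card
    rw [Finset.ssubset_iff_of_subset]
    · refine ⟨a (j + 1) - a j, ?_, ?_⟩
      · simp only [smallGaps, mem_image, mem_filter, mem_range]
        exact ⟨j, ⟨hj, le_rfl⟩, rfl⟩
      · simp only [smallGaps, mem_image, mem_filter, mem_range]
        rintro ⟨k, ⟨_, hk⟩, he⟩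
        linarith
    · intro d
      simp only [smallGaps, mem_image, mem_filter, mem_range]
      rintro ⟨k, ⟨hk, hle⟩, rfl⟩
      exact ⟨k, ⟨hk, hle.trans hlt.le⟩, rfl⟩
  rcases lt_trichotomy (a (i + 1) - a i) (a (j + 1) - a j) with hlt | heq | hgt
  · exact absurd h (key i j hj hlt).ne
  · exact heq
  · exact absurd h.symm (key j i hi hgt).ne

/-- Markov's inequality for a function with natural values on `range m`. -/
lemma four_mul_card_large_le (m N : ℕ) (R : ℕ → ℕ) (hN : ∑ i ∈ range m, R i = N) :
    4 * ((range m).filter fun i => 4 * N < R i * m).card ≤ m := by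
  set B := (range m).filter fun i => 4 * N < R i * m with hB
  by_contra! hlt
  have h1 : B.card * (4 * N + 1) ≤ ∑ i ∈ B, R i * m := by
    rw [← smul_eq_mul]
    apply Finset.card_nsmul_le_sum
    intro i hi
    rw [hB, mem_filter] at hi
    exact hi.2
  have h2 : ∑ i ∈ B, R i * m ≤ N * m := by
    rw [← hN, Finset.sum_mul]
    exact Finset.sum_le_sum_of_subset (Finset.filter_subset _ _)
  nlinarith

/-- If no two indices share both gaps, at least half of the indices have both ranks at most four
times the average; as the pairs of ranks are distinct, the box of such pairs has at least
`m / 2` elements. -/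
lemma gapSums_mul_gapSums (a b : ℕ → ℝ) (m : ℕ)
    (ha : ∀ i j, i < j → j ≤ m → a i < a j) (hb : ∀ i j, i < j → j ≤ m → b i < b j)
    (hab : ∀ i j, i < j → j < m → a (i + 1) - a i = a (j + 1) - a j →
      b (i + 1) - b i ≠ b (j + 1) - b j) :
    m ^ 3 ≤ 32 * ((gapSums a m).card * (gapSums b m).card) := by
  rcases Nat.eq_zero_or_pos m with rfl | hm
  · simp
  set M := (gapSums a m).card with hM
  set N := (gapSums b m).card with hN
  have hA := four_mul_card_large_le m M _ (card_gapSums a m ha).symm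
  have hB := four_mul_card_large_le m N _ (card_gapSums b m hb).symm
  set A := (range m).filter fun i => 4 * M < (smallGaps a m i).card * m
  set B := (range m).filter fun i => 4 * N < (smallGaps b m i).card * m
  set G := range m \ (A ∪ B) with hG
  have hGc : m ≤ 2 * G.card := by
    have h1 := Finset.le_card_sdiff (A ∪ B) (range m)
    have h2 := Finset.card_union_le A B
    rw [Finset.card_range, ← hG] at h1
    omega
  have hpos : ∀ (a : ℕ → ℝ) i, i < m → 0 < (smallGaps a m i).card := by
    intro a i hi
    rw [Finset.card_pos]
    refine ⟨a (i + 1) - a i, ?_⟩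
    simp only [smallGaps, mem_image, mem_filter, mem_range]
    exact ⟨i, ⟨hi, le_rfl⟩, rfl⟩
  have hbox : G.card ≤ (Finset.Icc 1 (4 * M / m) ×ˢ Finset.Icc 1 (4 * N / m)).card := by
    apply Finset.card_le_card_of_injOn
      (fun i => ((smallGaps a m i).card, (smallGaps b m i).card))
    · intro i hi
      simp only [hG, A, B, coe_sdiff, Set.mem_sdiff, mem_coe, mem_range, mem_union, mem_filter,
        not_or, not_and, not_lt] at hi
      obtain ⟨hi, h1, h2⟩ := hi
      simp only [coe_product, Set.mem_prod, mem_coe, mem_Icc]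
      refine ⟨⟨hpos a i hi, ?_⟩, ⟨hpos b i hi, ?_⟩⟩
      · rw [Nat.le_div_iff_mul_le hm]; exact h1 hi
      · rw [Nat.le_div_iff_mul_le hm]; exact h2 hi
    · intro i hi j hj hij
      have hi' : i < m := by
        have := (Finset.mem_sdiff.1 hi).1
        simpa using this
      have hj' : j < m := by
        have := (Finset.mem_sdiff.1 hj).1
        simpa using this
      simp only [Prod.mk.injEq] at hij
      have e1 := gap_eq_of_card_smallGaps_eq a m i j hi' hj' hij.1
      have e2 := gap_eq_of_card_smallGaps_eq b m i j hi' hj' hij.2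
      rcases lt_trichotomy i j with h | h | h
      · exact absurd e2 (hab i j h hj' e1)
      · exact h
      · exact absurd e2.symm (hab j i h hi' e1.symm)
  rw [Finset.card_product, Nat.card_Icc, Nat.card_Icc, Nat.add_sub_cancel, Nat.add_sub_cancel]
    at hbox
  have h1 : 4 * M / m * m ≤ 4 * M := Nat.div_mul_le_self _ _
  have h2 : 4 * N / m * m ≤ 4 * N := Nat.div_mul_le_self _ _
  calc m ^ 3 = m * (m * m) := by ring
    _ ≤ 2 * (4 * M / m * (4 * N / m)) * (m * m) := by gcongr; omega
    _ = 2 * ((4 * M / m * m) * (4 * N / m * m)) := by ring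
    _ ≤ 2 * ((4 * M) * (4 * N)) := by gcongr
    _ = 32 * (M * N) := by ring

/-- `log ((z'x + 1) / (zx + 1))`, written as a difference of logarithms. -/
noncomputable def logQuot (z z' x : ℝ) : ℝ := Real.log (z' * x + 1) - Real.log (z * x + 1)

lemma exp_logQuot {z z' x : ℝ} (hz : 0 < z) (hz' : 0 < z') (hx : 0 < x) :
    Real.exp (logQuot z z' x) = (z' * x + 1) / (z * x + 1) := by
  rw [logQuot, Real.exp_sub, Real.exp_log (by positivity), Real.exp_log (by positivity)]

lemma logQuot_pos {z z' x : ℝ} (hz : 0 < z) (hzz : z < z') (hx : 0 < x) : 0 < logQuot z z' x := by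
  have : Real.log (z * x + 1) < Real.log (z' * x + 1) :=
    Real.log_lt_log (by positivity) (by nlinarith)
  rw [logQuot]; linarith

lemma logQuot_lt {z z' x y : ℝ} (hz : 0 < z) (hzz : z < z') (hx : 0 < x) (hxy : x < y) :
    logQuot z z' x < logQuot z z' y := by
  have hz' : 0 < z' := hz.trans hzz
  have hy : 0 < y := hx.trans hxy
  rw [← Real.exp_lt_exp, exp_logQuot hz hz' hx, exp_logQuot hz hz' hy,
    div_lt_div_iff₀ (by positivity) (by positivity)]
  nlinarith [mul_pos (sub_pos.2 hzz) (sub_pos.2 hxy)]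

lemma hasDerivAt_logQuot {z z' x : ℝ} (hz : 0 < z) (hz' : 0 < z') (hx : 0 < x) :
    HasDerivAt (logQuot z z') ((z' - z) / ((z' * x + 1) * (z * x + 1))) x := by
  have key : ∀ w : ℝ, 0 < w → HasDerivAt (fun x => Real.log (w * x + 1)) (w / (w * x + 1)) x := by
    intro w hw
    have h : HasDerivAt (fun x => w * x + 1) w x := by
      simpa using ((hasDerivAt_id x).const_mul w).add_const 1
    exact h.log (by positivity)
  have h1 : z' * x + 1 ≠ 0 := by positivity
  have h2 : z * x + 1 ≠ 0 := by positivity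
  have e : (z' - z) / ((z' * x + 1) * (z * x + 1)) = z' / (z' * x + 1) - z / (z * x + 1) := by
    rw [div_sub_div _ _ h1 h2]
    congr 1
    ring
  rw [e]
  exact (key z' hz').sub (key z hz)

/-- For `z < z' ≤ w < w'` the derivative of `logQuot w w'` divided by that of `logQuot z z'` is
strictly decreasing; by Cauchy's mean value theorem the increments of the two functions over two
successive intervals cannot both agree. -/
lemma gap_pair_ne {z z' w w' : ℝ} (hz : 0 < z) (hzz : z < z') (hzw : z' ≤ w) (hww : w < w')
    {s t u v : ℝ} (hs : 0 < s) (hst : s < t) (htu : t ≤ u) (huv : u < v)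
    (h : logQuot z z' t - logQuot z z' s = logQuot z z' v - logQuot z z' u) :
    logQuot w w' t - logQuot w w' s ≠ logQuot w w' v - logQuot w w' u := by
  have hz' : 0 < z' := hz.trans hzz
  have hw : 0 < w := hz'.trans_le hzw
  have hw' : 0 < w' := hw.trans hww
  have cauchy : ∀ {s t : ℝ}, 0 < s → s < t → ∃ ξ, s < ξ ∧ ξ < t ∧
      (logQuot w w' t - logQuot w w' s) * ((z' - z) / ((z' * ξ + 1) * (z * ξ + 1))) =
      (logQuot z z' t - logQuot z z' s) * ((w' - w) / ((w' * ξ + 1) * (w * ξ + 1))) := by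
    intro s t hs hst
    obtain ⟨ξ, hξ, h⟩ := exists_ratio_hasDerivAt_eq_ratio_slope (logQuot z z')
      (fun x => (z' - z) / ((z' * x + 1) * (z * x + 1))) hst
      (fun x hx => (hasDerivAt_logQuot hz hz' (hs.trans_le hx.1)).continuousAt.continuousWithinAt)
      (fun x hx => hasDerivAt_logQuot hz hz' (hs.trans hx.1)) (logQuot w w')
      (fun x => (w' - w) / ((w' * x + 1) * (w * x + 1)))
      (fun x hx => (hasDerivAt_logQuot hw hw' (hs.trans_le hx.1)).continuousAt.continuousWithinAt)
      (fun x hx => hasDerivAt_logQuot hw hw' (hs.trans hx.1))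
    exact ⟨ξ, hξ.1, hξ.2, h⟩
  intro h'
  obtain ⟨ξ, hsξ, hξt, e1⟩ := cauchy hs hst
  obtain ⟨η, huη, hηv, e2⟩ := cauchy ((hs.trans hst).trans_le htu) huv
  rw [← h, ← h'] at e2
  have hξ : 0 < ξ := hs.trans hsξ
  have hξη : ξ < η := by linarith
  have hη : 0 < η := hξ.trans hξη
  have hP : 0 < logQuot w w' t - logQuot w w' s := sub_pos.2 (logQuot_lt hw hww hs hst)
  have hQ : 0 < logQuot z z' t - logQuot z z' s := sub_pos.2 (logQuot_lt hz hzz hs hst)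
  set P := logQuot w w' t - logQuot w w' s
  set Q := logQuot z z' t - logQuot z z' s
  have f : ∀ {x : ℝ}, 0 < x →
      P * ((z' - z) / ((z' * x + 1) * (z * x + 1))) =
        Q * ((w' - w) / ((w' * x + 1) * (w * x + 1))) →
      P * (z' - z) = Q * (w' - w) *
        (((z * x + 1) / (w * x + 1)) * ((z' * x + 1) / (w' * x + 1))) := by
    intro x hx e
    have h1 : z' * x + 1 ≠ 0 := by positivity
    have h2 : z * x + 1 ≠ 0 := by positivity
    have h3 : w' * x + 1 ≠ 0 := by positivity
    have h4 : w * x + 1 ≠ 0 := by positivity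
    field_simp at e ⊢
    linarith
  have g1 := f hξ e1
  have g2 := f hη e2
  have dec : ∀ {c d : ℝ}, 0 < c → c < d →
      (c * η + 1) / (d * η + 1) < (c * ξ + 1) / (d * ξ + 1) := by
    intro c d hc hcd
    have hd := hc.trans hcd
    rw [div_lt_div_iff₀ (by positivity) (by positivity)]
    nlinarith [mul_pos (sub_pos.2 hcd) (sub_pos.2 hξη)]
  have d1 := dec hz (hzz.trans_le hzw)
  have d2 := dec hz' (hzw.trans_lt hww)
  have lt : (z * η + 1) / (w * η + 1) * ((z' * η + 1) / (w' * η + 1)) <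
      (z * ξ + 1) / (w * ξ + 1) * ((z' * ξ + 1) / (w' * ξ + 1)) :=
    mul_lt_mul'' d1 d2 (by positivity) (by positivity)
  have := mul_lt_mul_of_pos_left lt (mul_pos hQ (sub_pos.2 hww))
  linarith

/-- The translates of `T` by the numbers `log (z x_j + 1)` are disjoint, provided that `T` is
contained in every `(0, logQuot z z' x_j]` and the ratios `x_{j+1} / x_j` are at least `z' / z`. -/
lemma card_mul_card_le (x : ℕ → ℝ) (n : ℕ) (hpos : ∀ i < n, 0 < x i)
    (hx : ∀ i j, i < j → j < n → x i < x j) {z z' : ℝ} (hz : 0 < z) (hz' : 0 < z')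
    (J : Finset ℕ) (hJ : ∀ j ∈ J, j + 1 < n ∧ z' * x j ≤ z * x (j + 1))
    (T : Finset ℝ) (hT : ∀ t ∈ T, ∀ j ∈ J, 0 < t ∧ t ≤ logQuot z z' (x j))
    (S : Finset ℝ) (hS : ∀ j ∈ J, ∀ t ∈ T, (z * x j + 1) * Real.exp t ∈ S) :
    J.card * T.card ≤ S.card := by
  have hcard : (J.biUnion fun j => T.image fun t => Real.log (z * x j + 1) + t).card =
      J.card * T.card := by
    rw [card_biUnion_squeezed J (fun j => Real.log (z * x j + 1))
      (fun j => Real.log (z * x (j + 1) + 1))]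
    · rw [← smul_eq_mul, ← Finset.sum_const]
      exact Finset.sum_congr rfl fun i _ =>
        Finset.card_image_of_injective _ (add_right_injective _)
    · intro j hj u hu
      obtain ⟨t, ht, rfl⟩ := Finset.mem_image.1 hu
      obtain ⟨h0, h1⟩ := hT t ht j hj
      obtain ⟨hjn, hr⟩ := hJ j hj
      refine ⟨by linarith, ?_⟩
      have hxj := hpos j (by omega)
      have : Real.log (z' * x j + 1) ≤ Real.log (z * x (j + 1) + 1) :=
        Real.log_le_log (by positivity) (by linarith)
      rw [logQuot] at h1
      linarith
    · intro j hj k hk hjk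
      have hkn := (hJ k hk).1
      have hle : x (j + 1) ≤ x k := by
        rcases Nat.lt_or_ge (j + 1) k with h | h
        · exact (hx _ _ h (by omega)).le
        · rw [show k = j + 1 by omega]
      have := hpos (j + 1) (by omega)
      exact Real.log_le_log (by positivity) (by nlinarith)
  rw [← hcard]
  apply Finset.card_le_card_of_injOn Real.exp
  · intro u hu
    obtain ⟨j, hj, hu⟩ := Finset.mem_biUnion.1 hu
    obtain ⟨t, ht, rfl⟩ := Finset.mem_image.1 hu
    have := hpos j (by have := (hJ j hj).1; omega)
    rw [Real.exp_add, Real.exp_log (by positivity)]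
    exact hS j hj t ht
  · exact Real.exp_injective.injOn

lemma exists_enumeration (X : Finset ℝ) : ∃ x : ℕ → ℝ, (∀ i < X.card, x i ∈ X) ∧
    ∀ i j, i < j → j < X.card → x i < x j := by
  refine ⟨fun i => if h : i < X.card then X.orderEmbOfFin rfl ⟨i, h⟩ else 0, ?_, ?_⟩
  · intro i hi
    simp only [hi, dif_pos]
    exact Finset.orderEmbOfFin_mem _ _ _
  · intro i j hij hj
    have hi := hij.trans hj
    simp only [hi, hj, dif_pos]
    exact (X.orderEmbOfFin rfl).strictMono hij

/-- Two indices below `N` carrying the two smallest values of `ρ` there. -/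
lemma exists_two_smallest (ρ : ℕ → ℝ) (N : ℕ) (hN : 2 ≤ N) :
    ∃ p q, p < q ∧ q < N ∧ ∀ j < N, j ≠ p → j ≠ q → ρ p ≤ ρ j ∧ ρ q ≤ ρ j := by
  obtain ⟨p, hp, hpm⟩ := Finset.exists_min_image (range N) ρ ⟨0, by simp; omega⟩
  have hne : ((range N).erase p).Nonempty := by
    rw [← Finset.card_pos, Finset.card_erase_of_mem hp, Finset.card_range]; omega
  obtain ⟨q, hq, hqm⟩ := Finset.exists_min_image _ ρ hne
  rw [mem_erase, mem_range] at hq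
  rw [mem_range] at hp
  have key : ∀ j < N, j ≠ p → j ≠ q → ρ p ≤ ρ j ∧ ρ q ≤ ρ j := fun j hj h1 _ =>
    ⟨hpm j (mem_range.2 hj), hqm j (mem_erase.2 ⟨h1, mem_range.2 hj⟩)⟩
  rcases lt_or_gt_of_ne hq.1 with h | h
  · exact ⟨q, p, h, hp, fun j hj h1 h2 => (key j hj h2 h1).symm⟩
  · exact ⟨p, q, h, hq.2, key⟩

lemma mem_pshift {z x : ℝ} {X : Finset ℝ} (hx : x ∈ X) : z * x + 1 ∈ pshift z X :=
  Finset.mem_image_of_mem _ hx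

/-- Both product sets attached to the consecutive pair `z = x_r`, `z' = x_{r+1}` are large, the
second in terms of `gapSums`, when all but two of the ratios `x_{j+1} / x_j` are at least
`z' / z`. -/
lemma expander_of_pair (X : Finset ℝ) (hX : ∀ y ∈ X, 0 < y) (x : ℕ → ℝ)
    (hmem : ∀ i < X.card, x i ∈ X) (hx : ∀ i j, i < j → j < X.card → x i < x j)
    (m p q r : ℕ) (hm : 2 * m + 3 ≤ X.card) (hr : r + 1 < X.card)
    (hmin : ∀ j < X.card - 1, j ≠ p → j ≠ q → x (r + 1) / x r ≤ x (j + 1) / x j) :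
    m * m ≤ ((pshift (x r) X * pshift (x (r + 1)) X) / pshift (x r) X).card ∧
    m * (gapSums (fun i => logQuot (x r) (x (r + 1)) (x i)) m).card ≤
      ((pshift (x r) X * pshift (x r) X * (pshift (x (r + 1)) X * pshift (x (r + 1)) X)) /
        (pshift (x r) X * pshift (x r) X * pshift (x (r + 1)) X)).card := by
  have hpos : ∀ i < X.card, 0 < x i := fun i hi => hX _ (hmem i hi)
  set z := x r with hzdef
  set z' := x (r + 1) with hzdef'
  have hz : 0 < z := hpos r (by omega)
  have hz' : 0 < z' := hpos _ hr
  have hzz : z < z' := hx _ _ (by omega) hr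
  have hmono : ∀ i j, i < j → j < X.card → logQuot z z' (x i) < logQuot z z' (x j) :=
    fun i j hij hj => logQuot_lt hz hzz (hpos i (by omega)) (hx i j hij hj)
  have hmono' : ∀ i j, i ≤ j → j < X.card → logQuot z z' (x i) ≤ logQuot z z' (x j) := by
    intro i j hij hj
    rcases hij.lt_or_eq with h | rfl
    · exact (hmono i j h hj).le
    · exact le_rfl
  set J := (Finset.Ico m (X.card - 1)) \ {p, q} with hJdef
  have hJc : m ≤ J.card := by
    have h1 := Finset.le_card_sdiff {p, q} (Finset.Ico m (X.card - 1))
    have h2 := Finset.card_le_two (a := p) (b := q)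
    rw [Nat.card_Ico, ← hJdef] at h1
    omega
  have hJm : ∀ j ∈ J, m ≤ j ∧ j + 1 < X.card ∧ z' * x j ≤ z * x (j + 1) := by
    intro j hj
    simp only [hJdef, mem_sdiff, mem_Ico, mem_insert, mem_singleton, not_or] at hj
    obtain ⟨⟨h1, h2⟩, h3, h4⟩ := hj
    have := hmin j h2 h3 h4
    rw [div_le_div_iff₀ hz (hpos j (by omega))] at this
    exact ⟨h1, by omega, by linarith⟩
  constructor
  · set T := (range m).image fun i => logQuot z z' (x i) with hTdef
    have hTc : T.card = m := by
      rw [hTdef, Finset.card_image_of_injOn, Finset.card_range]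
      intro i hi j hj hij
      simp only [coe_range, Set.mem_Iio] at hi hj
      rcases lt_trichotomy i j with h | h | h
      · exact absurd hij (hmono i j h (by omega)).ne
      · exact h
      · exact absurd hij (hmono j i h (by omega)).ne'
    refine le_trans (le_trans ?_ (Nat.mul_le_mul_right T.card hJc))
      (card_mul_card_le x X.card hpos hx hz hz' J (fun j hj => (hJm j hj).2) T ?_ _ ?_)
    · rw [hTc]
    · intro t ht j hj
      obtain ⟨i, hi, rfl⟩ := Finset.mem_image.1 ht
      rw [mem_range] at hi
      have := hJm j hj
      exact ⟨logQuot_pos hz hzz (hpos i (by omega)), hmono' i j (by omega) (by omega)⟩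
    · intro j hj t ht
      obtain ⟨i, hi, rfl⟩ := Finset.mem_image.1 ht
      rw [mem_range] at hi
      have := hJm j hj
      rw [exp_logQuot hz hz' (hpos i (by omega)), ← mul_div_assoc]
      exact Finset.div_mem_div (Finset.mul_mem_mul (mem_pshift (hmem j (by omega)))
        (mem_pshift (hmem i (by omega)))) (mem_pshift (hmem i (by omega)))
  · refine le_trans (Nat.mul_le_mul_right _ hJc)
      (card_mul_card_le x X.card hpos hx hz hz' J (fun j hj => (hJm j hj).2) _ ?_ _ ?_)
    · intro t ht j hj
      obtain ⟨i, hi, k, hk, hle, rfl⟩ := mem_gapSums ht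
      have h1 := hJm j hj
      have h2 := hmono k (k + 1) (by omega) (by omega)
      have h3 := hmono' (i + 1) j (by omega) (by omega)
      have h4 := logQuot_pos hz hzz (hpos i (by omega))
      constructor <;> linarith
    · intro j hj t ht
      obtain ⟨i, hi, k, hk, hle, rfl⟩ := mem_gapSums ht
      have h1 := hJm j hj
      have pi := hpos i (by omega)
      have pk := hpos k (by omega)
      have pk' := hpos (k + 1) (by omega)
      rw [Real.exp_add, Real.exp_sub, exp_logQuot hz hz' pi, exp_logQuot hz hz' pk,
        exp_logQuot hz hz' pk']
      have e : (z * x j + 1) * ((z' * x i + 1) / (z * x i + 1) *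
          ((z' * x (k + 1) + 1) / (z * x (k + 1) + 1) / ((z' * x k + 1) / (z * x k + 1)))) =
          ((z * x j + 1) * (z * x k + 1) * ((z' * x i + 1) * (z' * x (k + 1) + 1))) /
          ((z * x i + 1) * (z * x (k + 1) + 1) * (z' * x k + 1)) := by
        field_simp
      rw [e]
      have M : ∀ (y : ℝ) l, l < X.card → y * x l + 1 ∈ pshift y X :=
        fun y l hl => mem_pshift (hmem l hl)
      exact Finset.div_mem_div
        (Finset.mul_mem_mul (Finset.mul_mem_mul (M z j (by omega)) (M z k (by omega)))
          (Finset.mul_mem_mul (M z' i (by omega)) (M z' (k + 1) (by omega))))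
        (Finset.mul_mem_mul (Finset.mul_mem_mul (M z i (by omega)) (M z (k + 1) (by omega)))
          (M z' k (by omega)))

/-- The integer form of both bounds, free of real powers and logarithms. -/
lemma exists_expanding_pair (X : Finset ℝ) (hX : ∀ y ∈ X, 0 < y) (hcard : 3 ≤ X.card) :
    ∃ z ∈ X, ∃ z' ∈ X, z ≠ z' ∧
      X.card ^ 2 ≤ 64 * ((pshift z X * pshift z' X) / pshift z X).card ∧
      X.card ^ 5 ≤ 2 ^ 20 * ((pshift z X * pshift z X * (pshift z' X * pshift z' X)) /
        (pshift z X * pshift z X * pshift z' X)).card ^ 2 := by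
  obtain ⟨x, hmem, hx⟩ := exists_enumeration X
  have hpos : ∀ i < X.card, 0 < x i := fun i hi => hX _ (hmem i hi)
  rcases Nat.lt_or_ge X.card 8 with hsmall | hlarge
  · refine ⟨x 0, hmem 0 (by omega), x 1, hmem 1 (by omega),
      (hx 0 1 (by omega) (by omega)).ne, ?_⟩
    have hne : ∀ y, (pshift y X).Nonempty := fun y =>
      ⟨_, mem_pshift (hmem 0 (by omega))⟩
    have h1 := (((hne (x 0)).mul (hne (x 1))).div (hne (x 0))).card_pos
    have h2 := ((((hne (x 0)).mul (hne (x 0))).mul ((hne (x 1)).mul (hne (x 1)))).div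
      (((hne (x 0)).mul (hne (x 0))).mul (hne (x 1)))).card_pos
    have h3 := Nat.one_le_pow 2 _ h2
    constructor
    · have := Nat.pow_le_pow_left (show X.card ≤ 7 by omega) 2
      omega
    · have := Nat.pow_le_pow_left (show X.card ≤ 7 by omega) 5
      omega
  obtain ⟨p, q, hpq, hq, hmin⟩ := exists_two_smallest (fun j => x (j + 1) / x j)
    (X.card - 1) (by omega)
  obtain ⟨m, hm1, hm2⟩ : ∃ m, 2 * m + 3 ≤ X.card ∧ X.card ≤ 8 * m :=
    ⟨X.card / 4, by omega, by omega⟩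
  have hgap := gapSums_mul_gapSums (fun i => logQuot (x p) (x (p + 1)) (x i))
    (fun i => logQuot (x q) (x (q + 1)) (x i)) m
    (fun i j hij hj => logQuot_lt (hpos p (by omega)) (hx p (p + 1) (by omega) (by omega))
      (hpos i (by omega)) (hx i j hij (by omega)))
    (fun i j hij hj => logQuot_lt (hpos q (by omega)) (hx q (q + 1) (by omega) (by omega))
      (hpos i (by omega)) (hx i j hij (by omega)))
    (fun i j hij hj h => by
      have le : ∀ i j, i ≤ j → j < X.card → x i ≤ x j := by
        intro i j hij hj
        rcases hij.lt_or_eq with h | rfl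
        · exact (hx i j h hj).le
        · exact le_rfl
      exact gap_pair_ne (hpos p (by omega)) (hx p (p + 1) (by omega) (by omega))
        (le (p + 1) q (by omega) (by omega)) (hx q (q + 1) (by omega) (by omega))
        (hpos i (by omega)) (hx i (i + 1) (by omega) (by omega))
        (le (i + 1) j (by omega) (by omega)) (hx j (j + 1) (by omega) (by omega)) h)
  obtain ⟨r, hr, hrmin, hrgap⟩ : ∃ r, r + 1 < X.card ∧
      (∀ j < X.card - 1, j ≠ p → j ≠ q → x (r + 1) / x r ≤ x (j + 1) / x j) ∧
      m ^ 3 ≤ 32 * (gapSums (fun i => logQuot (x r) (x (r + 1)) (x i)) m).card ^ 2 := by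
    rcases le_total (gapSums (fun i => logQuot (x p) (x (p + 1)) (x i)) m).card
      (gapSums (fun i => logQuot (x q) (x (q + 1)) (x i)) m).card with h | h
    · exact ⟨q, by omega, fun j hj h1 h2 => (hmin j hj h1 h2).2, by nlinarith⟩
    · exact ⟨p, by omega, fun j hj h1 h2 => (hmin j hj h1 h2).1, by nlinarith⟩
  obtain ⟨e1, e2⟩ := expander_of_pair X hX x hmem hx m p q r hm1 hr hrmin
  refine ⟨x r, hmem r (by omega), x (r + 1), hmem _ hr, (hx r (r + 1) (by omega) hr).ne, ?_, ?_⟩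
  · calc X.card ^ 2 ≤ (8 * m) ^ 2 := Nat.pow_le_pow_left hm2 2
      _ = 64 * (m * m) := by ring
      _ ≤ _ := Nat.mul_le_mul_left _ e1
  · calc X.card ^ 5 ≤ (8 * m) ^ 5 := Nat.pow_le_pow_left hm2 5
      _ = 2 ^ 15 * m ^ 2 * m ^ 3 := by ring
      _ ≤ 2 ^ 15 * m ^ 2 * _ := Nat.mul_le_mul_left _ hrgap
      _ = 2 ^ 20 * (m * _) ^ 2 := by ring
      _ ≤ _ := Nat.mul_le_mul_left _ (Nat.pow_le_pow_left e2 2)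

theorem combined_quadratic_and_superquadratic_expander :
    ∃ c c' C : ℝ, 0 < c ∧ 0 < c' ∧ 0 < C ∧
      ∀ X : Finset ℝ, (∀ x ∈ X, 0 < x) → 3 ≤ X.card →
        ∃ z ∈ X, ∃ z' ∈ X, z ≠ z' ∧
          c * (X.card : ℝ) ^ 2 ≤
            (((pshift z X * pshift z' X) / pshift z X).card : ℝ) ∧
          c' * (X.card : ℝ) ^ ((5 : ℝ) / 2) / (Real.log X.card) ^ C ≤
            (((pshift z X * pshift z X * (pshift z' X * pshift z' X)) /
              (pshift z X * pshift z X * pshift z' X)).card : ℝ) := by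
  refine ⟨1 / 64, 1 / 1024, 1, by norm_num, by norm_num, by norm_num, fun X hX hcard => ?_⟩
  obtain ⟨z, hz, z', hz', hne, h1, h2⟩ := exists_expanding_pair X hX hcard
  refine ⟨z, hz, z', hz', hne, ?_, ?_⟩
  · have : (X.card : ℝ) ^ 2 ≤ 64 * (((pshift z X * pshift z' X) / pshift z X).card : ℝ) := by
      exact_mod_cast h1
    linarith
  · generalize ((pshift z X * pshift z X * (pshift z' X * pshift z' X)) /
      (pshift z X * pshift z X * pshift z' X)).card = S at h2 ⊢
    have h3 : (3 : ℝ) ≤ X.card := by exact_mod_cast hcard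
    have hlog : 1 ≤ Real.log X.card := by
      rw [Real.le_log_iff_exp_le (by linarith)]
      linarith [Real.exp_one_lt_three]
    have hsq : ((X.card : ℝ) ^ ((5 : ℝ) / 2)) ^ 2 ≤ (1024 * (S : ℝ)) ^ 2 := by
      rw [← Real.rpow_natCast, ← Real.rpow_mul (by linarith)]
      have : (X.card : ℝ) ^ 5 ≤ 2 ^ 20 * (S : ℝ) ^ 2 := by exact_mod_cast h2
      norm_num
      norm_num at this
      nlinarith
    have hle := le_of_sq_le_sq hsq (by positivity)
    rw [Real.rpow_one]
    refine (div_le_self (by positivity) hlog).trans ?_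
    linarith
end

section
/- There exist absolute constants c > 0 and C > 0 such that for every finite set X of positive reals with |X| ≥ 3, there exist z, z' ∈ X such that |(zX+1)^{(4)}(z'X+1)^{(4)}| ≥ c · |X|^{33/16} / (log |X|)^C. -/
/-!
Passing to logarithms, put `a_x = log (z x + 1)`, `b_x = log (z' x + 1)`, `ℓ_x = b_x - a_x`, where
`z < z'` are consecutive elements of `X`, and let `A`, `B` be the sets of all `a_x` and `b_x`.
The proof squeezes many elements of iterated sum and difference sets of `A`, `B` into disjoint
intervals.

* The ratio `z' / z` is taken not to exceed `x_{i+1} / x_i` for a positive proportion of the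
  indices `i`; for these, the intervals `(a_{x_i}, b_{x_i}]`, of length `ℓ_{x_i}`, are disjoint.
* The function `x ↦ ℓ_x` is increasing, so the interval of a large `i` contains `a_{x_i} + ℓ_y` for
  all small `y`. This shows `|A + B - A| ≫ |X|²`.
* The gaps `g_y = ℓ_{x_{y+1}} - ℓ_{x_y}` take `≫ |X|` values for a suitable `(z, z')`: two different
  indices have the same gap for at most two consecutive pairs `(z, z')`, because by Rolle each such
  pair encloses a root of one fixed nonzero quadratic polynomial (`card_coincidence_le_two`), and
  one averages over the pairs. Squeezing the smaller gaps into `(ℓ_{x_y}, ℓ_{x_{y+1}}]` gives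
  `≫ |X|²` elements `ℓ_y + g_{y'}`, and thus `|(2A + 2B) - (2A + B)| ≫ |X|³`.
* The Ruzsa triangle inequality turns the two lower bounds for difference sets into
  `|2A + 2B| ≫ |X|^{3/2}` and then `|4A + 4B|² ≫ |X|³ |2A + 2B| ≫ |X|^{9/2}`.

The exponent `9/4` obtained in this way is more than the required `33/16`.
-/

open Finset Pointwise

/-- `log (z x + 1)`, the logarithm of a typical element of `pshift z X`. -/
noncomputable def lsh (z x : ℝ) : ℝ := Real.log (z * x + 1)

/-- `log ((z' x + 1) / (z x + 1))`, the length of the interval attached to `x`. -/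
noncomputable def len (z z' x : ℝ) : ℝ := lsh z' x - lsh z x

/-! ### Coincidences between gaps -/

lemma quadratic_three_roots {a b c u v w : ℝ} (huv : u ≠ v) (huw : u ≠ w) (hvw : v ≠ w)
    (hu : a * u ^ 2 + b * u + c = 0) (hv : a * v ^ 2 + b * v + c = 0)
    (hw : a * w ^ 2 + b * w + c = 0) : a = 0 ∧ b = 0 ∧ c = 0 := by
  have h1 : a * (u + v) + b = 0 := by
    have : (u - v) * (a * (u + v) + b) = 0 := by linear_combination hu - hv
    exact (mul_eq_zero.1 this).resolve_left (sub_ne_zero.2 huv)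
  have h2 : a * (u + w) + b = 0 := by
    have : (u - w) * (a * (u + w) + b) = 0 := by linear_combination hu - hw
    exact (mul_eq_zero.1 this).resolve_left (sub_ne_zero.2 huw)
  have ha : a = 0 := by
    have : (v - w) * a = 0 := by linear_combination h1 - h2
    exact (mul_eq_zero.1 this).resolve_left (sub_ne_zero.2 hvw)
  subst ha
  have hb : b = 0 := by linarith
  subst hb
  exact ⟨rfl, rfl, by linarith⟩

/-- Rolle's theorem: a coincidence of the gaps over `[p, q]` and `[r, s]` for the parameters `z < z'`
forces a root, between `z` and `z'`, of a quadratic polynomial depending only on `p, q, r, s`. -/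
lemma exists_root_of_coincidence {p q r s z z' : ℝ} (hp : 0 < p) (hq : 0 < q) (hr : 0 < r)
    (hs : 0 < s) (hz : 0 < z) (hzz : z < z')
    (h : len z z' q - len z z' p = len z z' s - len z z' r) :
    ∃ w ∈ Set.Ioo z z', ((q - p) * (s * r) - (s - r) * (q * p)) * w ^ 2 +
      ((q - p) * (s + r) - (s - r) * (q + p)) * w + ((q - p) - (s - r)) = 0 := by
  have key : ∀ t w : ℝ, 0 < t → 0 < w → HasDerivAt (fun w => lsh w t) (t / (w * t + 1)) w := by
    intro t w ht hw
    have h1 : HasDerivAt (fun w : ℝ => w * t + 1) t w := by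
      simpa using ((hasDerivAt_id w).mul_const t).add_const 1
    exact h1.log (by positivity)
  have hd : ∀ w : ℝ, 0 < w → HasDerivAt (fun w => lsh w q - lsh w p - lsh w s + lsh w r)
      (q / (w * q + 1) - p / (w * p + 1) - s / (w * s + 1) + r / (w * r + 1)) w := fun w hw =>
    (((key q w hq hw).sub (key p w hp hw)).sub (key s w hs hw)).add (key r w hr hw)
  obtain ⟨w, hw, hw0⟩ := exists_hasDerivAt_eq_zero
    (f := fun w => lsh w q - lsh w p - lsh w s + lsh w r) hzz
    (fun w hw => (hd w (hz.trans_le hw.1)).continuousAt.continuousWithinAt)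
    (by simp only [len] at h; linarith)
    (fun w hw => hd w (hz.trans hw.1))
  refine ⟨w, hw, ?_⟩
  have hwp : 0 < w := hz.trans hw.1
  have e1 : w * q + 1 ≠ 0 := by positivity
  have e2 : w * p + 1 ≠ 0 := by positivity
  have e3 : w * s + 1 ≠ 0 := by positivity
  have e4 : w * r + 1 ≠ 0 := by positivity
  field_simp at hw0
  linear_combination hw0

lemma card_coincidence_le_two {N : ℕ} {x : ℕ → ℝ} (hx : ∀ i j, i < j → j < N → x i < x j)
    (hpos : ∀ i, i < N → 0 < x i) {K : Finset ℕ} (hK : ∀ k ∈ K, k + 1 < N) {p q r s : ℝ}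
    (hp : 0 < p) (hr : 0 < r) (hpq : p < q) (hrs : r < s) (hne : p ≠ r) :
    #{k ∈ K | len (x k) (x (k + 1)) q - len (x k) (x (k + 1)) p =
      len (x k) (x (k + 1)) s - len (x k) (x (k + 1)) r} ≤ 2 := by
  by_contra! hcon
  obtain ⟨k₁, k₂, k₃, h1, h2, h3, h12, h13, h23⟩ := Finset.two_lt_card_iff.1 hcon
  have root : ∀ k ∈ {k ∈ K | len (x k) (x (k + 1)) q - len (x k) (x (k + 1)) p =
      len (x k) (x (k + 1)) s - len (x k) (x (k + 1)) r}, _ := fun k hk =>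
    exists_root_of_coincidence hp (hp.trans hpq) hr (hr.trans hrs)
      (hpos k (by have := hK k (mem_filter.1 hk).1; omega))
      (hx k (k + 1) (by omega) (hK k (mem_filter.1 hk).1)) (mem_filter.1 hk).2
  -- Roots enclosed by different consecutive pairs are different.
  have dist : ∀ {k l : ℕ} {u v : ℝ}, k ∈ K → l ∈ K → k ≠ l → u ∈ Set.Ioo (x k) (x (k + 1)) →
      v ∈ Set.Ioo (x l) (x (l + 1)) → u ≠ v := by
    intro k l u v hk hl hkl hu hv huv
    subst huv
    have mono : ∀ i j, i ≤ j → j < N → x i ≤ x j := fun i j hij hj => by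
      rcases hij.eq_or_lt with rfl | h
      · exact le_rfl
      · exact (hx i j h hj).le
    rcases lt_or_gt_of_ne hkl with h | h
    · have := mono (k + 1) l h (by have := hK l hl; omega)
      linarith [hu.2, hv.1]
    · have := mono (l + 1) k h (by have := hK k hk; omega)
      linarith [hv.2, hu.1]
  obtain ⟨u, hu, hu0⟩ := root k₁ h1
  obtain ⟨v, hv, hv0⟩ := root k₂ h2
  obtain ⟨w, hw, hw0⟩ := root k₃ h3
  have m1 := (mem_filter.1 h1).1
  have m2 := (mem_filter.1 h2).1
  have m3 := (mem_filter.1 h3).1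
  obtain ⟨-, hb, hc⟩ := quadratic_three_roots (dist m1 m2 h12 hu hv) (dist m1 m3 h13 hu hw)
    (dist m2 m3 h23 hv hw) hu0 hv0 hw0
  have hc' : s - r = q - p := by linarith
  rw [hc'] at hb
  have h4 : (q - p) * ((s + r) - (q + p)) = 0 := by linear_combination hb
  have h5 := (mul_eq_zero.1 h4).resolve_left (by linarith)
  exact hne (by linarith)

/-! ### Counting lemmas -/

/-- Cauchy–Schwarz: few coincidences mean many values. -/
lemma sq_card_le_card_image_mul (Y : Finset ℕ) (g : ℕ → ℝ) :
    #Y ^ 2 ≤ #(Y.image g) * (#Y + #{p ∈ Y.offDiag | g p.1 = g p.2}) := by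
  have h1 : #Y + #{p ∈ Y.offDiag | g p.1 = g p.2} = #{p ∈ Y ×ˢ Y | g p.1 = g p.2} := by
    have hd : {p ∈ Y.diag | g p.1 = g p.2} = Y.diag :=
      Finset.filter_true_of_mem fun p hp => by rw [(Finset.mem_diag.1 hp).2]
    rw [← Finset.diag_union_offDiag, Finset.filter_union, Finset.card_union_of_disjoint
      (Finset.disjoint_filter_filter (Finset.disjoint_diag_offDiag Y)), hd, Finset.diag_card]
  have h2 : #{p ∈ Y ×ˢ Y | g p.1 = g p.2} = ∑ b ∈ Y.image g, #{a ∈ Y | g a = b} ^ 2 := by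
    rw [Finset.card_eq_sum_card_fiberwise (f := fun p => g p.1) (t := Y.image g)]
    · refine Finset.sum_congr rfl fun b _ => ?_
      rw [sq, ← Finset.card_product]
      congr 1
      ext p
      simp only [mem_filter, mem_product]
      constructor
      · rintro ⟨⟨⟨h1, h2⟩, h3⟩, h4⟩
        exact ⟨⟨h1, h4⟩, h2, h3 ▸ h4⟩
      · rintro ⟨⟨h1, h4⟩, h2, h3⟩
        exact ⟨⟨⟨h1, h2⟩, h4.trans h3.symm⟩, h4⟩
    · intro p hp
      have := (mem_filter.1 hp).1
      exact mem_image_of_mem _ (mem_product.1 this).1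
  rw [h1, h2]
  calc #Y ^ 2 = (∑ b ∈ Y.image g, #{a ∈ Y | g a = b}) ^ 2 := by
        rw [← Finset.card_eq_sum_card_image]
    _ ≤ _ := sq_sum_le_card_mul_sum_sq

lemma card_sq_le_two_mul_card_le (G : Finset ℝ) :
    #G ^ 2 ≤ 2 * #{p ∈ G ×ˢ G | p.2 ≤ p.1} := by
  have h1 : #{p ∈ G ×ˢ G | p.1 ≤ p.2} ≤ #{p ∈ G ×ˢ G | p.2 ≤ p.1} := by
    refine Finset.card_le_card_of_injOn Prod.swap ?_ Prod.swap_injective.injOn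
    intro p hp
    simp only [coe_filter, mem_product, Set.mem_ofPred_eq, Prod.fst_swap, Prod.snd_swap] at hp ⊢
    tauto
  have h2 : G ×ˢ G ⊆ {p ∈ G ×ˢ G | p.1 ≤ p.2} ∪ {p ∈ G ×ˢ G | p.2 ≤ p.1} := by
    intro p hp
    simp only [mem_union, mem_filter]
    rcases le_total p.1 p.2 with h | h <;> tauto
  have h3 := (Finset.card_le_card h2).trans (Finset.card_union_le _ _)
  rw [Finset.card_product, ← sq] at h3
  omega

/-- The sets `a i + W`, squeezed into disjoint intervals `(a i, b i]`, are disjoint. -/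
lemma card_mul_card_le_of_squeeze {I : Finset ℕ} {a b : ℕ → ℝ} {W T : Finset ℝ}
    (hab : ∀ i ∈ I, ∀ j ∈ I, i < j → b i ≤ a j) (hW : ∀ w ∈ W, ∀ i ∈ I, 0 < w ∧ w ≤ b i - a i)
    (hT : ∀ i ∈ I, ∀ w ∈ W, a i + w ∈ T) : #I * #W ≤ #T := by
  rw [← Finset.card_product]
  refine Finset.card_le_card_of_injOn (fun p => a p.1 + p.2) ?_ ?_
  · intro p hp
    have hp := mem_product.1 hp
    exact hT _ hp.1 _ hp.2
  · rintro ⟨i, w⟩ hp ⟨j, w'⟩ hq h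
    have hp := mem_product.1 hp
    have hq := mem_product.1 hq
    simp only at h hp hq
    have e1 := hW _ hp.2 _ hp.1
    have e2 := hW _ hq.2 _ hq.1
    have hij : i = j := by
      rcases lt_trichotomy i j with h' | h' | h'
      · have := hab i hp.1 j hq.1 h'
        linarith
      · exact h'
      · have := hab j hq.1 i hp.1 h'
        linarith
    subst hij
    simpa using h

/-- All but at most `L` elements of `J` have at least `L` elements of `J` above them in the
ordering by `r`. -/
lemma card_large_rank (J : Finset ℕ) (r : ℕ → ℝ) (L : ℕ) :
    #J ≤ #{k ∈ J | L ≤ #{i ∈ J | r k ≤ r i}} + L := by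
  have h1 := Finset.card_filter_add_card_filter_not (s := J)
    (fun k => L ≤ #{i ∈ J | r k ≤ r i})
  suffices #{k ∈ J | ¬ L ≤ #{i ∈ J | r k ≤ r i}} ≤ L by omega
  rcases ({k ∈ J | ¬ L ≤ #{i ∈ J | r k ≤ r i}}).eq_empty_or_nonempty with h | h
  · rw [h]; simp
  · obtain ⟨k, hk, hmin⟩ := Finset.exists_min_image _ r h
    have h2 : {k ∈ J | ¬ L ≤ #{i ∈ J | r k ≤ r i}} ⊆ {i ∈ J | r k ≤ r i} := by
      intro j hj
      exact mem_filter.2 ⟨(mem_filter.1 hj).1, hmin j hj⟩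
    have h3 := Finset.card_le_card h2
    have h4 := (mem_filter.1 hk).2
    omega

/-! ### Monotonicity of the interval lengths -/

lemma len_pos {z z' x : ℝ} (hz : 0 < z) (hzz : z < z') (hx : 0 < x) : 0 < len z z' x := by
  have h : z * x < z' * x := by gcongr
  exact sub_pos.2 (Real.log_lt_log (by positivity) (by linarith))

lemma len_lt_len {z z' x y : ℝ} (hz : 0 < z) (hzz : z < z') (hx : 0 < x) (hxy : x < y) :
    len z z' x < len z z' y := by
  have hz' := hz.trans hzz
  have hy := hx.trans hxy
  have h : lsh z' x + lsh z y < lsh z' y + lsh z x := by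
    unfold lsh
    rw [← Real.log_mul (by positivity) (by positivity),
      ← Real.log_mul (by positivity) (by positivity)]
    apply Real.log_lt_log (by positivity)
    nlinarith [mul_pos (sub_pos.2 hzz) (sub_pos.2 hxy)]
  unfold len
  linarith

/-! ### Choice of the parameters -/

/-- A consecutive pair `x k < x (k + 1)` whose ratio is exceeded by at least `M` others with index
in `[M, 3M)`, and for which the gaps over the first `M` indices take at least `M / 3` values. -/
lemma exists_good_pair {N M : ℕ} {x : ℕ → ℝ} (hx : ∀ i j, i < j → j < N → x i < x j)
    (hpos : ∀ i, i < N → 0 < x i) (hM : 1 ≤ M) (hMN : 3 * M < N) :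
    ∃ k, k + 1 < N ∧ M ≤ #{i ∈ Finset.Ico M (3 * M) | x (k + 1) / x k ≤ x (i + 1) / x i} ∧
      M ≤ 3 * #((Finset.range M).image fun y =>
        len (x k) (x (k + 1)) (x (y + 1)) - len (x k) (x (k + 1)) (x y)) := by
  set J := Finset.Ico M (3 * M) with hJ
  have hJc : #J = 2 * M := by rw [hJ, Nat.card_Ico]; omega
  set K := {k ∈ J | M ≤ #{i ∈ J | x (k + 1) / x k ≤ x (i + 1) / x i}} with hK
  have hKc : M ≤ #K := by
    have : #J ≤ #K + M := card_large_rank J (fun k => x (k + 1) / x k) M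
    omega
  have hKN : ∀ k ∈ K, k + 1 < N := fun k hk => by
    have := Finset.mem_Ico.1 (mem_filter.1 hk).1
    omega
  let g : ℕ → ℕ → ℝ := fun k y =>
    len (x k) (x (k + 1)) (x (y + 1)) - len (x k) (x (k + 1)) (x y)
  set Y := Finset.range M with hY
  have hsum : ∑ k ∈ K, #{p ∈ Y.offDiag | g k p.1 = g k p.2} ≤ #Y.offDiag * 2 := by
    have h := Finset.sum_card_bipartiteAbove_eq_sum_card_bipartiteBelow (s := K) (t := Y.offDiag)
      (fun k p => g k p.1 = g k p.2)
    simp only [Finset.bipartiteAbove, Finset.bipartiteBelow] at h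
    rw [h]
    refine Finset.sum_le_card_nsmul _ _ 2 ?_
    rintro ⟨i, j⟩ hp
    obtain ⟨hi, hj, hij⟩ := Finset.mem_offDiag.1 hp
    have hi := Finset.mem_range.1 hi
    have hj := Finset.mem_range.1 hj
    refine card_coincidence_le_two hx hpos hKN (hpos i (by omega)) (hpos j (by omega))
      (hx i (i + 1) (by omega) (by omega)) (hx j (j + 1) (by omega) (by omega)) ?_
    rcases lt_or_gt_of_ne hij with h' | h'
    · exact (hx i j h' (by omega)).ne
    · exact (hx j i h' (by omega)).ne'
  have hoff : #Y.offDiag * 2 ≤ ∑ _k ∈ K, 2 * M := by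
    rw [Finset.offDiag_card, hY, Finset.card_range, Finset.sum_const, smul_eq_mul]
    have : M * M - M ≤ M * M := Nat.sub_le _ _
    nlinarith
  obtain ⟨k, hk, hkE⟩ := Finset.exists_le_of_sum_le
    (Finset.card_pos.1 (by omega : 0 < #K)) (hsum.trans hoff)
  refine ⟨k, hKN k hk, (mem_filter.1 hk).2, ?_⟩
  have hcs := sq_card_le_card_image_mul Y (g k)
  have hYc : #Y = M := Finset.card_range M
  rw [hYc] at hcs
  have h3 : M * M ≤ M * (3 * #(Y.image (g k))) := by
    calc M * M = M ^ 2 := (sq M).symm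
      _ ≤ _ := hcs
      _ ≤ #(Y.image (g k)) * (M + 2 * M) := by gcongr
      _ = _ := by ring
  exact Nat.le_of_mul_le_mul_left h3 (by omega)

/-! ### The two squeezing bounds -/

/-- With `ℓ` increasing and `G` the set of its gaps over the first `M` indices, there are at least
`|G|² / 2` sums of some `ℓ y` and a gap not exceeding the one which follows `ℓ y`. -/
lemma exists_refined_set {M : ℕ} {l : ℕ → ℝ} (h0 : ∀ y, y ≤ M → 0 < l y)
    (hl : ∀ i j, i < j → j ≤ M → l i < l j) :
    ∃ W : Finset ℝ, (#((Finset.range M).image fun y => l (y + 1) - l y)) ^ 2 ≤ 2 * #W ∧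
      ∀ w ∈ W, 0 < w ∧ w ≤ l M ∧ ∃ y < M, ∃ y' < M, w = l y + (l (y' + 1) - l y') := by
  set G := (Finset.range M).image fun y => l (y + 1) - l y with hG
  have hsec : ∀ v ∈ G, ∃ y, y < M ∧ l (y + 1) - l y = v := by
    intro v hv
    obtain ⟨y, hy, h⟩ := mem_image.1 hv
    exact ⟨y, Finset.mem_range.1 hy, h⟩
  choose! s hsM hsv using hsec
  have hlm : ∀ i j, i ≤ j → j ≤ M → l i ≤ l j := fun i j hij hj => by
    rcases hij.eq_or_lt with rfl | h
    · exact le_rfl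
    · exact (hl i j h hj).le
  have hGpos : ∀ v ∈ G, 0 < v := fun v hv => by
    rw [← hsv v hv]
    exact sub_pos.2 (hl _ _ (by omega) (hsM v hv))
  refine ⟨{p ∈ G ×ˢ G | p.2 ≤ p.1}.image fun p => l (s p.1) + p.2, ?_, ?_⟩
  · rw [Finset.card_image_of_injOn (s := {p ∈ G ×ˢ G | p.2 ≤ p.1})]
    · exact card_sq_le_two_mul_card_le G
    · rintro ⟨v, v'⟩ hp ⟨u, u'⟩ hq h
      simp only [coe_filter, mem_product, Set.mem_ofPred_eq] at hp hq h
      have a1 := hsv v hp.1.1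
      have a2 := hsv u hq.1.1
      have b1 := hGpos v' hp.1.2
      have b2 := hGpos u' hq.1.2
      have c1 := hsM v hp.1.1
      have c2 := hsM u hq.1.1
      have hs : s v = s u := by
        rcases lt_trichotomy (s v) (s u) with h' | h' | h'
        · have := hlm (s v + 1) (s u) h' c2.le
          linarith
        · exact h'
        · have := hlm (s u + 1) (s v) h' c1.le
          linarith
      have huv : v = u := by rw [← a1, ← a2, hs]
      subst huv
      simpa using h
  · intro w hw
    obtain ⟨⟨v, v'⟩, hp, rfl⟩ := mem_image.1 hw
    simp only [mem_filter, mem_product] at hp ⊢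
    have c1 := hsM v hp.1.1
    have c2 := hsM v' hp.1.2
    have a1 := hsv v hp.1.1
    have := h0 (s v) c1.le
    have := hGpos v' hp.1.2
    have := hlm (s v + 1) M c1 le_rfl
    exact ⟨by linarith, by linarith, s v, c1, s v', c2, by rw [hsv v' hp.1.2]⟩

/-- The combination of the squeezing bounds with the Ruzsa triangle inequality, for given lower
bounds on `|A + B - A|` and `|(2A + 2B) - (2A + B)|`. -/
lemma ruzsa_combination {A B : Finset ℝ} {P Q : ℕ} (hB : B.Nonempty) (hA : A.Nonempty)
    (h1 : P ≤ #((A + B) - A))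
    (h2 : Q ≤ #((A + A + (B + B)) - (A + A + B))) :
    Q ^ 2 * (P * #B) ≤ #(A + A + A + A + (B + B + B + B)) ^ 4 := by
  set U := A + A + (B + B) with hU
  set S := A + A + A + A + (B + B + B + B) with hS
  have hUU : U + U = S := by rw [hU, hS]; abel
  have e1 : P * #B ≤ #U ^ 2 := by
    have r := Finset.ruzsa_triangle_inequality_sub_add_add (A + B) B A
    have t1 : #(A + B + B) ≤ #U := by
      have : U = A + (A + B + B) := by rw [hU]; abel
      rw [this]
      exact Finset.card_le_card_add_left hA
    have t2 : #(B + A) ≤ #U := by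
      have : U = (A + B) + (B + A) := by rw [hU]; abel
      rw [this]
      exact Finset.card_le_card_add_left (hA.add hB)
    calc P * #B ≤ #((A + B) - A) * #B := by gcongr
      _ ≤ #(A + B + B) * #(B + A) := by rwa [add_comm B A]
      _ ≤ #U * #U := Nat.mul_le_mul t1 t2
      _ = _ := (sq _).symm
  have e2 : Q * #U ≤ #S ^ 2 := by
    have r := Finset.ruzsa_triangle_inequality_sub_add_add U U (A + A + B)
    have t : #(U + (A + A + B)) ≤ #S := by
      have : S = B + (U + (A + A + B)) := by rw [hS, hU]; abel
      rw [this]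
      exact Finset.card_le_card_add_left hB
    calc Q * #U ≤ #(U - (A + A + B)) * #U := by gcongr
      _ ≤ #(U + U) * #(U + (A + A + B)) := by rwa [add_comm U (A + A + B)]
      _ ≤ #S * #S := Nat.mul_le_mul (by rw [hUU]) t
      _ = _ := (sq _).symm
  calc Q ^ 2 * (P * #B) ≤ Q ^ 2 * #U ^ 2 := by gcongr
    _ = (Q * #U) ^ 2 := by ring
    _ ≤ (#S ^ 2) ^ 2 := by gcongr
    _ = #S ^ 4 := by ring

lemma additive_growth {N M : ℕ} {x : ℕ → ℝ} (hx : ∀ i j, i < j → j < N → x i < x j)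
    (hpos : ∀ i, i < N → 0 < x i) (hM : 1 ≤ M) (hMN : 3 * M < N) :
    ∃ k, k + 1 < N ∧ ∀ A B : Finset ℝ, A = (Finset.range N).image (fun i => lsh (x k) (x i)) →
      B = (Finset.range N).image (fun i => lsh (x (k + 1)) (x i)) →
      M ^ 8 * N ≤ 324 * #(A + A + A + A + (B + B + B + B)) ^ 4 := by
  obtain ⟨k, hkN, hI, hG⟩ := exists_good_pair hx hpos hM hMN
  refine ⟨k, hkN, fun A B hA hB => ?_⟩
  set z := x k with hz
  set z' := x (k + 1) with hz'
  set I := {i ∈ Finset.Ico M (3 * M) | z' / z ≤ x (i + 1) / x i} with hIdef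
  have hz0 : 0 < z := hpos k (by omega)
  have hzz : z < z' := hx k (k + 1) (by omega) hkN
  have hzpos := hz0.trans hzz
  have memA : ∀ i, i < N → lsh z (x i) ∈ A := fun i hi => by
    rw [hA]; exact mem_image_of_mem _ (Finset.mem_range.2 hi)
  have memB : ∀ i, i < N → lsh z' (x i) ∈ B := fun i hi => by
    rw [hB]; exact mem_image_of_mem _ (Finset.mem_range.2 hi)
  have hIm : ∀ i ∈ I, M ≤ i ∧ i + 1 < N := fun i hi => by
    have := Finset.mem_Ico.1 (mem_filter.1 hi).1
    omega
  have hxm : ∀ i j, i ≤ j → j < N → x i ≤ x j := fun i j hij hj => by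
    rcases hij.eq_or_lt with rfl | h
    · exact le_rfl
    · exact (hx i j h hj).le
  have hll : ∀ i j, i < j → j < N → len z z' (x i) < len z z' (x j) := fun i j hij hj =>
    len_lt_len hz0 hzz (hpos i (by omega)) (hx i j hij hj)
  have hllm : ∀ i j, i ≤ j → j < N → len z z' (x i) ≤ len z z' (x j) := fun i j hij hj => by
    rcases hij.eq_or_lt with rfl | h
    · exact le_rfl
    · exact (hll i j h hj).le
  have hl0 : ∀ i, i < N → 0 < len z z' (x i) := fun i hi => len_pos hz0 hzz (hpos i hi)
  -- The choice of `I` makes the intervals disjoint.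
  have hsep : ∀ i ∈ I, ∀ j ∈ I, i < j → lsh z' (x i) ≤ lsh z (x j) := by
    intro i hi j hj hij
    have hi0 := hpos i (by have := hIm i hi; omega)
    have h1 := (mem_filter.1 hi).2
    rw [div_le_div_iff₀ hz0 hi0] at h1
    have h2 := hxm (i + 1) j hij (by have := hIm j hj; omega)
    have h3 : z * x (i + 1) ≤ z * x j := by gcongr
    exact Real.log_le_log (by positivity) (by linarith)
  have bound1 : M * M ≤ #((A + B) - A) := by
    have hWc : #((Finset.range M).image fun y => len z z' (x y)) = M := by
      rw [Finset.card_image_of_injOn, Finset.card_range]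
      intro i hi j hj h
      have hi := Finset.mem_range.1 hi
      have hj := Finset.mem_range.1 hj
      simp only at h
      rcases lt_trichotomy i j with h' | h' | h'
      · exact absurd h (hll i j h' (by omega)).ne
      · exact h'
      · exact absurd h (hll j i h' (by omega)).ne'
    calc M * M ≤ #I * #((Finset.range M).image fun y => len z z' (x y)) := by rw [hWc]; gcongr
      _ ≤ _ := by
        refine card_mul_card_le_of_squeeze hsep ?_ ?_
        · intro w hw i hi
          obtain ⟨y, hy, rfl⟩ := mem_image.1 hw
          have hy := Finset.mem_range.1 hy
          have := hIm i hi
          exact ⟨hl0 y (by omega), hllm y i (by omega) (by omega)⟩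
        · intro i hi w hw
          obtain ⟨y, hy, rfl⟩ := mem_image.1 hw
          have hy := Finset.mem_range.1 hy
          have := hIm i hi
          have e : lsh z (x i) + len z z' (x y) = (lsh z (x i) + lsh z' (x y)) - lsh z (x y) := by
            unfold len; ring
          rw [e]
          exact sub_mem_sub (add_mem_add (memA i (by omega)) (memB y (by omega)))
            (memA y (by omega))
  obtain ⟨W, hWc, hW⟩ := exists_refined_set (M := M) (l := fun y => len z z' (x y))
    (fun y hy => hl0 y (by omega)) (fun i j hij hj => hll i j hij (by omega))
  have bound2 : M * #W ≤ #((A + A + (B + B)) - (A + A + B)) := by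
    calc M * #W ≤ #I * #W := by gcongr
      _ ≤ _ := by
        refine card_mul_card_le_of_squeeze hsep ?_ ?_
        · intro w hw i hi
          have h := hW w hw
          have := hIm i hi
          exact ⟨h.1, h.2.1.trans (hllm M i (by omega) (by omega))⟩
        · intro i hi w hw
          obtain ⟨-, -, y, hy, y', hy', rfl⟩ := hW w hw
          have := hIm i hi
          have e : lsh z (x i) + (len z z' (x y) + (len z z' (x (y' + 1)) - len z z' (x y'))) =
              (lsh z (x i) + lsh z (x y') + (lsh z' (x y) + lsh z' (x (y' + 1)))) -
                (lsh z (x y) + lsh z (x (y' + 1)) + lsh z' (x y')) := by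
            unfold len; ring
          rw [e]
          exact sub_mem_sub (add_mem_add (add_mem_add (memA i (by omega)) (memA y' (by omega)))
            (add_mem_add (memB y (by omega)) (memB (y' + 1) (by omega))))
            (add_mem_add (add_mem_add (memA y (by omega)) (memA (y' + 1) (by omega)))
              (memB y' (by omega)))
  have hBc : #B = N := by
    rw [hB, Finset.card_image_of_injOn, Finset.card_range]
    intro i hi j hj h
    have hi := Finset.mem_range.1 hi
    have hj := Finset.mem_range.1 hj
    have mono : ∀ i j, i < j → j < N → lsh z' (x i) < lsh z' (x j) := fun i j hij hj => by
      have h1 := hx i j hij hj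
      have h2 := hpos i (by omega)
      have h3 : z' * x i < z' * x j := by gcongr
      exact Real.log_lt_log (by positivity) (by linarith)
    simp only at h
    rcases lt_trichotomy i j with h' | h' | h'
    · exact absurd h (mono i j h' hj).ne
    · exact h'
    · exact absurd h (mono j i h' hi).ne'
  have hfin := ruzsa_combination ⟨_, memB 0 (by omega)⟩ ⟨_, memA 0 (by omega)⟩ bound1 bound2
  rw [hBc] at hfin
  have hMW : M ^ 2 ≤ 18 * #W := by
    have h := Nat.pow_le_pow_left hG 2
    rw [mul_pow] at h
    omega
  calc M ^ 8 * N = (M * M ^ 2) ^ 2 * (M * M * N) := by ring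
    _ ≤ (M * (18 * #W)) ^ 2 * (M * M * N) := by gcongr
    _ = 324 * ((M * #W) ^ 2 * (M * M * N)) := by ring
    _ ≤ _ := by gcongr

/-! ### Return to products -/

lemma image_log_mul {S T : Finset ℝ} (hS : ∀ s ∈ S, 0 < s) (hT : ∀ t ∈ T, 0 < t) :
    (S * T).image Real.log = S.image Real.log + T.image Real.log := by
  ext u
  simp only [mem_image, mem_mul, mem_add]
  constructor
  · rintro ⟨_, ⟨s, hs, t, ht, rfl⟩, rfl⟩
    exact ⟨_, ⟨s, hs, rfl⟩, _, ⟨t, ht, rfl⟩, (Real.log_mul (hS s hs).ne' (hT t ht).ne').symm⟩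
  · rintro ⟨_, ⟨s, hs, rfl⟩, _, ⟨t, ht, rfl⟩, rfl⟩
    exact ⟨_, ⟨s, hs, t, ht, rfl⟩, Real.log_mul (hS s hs).ne' (hT t ht).ne'⟩

lemma pos_of_mem_mul {S T : Finset ℝ} (hS : ∀ s ∈ S, 0 < s) (hT : ∀ t ∈ T, 0 < t) :
    ∀ u ∈ S * T, 0 < u := by
  intro u hu
  obtain ⟨s, hs, t, ht, rfl⟩ := mem_mul.1 hu
  exact mul_pos (hS s hs) (hT t ht)

lemma card_eightfold_ge {S T : Finset ℝ} (hS : ∀ s ∈ S, 0 < s) (hT : ∀ t ∈ T, 0 < t) :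
    #(S.image Real.log + S.image Real.log + S.image Real.log + S.image Real.log +
      (T.image Real.log + T.image Real.log + T.image Real.log + T.image Real.log)) ≤
      #(S * S * S * S * (T * T * T * T)) := by
  have s2 := pos_of_mem_mul hS hS
  have s3 := pos_of_mem_mul s2 hS
  have s4 := pos_of_mem_mul s3 hS
  have t2 := pos_of_mem_mul hT hT
  have t3 := pos_of_mem_mul t2 hT
  have t4 := pos_of_mem_mul t3 hT
  rw [← image_log_mul hS hS, ← image_log_mul s2 hS, ← image_log_mul s3 hS, ← image_log_mul hT hT,
    ← image_log_mul t2 hT, ← image_log_mul t3 hT, ← image_log_mul s4 t4]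
  exact Finset.card_image_le

/-- The bound with exponent `9/4`, in a form free of real powers. -/
lemma product_growth (X : Finset ℝ) (hX : ∀ x ∈ X, 0 < x) (h3 : 3 ≤ #X) :
    ∃ z ∈ X, ∃ z' ∈ X, #X ^ 9 ≤ 200 ^ 4 * #(pshift z X * pshift z X * pshift z X * pshift z X *
      (pshift z' X * pshift z' X * pshift z' X * pshift z' X)) ^ 4 := by
  have hps : ∀ z ∈ X, ∀ s ∈ pshift z X, 0 < s := by
    intro z hz s hs
    obtain ⟨x, hx, rfl⟩ := mem_image.1 hs
    have := hX z hz
    have := hX x hx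
    positivity
  rcases h3.eq_or_lt with h | h4
  · -- With three elements there is no room for the squeezing argument, but `3 ^ 9 ≤ 200 ^ 4`.
    have hne : X.Nonempty := Finset.card_pos.1 (by omega)
    obtain ⟨z, hz⟩ := hne
    refine ⟨z, hz, z, hz, ?_⟩
    have hp : (pshift z X).Nonempty := Finset.Nonempty.image ⟨z, hz⟩ _
    have hS : 1 ≤ #(pshift z X * pshift z X * pshift z X * pshift z X *
        (pshift z X * pshift z X * pshift z X * pshift z X)) :=
      Finset.card_pos.2 ((((hp.mul hp).mul hp).mul hp).mul (((hp.mul hp).mul hp).mul hp))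
    have := Nat.one_le_pow 4 _ hS
    rw [← h]
    omega
  · set N := #X with hN
    let e := X.orderEmbOfFin hN.symm
    let x : ℕ → ℝ := fun i => if h : i < N then e ⟨i, h⟩ else 0
    have hxe : ∀ i (h : i < N), x i = e ⟨i, h⟩ := fun i h => dif_pos h
    have hxX : ∀ i, i < N → x i ∈ X := fun i h => by
      rw [hxe i h]; exact Finset.orderEmbOfFin_mem _ _ _
    have hx : ∀ i j, i < j → j < N → x i < x j := fun i j hij hj => by
      rw [hxe i (hij.trans hj), hxe j hj]
      exact e.strictMono hij
    have himg : (Finset.range N).image x = X := by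
      apply Finset.eq_of_subset_of_card_le
      · intro u hu
        obtain ⟨i, hi, rfl⟩ := mem_image.1 hu
        exact hxX i (Finset.mem_range.1 hi)
      · rw [Finset.card_image_of_injOn, Finset.card_range]
        intro i hi j hj hij
        have hi := Finset.mem_range.1 hi
        have hj := Finset.mem_range.1 hj
        rcases lt_trichotomy i j with h' | h' | h'
        · exact absurd hij (hx i j h' hj).ne
        · exact h'
        · exact absurd hij (hx j i h' hi).ne'
    have hlog : ∀ z, (pshift z X).image Real.log =
        (Finset.range N).image (fun i => lsh z (x i)) := by
      intro z
      conv_lhs => rw [← himg]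
      rw [pshift, Finset.image_image, Finset.image_image]
      rfl
    obtain ⟨k, hkN, hk⟩ := additive_growth (M := (N - 1) / 3) hx (fun i hi => hX _ (hxX i hi))
      (by omega) (by omega)
    have hg := hk _ _ (hlog (x k)) (hlog (x (k + 1)))
    have z1 := hxX k (by omega)
    have z2 := hxX (k + 1) hkN
    refine ⟨x k, z1, x (k + 1), z2, ?_⟩
    have hc := card_eightfold_ge (hps _ z1) (hps _ z2)
    set S := #(pshift (x k) X * pshift (x k) X * pshift (x k) X * pshift (x k) X *
      (pshift (x (k + 1)) X * pshift (x (k + 1)) X * pshift (x (k + 1)) X * pshift (x (k + 1)) X))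
    have hNM : N ≤ 6 * ((N - 1) / 3) := by omega
    calc N ^ 9 = N ^ 8 * N := by ring
      _ ≤ (6 * ((N - 1) / 3)) ^ 8 * N := by gcongr
      _ = 6 ^ 8 * (((N - 1) / 3) ^ 8 * N) := by ring
      _ ≤ 6 ^ 8 * (324 * S ^ 4) := by
        refine Nat.mul_le_mul_left _ (hg.trans ?_)
        gcongr
      _ ≤ 200 ^ 4 * S ^ 4 := by
        rw [← mul_assoc]
        exact Nat.mul_le_mul_right _ (by norm_num)

theorem fourfold_product_shift_growth :
    ∃ c C : ℝ, 0 < c ∧ 0 < C ∧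
      ∀ X : Finset ℝ, (∀ x ∈ X, 0 < x) → 3 ≤ X.card →
        ∃ z ∈ X, ∃ z' ∈ X,
          c * (X.card : ℝ) ^ ((33 : ℝ) / 16) / (Real.log X.card) ^ C ≤
            ((pshift z X * pshift z X * pshift z X * pshift z X *
              (pshift z' X * pshift z' X * pshift z' X * pshift z' X)).card : ℝ) := by
  refine ⟨1 / 200, 1, by norm_num, one_pos, fun X hX h3 => ?_⟩
  obtain ⟨z, hz, z', hz', h⟩ := product_growth X hX h3
  refine ⟨z, hz, z', hz', ?_⟩
  set S := #(pshift z X * pshift z X * pshift z X * pshift z X *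
      (pshift z' X * pshift z' X * pshift z' X * pshift z' X))
  have hN : (3 : ℝ) ≤ (#X : ℝ) := by exact_mod_cast h3
  have hlog : 1 ≤ Real.log #X := by
    rw [Real.le_log_iff_exp_le (by linarith)]
    linarith [Real.exp_one_lt_d9]
  have hS : ((#X : ℝ) ^ ((33 : ℝ) / 16)) ^ 4 ≤ (200 * (S : ℝ)) ^ 4 := by
    calc ((#X : ℝ) ^ ((33 : ℝ) / 16)) ^ 4 = (#X : ℝ) ^ ((33 : ℝ) / 16 * (4 : ℕ)) := by
          rw [Real.rpow_mul_natCast (by linarith)]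
      _ ≤ (#X : ℝ) ^ ((9 : ℕ) : ℝ) :=
          Real.rpow_le_rpow_of_exponent_le (by linarith) (by norm_num)
      _ = (#X : ℝ) ^ 9 := Real.rpow_natCast _ _
      _ ≤ 200 ^ 4 * (S : ℝ) ^ 4 := by exact_mod_cast h
      _ = _ := by ring
  have hS' : (#X : ℝ) ^ ((33 : ℝ) / 16) ≤ 200 * S :=
    le_of_pow_le_pow_left₀ (by norm_num) (by positivity) hS
  rw [Real.rpow_one]
  calc 1 / 200 * (#X : ℝ) ^ ((33 : ℝ) / 16) / Real.log #X
      ≤ 1 / 200 * (#X : ℝ) ^ ((33 : ℝ) / 16) := div_le_self (by positivity) hlog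
    _ ≤ S := by linarith
end

section
/- There exists an absolute constant c > 0 such that the following holds. Let P ⊂ ℝ² be a finite nonempty point set not containing the origin, and let L denote the set of all lines through the origin that contain at least one point of P. Then there exists p ∈ P such that |{p · q : q ∈ P}| ≥ c · |P|^{1/2} |L|^{1/2}. -/
open Finset Pointwise

/-!
The proof follows Székely's derivation of the Szemerédi–Trotter bound from the crossing lemma.
The fibres of `q ↦ p · q` are parallel lines orthogonal to `p`. If every `p ∈ P` determines at most
`k` dot products, then `P` is covered by `k` parallel lines in each of `m` directions, where `m` is
the number of lines in `L`. Join consecutive points of `P` on each of these lines. This gives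
a straight-line graph with at least `m (n - k)` edges, `n = |P|`, and at most `(m k) ^ 2` crossings,
since a crossing is determined by the two lines involved. The crossing lemma then yields
`k ^ 2 ≥ c m n` (`directions_bound`). One direction, the vertical one, is ignored, so that edges
can be ordered from left to right.

The crossing lemma rests on the bound `3 n` for the number of edges of a plane straight-line graph
(`plane_graph_card_le`). It is proved without Euler's formula, by charging every edge to a vertex so
that each vertex is charged at most three times (`edge_charge`). Removing all crossed edges gives
`#edges ≤ 3 n + #crossings`, and random sampling of vertices amplifies this (`amplify`).

If `m` is bounded, it suffices to have `k ^ 2 ≥ n`. This holds because two dot products with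
non-parallel vectors determine a point, and if all points of `P` are parallel, one suffices.
-/

/-! ### Straight-line edges and their crossings -/

/-- An edge is an ordered pair of points, meant to be listed from left to right.
`edgeSlope` is the slope of the line through the two points. -/
noncomputable def edgeSlope (e : (ℝ × ℝ) × (ℝ × ℝ)) : ℝ :=
  (e.2.2 - e.1.2) / (e.2.1 - e.1.1)

/-- The height at abscissa `x` of the line spanned by the edge `e`. -/
noncomputable def edgeHeight (e : (ℝ × ℝ) × (ℝ × ℝ)) (x : ℝ) : ℝ :=
  e.1.2 + edgeSlope e * (x - e.1.1)

/-- Two edges cross if their relative interiors meet. In particular every nondegenerate edge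
crosses itself. -/
def EdgeCross (e h : (ℝ × ℝ) × (ℝ × ℝ)) : Prop :=
  ∃ x, e.1.1 < x ∧ x < e.2.1 ∧ h.1.1 < x ∧ x < h.2.1 ∧ edgeHeight e x = edgeHeight h x

lemma edgeHeight_left (e : (ℝ × ℝ) × (ℝ × ℝ)) : edgeHeight e e.1.1 = e.1.2 := by
  simp [edgeHeight]

lemma edgeHeight_right {e : (ℝ × ℝ) × (ℝ × ℝ)} (he : e.1.1 < e.2.1) :
    edgeHeight e e.2.1 = e.2.2 := by
  have : e.2.1 - e.1.1 ≠ 0 := (sub_pos.2 he).ne'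
  simp only [edgeHeight, edgeSlope]
  field_simp
  ring

lemma edgeHeight_sub (e : (ℝ × ℝ) × (ℝ × ℝ)) (x y : ℝ) :
    edgeHeight e x = edgeHeight e y + edgeSlope e * (x - y) := by
  simp only [edgeHeight]; ring

/-- Two edges without a crossing keep their vertical order along a common abscissa interval. -/
lemma edgeHeight_le_of_not_cross {e h : (ℝ × ℝ) × (ℝ × ℝ)} (hc : ¬ EdgeCross e h) {x y : ℝ}
    (hxy : x ≤ y) (ex : e.1.1 ≤ x) (hx : h.1.1 ≤ x) (ey : y ≤ e.2.1) (hy : y ≤ h.2.1)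
    (hlt : edgeHeight e x < edgeHeight h x) : edgeHeight e y ≤ edgeHeight h y := by
  by_contra! hgt
  apply hc
  have h1 := edgeHeight_sub e y x
  have h2 := edgeHeight_sub h y x
  have hs : 0 < edgeSlope e - edgeSlope h := by
    by_contra! hs
    nlinarith
  -- the abscissa of the intersection point of the two lines
  refine ⟨x + (edgeHeight h x - edgeHeight e x) / (edgeSlope e - edgeSlope h), ?_⟩
  have hp : 0 < (edgeHeight h x - edgeHeight e x) / (edgeSlope e - edgeSlope h) :=
    div_pos (by linarith) hs
  have hq : (edgeHeight h x - edgeHeight e x) / (edgeSlope e - edgeSlope h) < y - x := by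
    rw [div_lt_iff₀ hs]; nlinarith
  refine ⟨by linarith, by linarith, by linarith, by linarith, ?_⟩
  have hd : edgeSlope e - edgeSlope h ≠ 0 := hs.ne'
  rw [edgeHeight_sub e (x + _) x, edgeHeight_sub h (x + _) x]
  field_simp
  ring

/-- If no endpoint of either edge lies in the interior of the other, two edges on the same
line whose interiors meet coincide. -/
lemma edge_eq_of_overlap {e h : (ℝ × ℝ) × (ℝ × ℝ)}
    (he : e.1.1 < e.2.1) (hh : h.1.1 < h.2.1)
    (e1 : ¬ (h.1.1 < e.1.1 ∧ e.1.1 < h.2.1 ∧ edgeHeight h e.1.1 = e.1.2))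
    (e2 : ¬ (h.1.1 < e.2.1 ∧ e.2.1 < h.2.1 ∧ edgeHeight h e.2.1 = e.2.2))
    (h1 : ¬ (e.1.1 < h.1.1 ∧ h.1.1 < e.2.1 ∧ edgeHeight e h.1.1 = h.1.2))
    (h2 : ¬ (e.1.1 < h.2.1 ∧ h.2.1 < e.2.1 ∧ edgeHeight e h.2.1 = h.2.2))
    (hs : edgeSlope e = edgeSlope h) {x z : ℝ} (hz : edgeHeight e z = edgeHeight h z)
    (ex1 : e.1.1 < x) (ex2 : x < e.2.1) (hx1 : h.1.1 < x) (hx2 : x < h.2.1) : e = h := by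
  have hall : ∀ y, edgeHeight e y = edgeHeight h y := fun y => by
    rw [edgeHeight_sub e y z, edgeHeight_sub h y z, hs, hz]
  have a1 : edgeHeight h e.1.1 = e.1.2 := by rw [← hall, edgeHeight_left]
  have a2 : edgeHeight h e.2.1 = e.2.2 := by rw [← hall, edgeHeight_right he]
  have b1 : edgeHeight e h.1.1 = h.1.2 := by rw [hall, edgeHeight_left]
  have b2 : edgeHeight e h.2.1 = h.2.2 := by rw [hall, edgeHeight_right hh]
  have c1 : e.1.1 = h.1.1 := by
    rcases lt_trichotomy e.1.1 h.1.1 with h' | h' | h'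
    · exact absurd ⟨h', by linarith, b1⟩ h1
    · exact h'
    · exact absurd ⟨h', by linarith, a1⟩ e1
  have c2 : e.2.1 = h.2.1 := by
    rcases lt_trichotomy e.2.1 h.2.1 with h' | h' | h'
    · exact absurd ⟨by linarith, h', a2⟩ e2
    · exact h'
    · exact absurd ⟨by linarith, h', b2⟩ h2
  refine Prod.ext (Prod.ext c1 ?_) (Prod.ext c2 ?_)
  · rw [← a1, c1, edgeHeight_left]
  · rw [← a2, c2, edgeHeight_right hh]

/-! ### Plane graphs have linearly many edges -/

/-- The charging step for plane graphs: an edge is the lowest edge leaving its left endpoint to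
the right, or the first edge vertically above some vertex, or the lowest edge reaching its right
endpoint from the left. -/
lemma edge_charge (V : Finset (ℝ × ℝ)) (E : Finset ((ℝ × ℝ) × (ℝ × ℝ)))
    (hE : ∀ e ∈ E, e.1 ∈ V ∧ e.2 ∈ V ∧ e.1.1 < e.2.1)
    (hV : ∀ e ∈ E, ∀ w ∈ V, ¬ (e.1.1 < w.1 ∧ w.1 < e.2.1 ∧ edgeHeight e w.1 = w.2))
    (hX : ∀ e ∈ E, ∀ h ∈ E, e ≠ h → ¬ EdgeCross e h) (e : (ℝ × ℝ) × (ℝ × ℝ)) (he : e ∈ E) :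
    (∀ h ∈ E, h.1 = e.1 → edgeSlope e ≤ edgeSlope h) ∨
    (∃ w ∈ V, e.1.1 < w.1 ∧ w.1 < e.2.1 ∧ w.2 < edgeHeight e w.1 ∧
      ∀ h ∈ E, h.1.1 < w.1 → w.1 < h.2.1 → w.2 < edgeHeight h w.1 →
        edgeHeight e w.1 ≤ edgeHeight h w.1) ∨
    (∀ h ∈ E, h.2 = e.2 → edgeSlope h ≤ edgeSlope e) := by
  classical
  by_cases hlow : ∀ h ∈ E, h.1 = e.1 → edgeSlope e ≤ edgeSlope h
  · exact Or.inl hlow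
  right
  push Not at hlow
  obtain ⟨f0, hf0, hf01, hf0s⟩ := hlow
  -- `f` is the edge immediately below `e` among those leaving the left endpoint of `e`
  obtain ⟨f, hf, hfmax⟩ := (E.filter fun h => h.1 = e.1 ∧ edgeSlope h < edgeSlope e).exists_max_image
    edgeSlope ⟨f0, by simp [hf0, hf01, hf0s]⟩
  simp only [mem_filter] at hf hfmax
  obtain ⟨hfE, hf1, hfs⟩ := hf
  obtain ⟨heV1, heV2, helt⟩ := hE e he
  obtain ⟨hfV1, hfV2, hflt⟩ := hE f hfE
  have hfe : f ≠ e := by rintro rfl; exact lt_irrefl _ hfs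
  have hef : e ≠ f := hfe.symm
  have hbelow : ∀ x, e.1.1 < x → edgeHeight f x < edgeHeight e x := by
    intro x hx
    have h1 := edgeHeight_sub e x e.1.1
    have h2 := edgeHeight_sub f x f.1.1
    rw [edgeHeight_left] at h1 h2
    rw [hf1] at h2
    nlinarith
  have hfl : edgeHeight f e.1.1 = e.1.2 := by rw [← hf1, edgeHeight_left]
  have hel := edgeHeight_left e
  have her := edgeHeight_right helt
  have hfr := edgeHeight_right hflt
  -- the leftmost vertex `w` of the wedge bounded by `f` and `e`
  obtain ⟨w, hw, hwmin⟩ := (V.filter fun w => e.1.1 < w.1 ∧ w.1 ≤ e.2.1 ∧ w.1 ≤ f.2.1 ∧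
      edgeHeight f w.1 ≤ w.2 ∧ w.2 ≤ edgeHeight e w.1).exists_min_image Prod.fst (by
    rcases le_total e.2.1 f.2.1 with h | h
    · refine ⟨e.2, ?_⟩
      simp only [mem_filter]
      exact ⟨heV2, helt, le_rfl, h, her ▸ (hbelow _ helt).le, her.ge⟩
    · refine ⟨f.2, ?_⟩
      simp only [mem_filter]
      have : e.1.1 < f.2.1 := by rw [← hf1]; exact hflt
      exact ⟨hfV2, this, h, le_rfl, hfr.le, hfr ▸ (hbelow _ this).le⟩)
  simp only [mem_filter] at hw hwmin
  obtain ⟨hwV, hw1, hw2, hw3, hw4, hw5⟩ := hw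
  rcases hw2.lt_or_eq with hlt | heq
  · left
    have hw5' : w.2 < edgeHeight e w.1 :=
      lt_of_le_of_ne hw5 fun h => hV e he w hwV ⟨hw1, hlt, h.symm⟩
    refine ⟨w, hwV, hw1, hlt, hw5', fun h hh hhl hhr hhw => ?_⟩
    by_contra! hhe
    obtain ⟨hhV1, hhV2, hhlt⟩ := hE h hh
    have hne : h ≠ e := by rintro rfl; exact lt_irrefl _ hhe
    have hnf : h ≠ f := by rintro rfl; linarith
    have hXe := hX e he h hh hne.symm
    have hXf := hX h hh f hfE hnf
    -- to the left of `w`, the edge `h` stays between `f` and `e`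
    have keye : ∀ x, e.1.1 ≤ x → h.1.1 ≤ x → x ≤ w.1 → edgeHeight h x ≤ edgeHeight e x := by
      intro x h1 h2 h3
      by_contra! h4
      have := edgeHeight_le_of_not_cross hXe h3 h1 h2 hw2 hhr.le h4
      linarith
    have keyf : ∀ x, e.1.1 ≤ x → h.1.1 ≤ x → x ≤ w.1 → edgeHeight f x ≤ edgeHeight h x := by
      intro x h1 h2 h3
      by_contra! h4
      have := edgeHeight_le_of_not_cross hXf h3 h2 (by rw [hf1]; exact h1) hhr.le hw3 h4
      linarith
    rcases lt_or_ge e.1.1 h.1.1 with hb | hb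
    · have h1 := keye h.1.1 hb.le le_rfl hhl.le
      have h2 := keyf h.1.1 hb.le le_rfl hhl.le
      rw [edgeHeight_left] at h1 h2
      have := hwmin h.1 ⟨hhV1, hb, by linarith, by linarith, h2, h1⟩
      linarith
    · have h1 := keye e.1.1 le_rfl hb hw1.le
      have h2 := keyf e.1.1 le_rfl hb hw1.le
      rw [hel] at h1
      rw [hfl] at h2
      have h3 : edgeHeight h e.1.1 = e.1.2 := le_antisymm h1 h2
      rcases hb.lt_or_eq with hb | hb
      · exact hV h hh e.1 heV1 ⟨hb, by linarith, h3⟩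
      · have h4 : h.1 = e.1 := Prod.ext hb (by rw [← h3, ← hb, edgeHeight_left])
        have hse : edgeSlope h < edgeSlope e := by
          have h5 := edgeHeight_sub h w.1 e.1.1
          have h6 := edgeHeight_sub e w.1 e.1.1
          by_contra! h7
          nlinarith
        have hsf := hfmax h ⟨hh, h4, hse⟩
        have h5 := edgeHeight_sub h w.1 e.1.1
        have h6 := edgeHeight_sub f w.1 e.1.1
        nlinarith
  · right
    intro h hh hhr
    by_contra! hhs
    obtain ⟨hhV1, hhV2, hhlt⟩ := hE h hh
    have hne : h ≠ e := by rintro rfl; exact lt_irrefl _ hhs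
    have hnf : h ≠ f := by rintro rfl; exact absurd hhs (by linarith)
    have hXf := hX h hh f hfE hnf
    have hhv : edgeHeight h e.2.1 = e.2.2 := by
      rw [← hhr]; exact edgeHeight_right hhlt
    have hbel : ∀ x, x < e.2.1 → edgeHeight h x < edgeHeight e x := by
      intro x hx
      have h5 := edgeHeight_sub h x e.2.1
      have h6 := edgeHeight_sub e x e.2.1
      nlinarith
    have hhlt' : h.1.1 < e.2.1 := by rw [← hhr]; exact hhlt
    have hhr1 : e.2.1 ≤ h.2.1 := by rw [hhr]
    have hfv := hbelow _ helt
    rw [heq] at hw3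
    have keyf : ∀ x, e.1.1 ≤ x → h.1.1 ≤ x → x ≤ e.2.1 → edgeHeight f x ≤ edgeHeight h x := by
      intro x h1 h2 h3
      by_contra! h4
      have := edgeHeight_le_of_not_cross hXf h3 h2 (by rw [hf1]; exact h1) hhr1 hw3 h4
      linarith
    rcases lt_or_ge e.1.1 h.1.1 with hb | hb
    · have h1 := (hbel h.1.1 hhlt').le
      have h2 := keyf h.1.1 hb.le le_rfl hhlt'.le
      rw [edgeHeight_left] at h1 h2
      have := hwmin h.1 ⟨hhV1, hb, by linarith, by linarith, h2, h1⟩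
      linarith
    · have h1 := hbel e.1.1 helt
      have h2 := keyf e.1.1 le_rfl hb helt.le
      linarith

/-- A straight-line plane graph on `n` vertices has at most `3 n` edges. -/
lemma plane_graph_card_le (V : Finset (ℝ × ℝ)) (E : Finset ((ℝ × ℝ) × (ℝ × ℝ)))
    (hE : ∀ e ∈ E, e.1 ∈ V ∧ e.2 ∈ V ∧ e.1.1 < e.2.1)
    (hV : ∀ e ∈ E, ∀ w ∈ V, ¬ (e.1.1 < w.1 ∧ w.1 < e.2.1 ∧ edgeHeight e w.1 = w.2))
    (hX : ∀ e ∈ E, ∀ h ∈ E, e ≠ h → ¬ EdgeCross e h) : #E ≤ 3 * #V := by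
  classical
  have huniq : ∀ e ∈ E, ∀ h ∈ E, edgeSlope e = edgeSlope h → (e.1 = h.1 ∨ e.2 = h.2) → e = h := by
    intro e he h hh hs hor
    obtain ⟨e1, e2, elt⟩ := hE e he
    obtain ⟨h1, h2, hlt⟩ := hE h hh
    rcases hor with heq | heq
    · have hz : edgeHeight e e.1.1 = edgeHeight h e.1.1 := by
        rw [edgeHeight_left, heq, edgeHeight_left]
      have h3 : h.1.1 = e.1.1 := by rw [heq]
      obtain ⟨x, hx1, hx2⟩ := exists_between (lt_min elt (h3 ▸ hlt))
      exact edge_eq_of_overlap elt hlt (hV h hh _ e1) (hV h hh _ e2) (hV e he _ h1) (hV e he _ h2)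
        hs hz hx1 (hx2.trans_le (min_le_left _ _)) (h3 ▸ hx1) (hx2.trans_le (min_le_right _ _))
    · have hz : edgeHeight e e.2.1 = edgeHeight h e.2.1 := by
        rw [edgeHeight_right elt, heq, edgeHeight_right hlt]
      have h3 : h.2.1 = e.2.1 := by rw [heq]
      obtain ⟨x, hx1, hx2⟩ := exists_between (max_lt elt (h3 ▸ hlt))
      exact edge_eq_of_overlap elt hlt (hV h hh _ e1) (hV h hh _ e2) (hV e he _ h1) (hV e he _ h2)
        hs hz ((le_max_left _ _).trans_lt hx1) hx2 ((le_max_right _ _).trans_lt hx1) (h3 ▸ hx2)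
  set E1 := E.filter fun e => ∀ h ∈ E, h.1 = e.1 → edgeSlope e ≤ edgeSlope h with hE1
  set E2 := E.filter fun e => ∃ w ∈ V, e.1.1 < w.1 ∧ w.1 < e.2.1 ∧ w.2 < edgeHeight e w.1 ∧
      ∀ h ∈ E, h.1.1 < w.1 → w.1 < h.2.1 → w.2 < edgeHeight h w.1 →
        edgeHeight e w.1 ≤ edgeHeight h w.1 with hE2
  set E3 := E.filter fun e => ∀ h ∈ E, h.2 = e.2 → edgeSlope h ≤ edgeSlope e with hE3
  have hcover : E ⊆ E1 ∪ E2 ∪ E3 := by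
    intro e he
    rcases edge_charge V E hE hV hX e he with h | h | h
    · simp only [mem_union]; exact Or.inl (Or.inl (mem_filter.2 ⟨he, h⟩))
    · simp only [mem_union]; exact Or.inl (Or.inr (mem_filter.2 ⟨he, h⟩))
    · simp only [mem_union]; exact Or.inr (mem_filter.2 ⟨he, h⟩)
  have c1 : #E1 ≤ #V := by
    refine card_le_card_of_injOn Prod.fst (fun e he => (hE e (mem_filter.1 he).1).1) ?_
    intro e he h hh heq
    obtain ⟨he, he'⟩ := mem_filter.1 he
    obtain ⟨hh, hh'⟩ := mem_filter.1 hh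
    exact huniq e he h hh (le_antisymm (he' h hh heq.symm) (hh' e he heq)) (Or.inl heq)
  have c3 : #E3 ≤ #V := by
    refine card_le_card_of_injOn Prod.snd (fun e he => (hE e (mem_filter.1 he).1).2.1) ?_
    intro e he h hh heq
    obtain ⟨he, he'⟩ := mem_filter.1 he
    obtain ⟨hh, hh'⟩ := mem_filter.1 hh
    exact huniq e he h hh (le_antisymm (hh' e he heq) (he' h hh heq.symm)) (Or.inr heq)
  have c2 : #E2 ≤ #V := by
    have hch : ∀ e : (ℝ × ℝ) × (ℝ × ℝ), ∃ w : ℝ × ℝ, e ∈ E2 → w ∈ V ∧ e.1.1 < w.1 ∧ w.1 < e.2.1 ∧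
        w.2 < edgeHeight e w.1 ∧ ∀ h ∈ E, h.1.1 < w.1 → w.1 < h.2.1 → w.2 < edgeHeight h w.1 →
        edgeHeight e w.1 ≤ edgeHeight h w.1 := by
      intro e
      by_cases he : e ∈ E2
      · obtain ⟨w, hw⟩ := (mem_filter.1 he).2
        exact ⟨w, fun _ => hw⟩
      · exact ⟨0, fun h => absurd h he⟩
    choose g hg using hch
    refine card_le_card_of_injOn g (fun e he => (hg e he).1) ?_
    intro e he h hh heq
    obtain ⟨-, a1, a2, a3, a4⟩ := hg e he
    obtain ⟨-, b1, b2, b3, b4⟩ := hg h hh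
    rw [← heq] at b1 b2 b3 b4
    by_contra hne
    have he := (mem_filter.1 he).1
    have hh := (mem_filter.1 hh).1
    exact hX e he h hh hne
      ⟨_, a1, a2, b1, b2, le_antisymm (a4 h hh b1 b2 b3) (b4 e he a1 a2 a3)⟩
  have h1 := card_le_card hcover
  have h2 := card_union_le (E1 ∪ E2) E3
  have h3 := card_union_le E1 E2
  omega

/-! ### Amplification by random sampling -/

/-- The binomial identity behind random sampling: if every point of `P` is kept independently with
probability `1 / t`, a given `A ⊆ P` survives with probability `t ^ (-#A)`. All weights are scaled
by `t ^ #P`, and `t = q + 1`. -/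
lemma sum_weight_superset {α : Type*} [DecidableEq α] (P A : Finset α) (hA : A ⊆ P) (q : ℕ) :
    (∑ S ∈ P.powerset with A ⊆ S, q ^ (#P - #S)) * (q + 1) ^ #A = (q + 1) ^ #P := by
  have h1 : (P.powerset.filter fun S => A ⊆ S) = (P \ A).powerset.image (A ∪ ·) := by
    rw [← Finset.Icc_eq_image_powerset hA]
    ext S
    simp [and_comm]
  have hdisj : ∀ T ∈ (P \ A).powerset, Disjoint A T := by
    intro T hT
    rw [mem_powerset] at hT
    exact disjoint_of_subset_right hT disjoint_sdiff
  rw [h1, sum_image]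
  · have h2 : ∀ T ∈ (P \ A).powerset, q ^ (#P - #(A ∪ T)) = 1 ^ #T * q ^ (#(P \ A) - #T) := by
      intro T hT
      rw [card_union_of_disjoint (hdisj T hT), card_sdiff_of_subset hA, one_pow, one_mul,
        Nat.sub_sub]
    rw [sum_congr rfl h2, sum_pow_mul_eq_add_pow, card_sdiff_of_subset hA, add_comm 1 q, ← pow_add,
      Nat.sub_add_cancel (card_le_card hA)]
  · intro T hT T' hT' heq
    have hd := hdisj T hT
    have hd' := hdisj T' hT'
    have := congrArg (· \ A) heq
    simpa [union_sdiff_left, sdiff_eq_self_of_disjoint hd.symm,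
      sdiff_eq_self_of_disjoint hd'.symm] using this

/-- Amplification by sampling: the weak bound `#E ≤ 3 #S + #C` for all induced substructures
yields a strong one. `E` stands for edges and `C` for crossing pairs of edges. -/
lemma amplify {α : Type*} [DecidableEq α] (P : Finset α) (E : Finset (α × α))
    (C : Finset ((α × α) × (α × α)))
    (hE : ∀ e ∈ E, e.1 ∈ P ∧ e.2 ∈ P ∧ e.1 ≠ e.2)
    (hC : ∀ c ∈ C, c.1 ∈ E ∧ c.2 ∈ E ∧ #{c.1.1, c.1.2, c.2.1, c.2.2} = 4)
    (h : ∀ S ⊆ P, #(E.filter fun e => {e.1, e.2} ⊆ S) ≤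
      3 * #S + #(C.filter fun c => {c.1.1, c.1.2, c.2.1, c.2.2} ⊆ S)) (q : ℕ) :
    #E * (q + 1) ^ 2 ≤ 3 * #P * (q + 1) ^ 3 + #C := by
  set t := q + 1 with ht
  have hsum : ∑ S ∈ P.powerset, q ^ (#P - #S) * #(E.filter fun e => {e.1, e.2} ⊆ S) ≤
      ∑ S ∈ P.powerset, q ^ (#P - #S) *
        (3 * #S + #(C.filter fun c => {c.1.1, c.1.2, c.2.1, c.2.2} ⊆ S)) :=
    sum_le_sum fun S hS => Nat.mul_le_mul_left _ (h S (mem_powerset.1 hS))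
  have swap : ∀ {β : Type _} (F : Finset β) (A : β → Finset α) (j : ℕ),
      (∀ b ∈ F, A b ⊆ P ∧ #(A b) = j) →
      (∑ S ∈ P.powerset, q ^ (#P - #S) * #(F.filter fun b => A b ⊆ S)) * t ^ j
        = #F * t ^ #P := by
    intro β F A j hF
    have : ∀ S ∈ P.powerset, q ^ (#P - #S) * #(F.filter fun b => A b ⊆ S) =
        ∑ b ∈ F, if A b ⊆ S then q ^ (#P - #S) else 0 := by
      intro S _
      rw [← sum_filter, sum_const, smul_eq_mul, mul_comm]
    rw [sum_congr rfl this, sum_comm, sum_mul, card_eq_sum_ones F, sum_mul]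
    refine sum_congr rfl fun b hb => ?_
    rw [← sum_filter, ← (hF b hb).2, sum_weight_superset P _ (hF b hb).1, one_mul]
  have s1 := swap E (fun e => {e.1, e.2}) 2 (fun e he => by
    obtain ⟨a, b, c⟩ := hE e he
    exact ⟨by simp [insert_subset_iff, a, b], card_pair c⟩)
  have s2 := swap C (fun c => {c.1.1, c.1.2, c.2.1, c.2.2}) 4 (fun c hc => by
    obtain ⟨a, b, d⟩ := hC c hc
    exact ⟨by simp [insert_subset_iff, hE _ a, hE _ b], d⟩)
  have s3 : (∑ S ∈ P.powerset, q ^ (#P - #S) * #S) * t ^ 1 = #P * t ^ #P := by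
    rw [← swap P (fun a => {a}) 1 (fun a ha => ⟨by simpa using ha, card_singleton a⟩)]
    congr 1
    refine sum_congr rfl fun S hS => ?_
    rw [mem_powerset] at hS
    congr 2
    ext a
    simp only [mem_filter, singleton_subset_iff]
    exact ⟨fun h => ⟨hS h, h⟩, fun h => h.2⟩
  have hsplit : ∑ S ∈ P.powerset, q ^ (#P - #S) *
        (3 * #S + #(C.filter fun c => {c.1.1, c.1.2, c.2.1, c.2.2} ⊆ S)) =
      3 * (∑ S ∈ P.powerset, q ^ (#P - #S) * #S) + ∑ S ∈ P.powerset, q ^ (#P - #S) *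
        #(C.filter fun c => {c.1.1, c.1.2, c.2.1, c.2.2} ⊆ S) := by
    rw [mul_sum, ← sum_add_distrib]
    exact sum_congr rfl fun S _ => by rw [mul_add, mul_left_comm]
  rw [hsplit] at hsum
  have hm := Nat.mul_le_mul_right (t ^ 4) hsum
  have hpos : 0 < t ^ #P := by positivity
  refine Nat.le_of_mul_le_mul_right ?_ hpos
  calc #E * t ^ 2 * t ^ #P = (#E * t ^ #P) * t ^ 2 := by ring
    _ = (∑ S ∈ P.powerset, q ^ (#P - #S) * #(E.filter fun e => {e.1, e.2} ⊆ S)) * t ^ 4 := by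
        rw [← s1]; ring
    _ ≤ _ := hm
    _ = 3 * ((∑ S ∈ P.powerset, q ^ (#P - #S) * #S) * t ^ 1) * t ^ 3 +
        (∑ S ∈ P.powerset, q ^ (#P - #S) *
        #(C.filter fun c => {c.1.1, c.1.2, c.2.1, c.2.2} ⊆ S)) * t ^ 4 := by ring
    _ = _ := by rw [s3, s2]; ring

/-! ### Point sets covered by few parallel lines in many directions -/

/-- The combinatorial core: if `P` is covered by at most `k` parallel lines for each slope in
`D`, then `k ^ 2` is at least a constant times `#D * #P`. -/
lemma directions_bound (P : Finset (ℝ × ℝ)) (D : Finset ℝ) (k : ℕ) (hD : 12 ≤ #D) (hDP : #D ≤ #P)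
    (hk : ∀ s ∈ D, #(P.image fun q => q.2 - s * q.1) ≤ k) : #D * #P ≤ 2304 * k ^ 2 := by
  classical
  rcases le_or_gt (#P) (2 * k) with hPk | hPk
  · nlinarith
  -- edges join consecutive points of `P` on a line with slope in `D`
  set E : Finset ((ℝ × ℝ) × (ℝ × ℝ)) := (P ×ˢ P).filter fun e => e.1.1 < e.2.1 ∧ edgeSlope e ∈ D ∧
    ∀ w ∈ P, ¬ (e.1.1 < w.1 ∧ w.1 < e.2.1 ∧ edgeHeight e w.1 = w.2) with hEdef
  have hE : ∀ e ∈ E, e.1 ∈ P ∧ e.2 ∈ P ∧ e.1.1 < e.2.1 := by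
    intro e he
    simp only [hEdef, mem_filter, mem_product] at he
    exact ⟨he.1.1, he.1.2, he.2.1⟩
  have hED : ∀ e ∈ E, edgeSlope e ∈ D := fun e he => by
    simp only [hEdef, mem_filter] at he; exact he.2.2.1
  have hEV : ∀ e ∈ E, ∀ w ∈ P, ¬ (e.1.1 < w.1 ∧ w.1 < e.2.1 ∧ edgeHeight e w.1 = w.2) :=
    fun e he => by
      simp only [hEdef, mem_filter] at he; exact he.2.2.2
  have huniq : ∀ e ∈ E, ∀ h ∈ E, edgeSlope e = edgeSlope h → ∀ x z,
      edgeHeight e z = edgeHeight h z → e.1.1 < x → x < e.2.1 → h.1.1 < x → x < h.2.1 → e = h := by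
    intro e he h hh hs x z hz a b c d
    obtain ⟨e1, e2, elt⟩ := hE e he
    obtain ⟨h1, h2, hlt⟩ := hE h hh
    exact edge_eq_of_overlap elt hlt (hEV h hh _ e1) (hEV h hh _ e2) (hEV e he _ h1)
      (hEV e he _ h2) hs hz a b c d
  -- many edges: on each line, only the rightmost point is not the left endpoint of an edge
  have hmany : #D * #P ≤ #E + #D * k := by
    have hs : ∀ s ∈ D, #P ≤ #(E.filter fun e => edgeSlope e = s) + k := by
      intro s hs
      set T := P.filter fun u => ∀ v ∈ P, v.2 - s * v.1 = u.2 - s * u.1 → v.1 ≤ u.1 with hT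
      have hTk : #T ≤ k := by
        refine le_trans (card_le_card_of_injOn (fun q : ℝ × ℝ => q.2 - s * q.1) ?_ ?_) (hk s hs)
        · intro u hu
          exact mem_coe.2 (mem_image_of_mem _ (mem_filter.1 hu).1)
        · intro u hu v hv huv
          obtain ⟨hu, hu'⟩ := mem_filter.1 hu
          obtain ⟨hv, hv'⟩ := mem_filter.1 hv
          simp only at huv
          have h1 : u.1 = v.1 := le_antisymm (hv' u hu huv) (hu' v hv huv.symm)
          rw [h1] at huv
          exact Prod.ext h1 (by linarith)
      have hsub : P ⊆ (E.filter fun e => edgeSlope e = s).image Prod.fst ∪ T := by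
        intro u hu
        by_cases huT : u ∈ T
        · exact mem_union_right _ huT
        refine mem_union_left _ ?_
        have : ∃ v ∈ P, v.2 - s * v.1 = u.2 - s * u.1 ∧ u.1 < v.1 := by
          by_contra! hcon
          exact huT (mem_filter.2 ⟨hu, hcon⟩)
        obtain ⟨v0, hv0, hv0'⟩ := this
        obtain ⟨v, hv, hvmin⟩ := (P.filter fun v => v.2 - s * v.1 = u.2 - s * u.1 ∧ u.1 < v.1)
          |>.exists_min_image Prod.fst ⟨v0, mem_filter.2 ⟨hv0, hv0'⟩⟩
        simp only [mem_filter] at hv hvmin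
        obtain ⟨hvP, hvs, hvu⟩ := hv
        have hsl : edgeSlope (u, v) = s := by
          have : v.1 - u.1 ≠ 0 := (sub_pos.2 hvu).ne'
          simp only [edgeSlope]
          rw [div_eq_iff this]
          linarith
        refine mem_image.2 ⟨(u, v), mem_filter.2 ⟨?_, hsl⟩, rfl⟩
        simp only [hEdef, mem_filter, mem_product]
        refine ⟨⟨hu, hvP⟩, hvu, hsl ▸ hs, ?_⟩
        rintro w hw ⟨hw1, hw2, hw3⟩
        simp only [edgeHeight, hsl] at hw3
        have := hvmin w ⟨hw, by linarith, hw1⟩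
        linarith
      have h1 := card_le_card hsub
      have h2 := card_union_le ((E.filter fun e => edgeSlope e = s).image Prod.fst) T
      have h3 : #((E.filter fun e => edgeSlope e = s).image Prod.fst) ≤ _ := card_image_le
      omega
    rw [card_eq_sum_card_fiberwise (f := edgeSlope) (t := D) (fun e he => hED e he)]
    calc #D * #P = ∑ s ∈ D, #P := by simp
      _ ≤ ∑ s ∈ D, (#(E.filter fun e => edgeSlope e = s) + k) := sum_le_sum hs
      _ = _ := by simp [sum_add_distrib]
  set C : Finset (((ℝ × ℝ) × (ℝ × ℝ)) × ((ℝ × ℝ) × (ℝ × ℝ))) :=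
    (E ×ˢ E).filter fun c => c.1 ≠ c.2 ∧ EdgeCross c.1 c.2 with hCdef
  have hslope : ∀ e ∈ E, ∀ h ∈ E, e ≠ h → EdgeCross e h → edgeSlope e ≠ edgeSlope h := by
    rintro e he h hh hne ⟨x, a, b, c, d, hx⟩ hs
    exact hne (huniq e he h hh hs x x hx a b c d)
  -- few crossings: a crossing is determined by the two lines involved
  have hfew : #C ≤ (#D * k) ^ 2 := by
    set Ln : Finset (ℝ × ℝ) :=
      D.biUnion fun s => (P.image fun q => q.2 - s * q.1).image fun b => (s, b) with hLn
    have hLnk : #Ln ≤ #D * k := by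
      refine card_biUnion_le_card_mul _ _ _ fun s hs => ?_
      exact card_image_le.trans (hk s hs)
    have hmem : ∀ e ∈ E, (edgeSlope e, edgeHeight e 0) ∈ Ln := by
      intro e he
      simp only [hLn, mem_biUnion, mem_image]
      exact ⟨_, hED e he, _, ⟨e.1, (hE e he).1, rfl⟩, by simp [edgeHeight, sub_eq_add_neg]⟩
    calc #C ≤ #(Ln ×ˢ Ln) := by
          refine card_le_card_of_injOn (fun c => ((edgeSlope c.1, edgeHeight c.1 0),
            (edgeSlope c.2, edgeHeight c.2 0))) ?_ ?_
          · intro c hc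
            simp only [hCdef, coe_filter, Set.mem_ofPred_eq, mem_product] at hc
            exact mem_coe.2 (mem_product.2 ⟨hmem _ hc.1.1, hmem _ hc.1.2⟩)
          · rintro ⟨e, h⟩ hc ⟨e', h'⟩ hc' heq
            simp only [hCdef, coe_filter, Set.mem_ofPred_eq, mem_product] at hc hc'
            obtain ⟨⟨he, hh⟩, hne, hX⟩ := hc
            obtain ⟨⟨he', hh'⟩, hne', hX'⟩ := hc'
            simp only [Prod.mk.injEq] at heq
            obtain ⟨⟨es, e0⟩, ⟨hs, h0⟩⟩ := heq
            have hsl := hslope e he h hh hne hX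
            obtain ⟨x, a, b, c, d, hx⟩ := hX
            obtain ⟨x', a', b', c', d', hx'⟩ := hX'
            have hxx : x = x' := by
              rw [edgeHeight_sub e x 0, edgeHeight_sub h x 0] at hx
              rw [edgeHeight_sub e' x' 0, edgeHeight_sub h' x' 0, ← es, ← e0, ← hs, ← h0] at hx'
              have : (edgeSlope e - edgeSlope h) * (x - x') = 0 := by linarith
              rcases mul_eq_zero.1 this with h1 | h1
              · exact absurd (sub_eq_zero.1 h1) hsl
              · exact sub_eq_zero.1 h1
            subst hxx
            exact Prod.ext (huniq e he e' he' es x 0 e0 a b a' b')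
              (huniq h hh h' hh' hs x 0 h0 c d c' d')
      _ = #Ln ^ 2 := by rw [card_product, sq]
      _ ≤ _ := Nat.pow_le_pow_left hLnk 2
  have hamp := amplify P E C (fun e he => by
      obtain ⟨a, b, c⟩ := hE e he
      exact ⟨a, b, fun h => by rw [h] at c; exact lt_irrefl _ c⟩)
    (fun c hc => by
      obtain ⟨e, h⟩ := c
      simp only [hCdef, mem_filter, mem_product] at hc
      obtain ⟨⟨he, hh⟩, hne, hX⟩ := hc
      refine ⟨he, hh, ?_⟩
      have hsl := hslope e he h hh hne hX
      obtain ⟨x, a, b, c, d, hx⟩ := hX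
      have elt := (hE e he).2.2
      have hlt := (hE h hh).2.2
      have n1 : e.1 ≠ e.2 := fun h' => by rw [h'] at elt; exact lt_irrefl _ elt
      have n2 : h.1 ≠ h.2 := fun h' => by rw [h'] at hlt; exact lt_irrefl _ hlt
      have n3 : e.1 ≠ h.2 := fun h' => by rw [h'] at a; linarith
      have n4 : e.2 ≠ h.1 := fun h' => by rw [h'] at b; linarith
      have hpt : ∀ z, z ≠ x → edgeHeight e z ≠ edgeHeight h z := by
        intro z hz heq
        rw [edgeHeight_sub e z x, edgeHeight_sub h z x, hx] at heq
        exact hsl (mul_right_cancel₀ (sub_ne_zero.2 hz) (add_left_cancel heq))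
      have n5 : e.1 ≠ h.1 := fun h' => by
        refine hpt e.1.1 a.ne ?_
        rw [edgeHeight_left, h', edgeHeight_left]
      have n6 : e.2 ≠ h.2 := fun h' => by
        refine hpt e.2.1 b.ne' ?_
        rw [edgeHeight_right elt, h', edgeHeight_right hlt]
      rw [card_insert_of_notMem (by simp [n1, n3, n5]), card_insert_of_notMem (by simp [n4, n6]),
        card_pair n2])
    (fun S hS => by
      set ES := E.filter fun e => {e.1, e.2} ⊆ S with hES
      set CS := C.filter fun c => {c.1.1, c.1.2, c.2.1, c.2.2} ⊆ S with hCS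
      have hESm : ∀ e ∈ ES, e ∈ E ∧ e.1 ∈ S ∧ e.2 ∈ S := by
        intro e he
        simpa [hES, insert_subset_iff] using he
      -- the edges of the induced graph that are not involved in any crossing
      set G := ES.filter fun e => ∀ h ∈ ES, e ≠ h → ¬ EdgeCross e h with hG
      have hGm : ∀ e ∈ G, e ∈ ES := fun e he => (mem_filter.1 he).1
      have h1 : #G ≤ 3 * #S := by
        refine plane_graph_card_le S G (fun e he => ?_) (fun e he w hw => ?_)
          (fun e he h hh hne => ?_)
        · obtain ⟨a, b, c⟩ := hESm e (hGm e he)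
          exact ⟨b, c, (hE e a).2.2⟩
        · exact hEV e (hESm e (hGm e he)).1 w (hS hw)
        · exact (mem_filter.1 he).2 h (hGm h hh) hne
      have h2 : ES ⊆ G ∪ CS.image Prod.fst := by
        intro e he
        by_cases heG : e ∈ G
        · exact mem_union_left _ heG
        refine mem_union_right _ ?_
        have : ∃ h ∈ ES, e ≠ h ∧ EdgeCross e h := by
          by_contra! hcon
          exact heG (mem_filter.2 ⟨he, hcon⟩)
        obtain ⟨h, hh, hne, hX⟩ := this
        obtain ⟨a1, a2, a3⟩ := hESm e he
        obtain ⟨b1, b2, b3⟩ := hESm h hh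
        refine mem_image.2 ⟨(e, h), mem_filter.2 ⟨mem_filter.2 ⟨mem_product.2 ⟨a1, b1⟩, hne, hX⟩,
          ?_⟩, rfl⟩
        simp [insert_subset_iff, a2, a3, b2, b3]
      have h3 := card_le_card h2
      have h4 := card_union_le G (CS.image Prod.fst)
      have h5 : #(CS.image Prod.fst) ≤ #CS := card_image_le
      omega)
  -- sampling with probability about `12 / #D`, i.e. `t = ⌊#D / 12⌋`
  obtain ⟨q, hq⟩ : ∃ q, #D / 12 = q + 1 := ⟨#D / 12 - 1, by omega⟩
  have hamp := hamp q
  rw [← hq] at hamp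
  set t := #D / 12 with ht
  have ht1 : 12 * t ≤ #D := by omega
  have ht2 : #D ≤ 24 * t := by omega
  have htpos : 1 ≤ t := by omega
  generalize #D = m at *
  generalize #P = n at *
  generalize #E = N at *
  generalize #C = X at *
  have e1 : m * n ≤ 2 * N := by nlinarith
  have e2 : 12 * n * t ^ 3 ≤ m * n * t ^ 2 := by
    calc 12 * n * t ^ 3 = (12 * t) * (n * t ^ 2) := by ring
      _ ≤ m * (n * t ^ 2) := Nat.mul_le_mul_right _ ht1
      _ = _ := by ring
  have e3 : m * n * t ^ 2 ≤ 2 * N * t ^ 2 := Nat.mul_le_mul_right _ e1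
  have e4 : m * n * t ^ 2 ≤ 4 * (m * k) ^ 2 := by nlinarith
  have e5 : m * n * m ^ 2 ≤ (576 * (4 * k ^ 2)) * m ^ 2 := by
    calc m * n * m ^ 2 ≤ m * n * (24 * t) ^ 2 :=
          Nat.mul_le_mul_left _ (Nat.pow_le_pow_left ht2 2)
      _ = 576 * (m * n * t ^ 2) := by ring
      _ ≤ 576 * (4 * (m * k) ^ 2) := Nat.mul_le_mul_left _ e4
      _ = _ := by ring
  have := Nat.le_of_mul_le_mul_right e5 (by positivity)
  linarith

/-! ### Dot products -/

/-- The number of distinct dot products determined by a vector `p` and the set `P`. -/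
noncomputable def dotCount (P : Finset (ℝ × ℝ)) (p : ℝ × ℝ) : ℕ :=
  #(P.image fun q : ℝ × ℝ => p.1 * q.1 + p.2 * q.2)

lemma card_le_dotCount_sq (P : Finset (ℝ × ℝ)) (hP : P.Nonempty) (h0 : (0, 0) ∉ P) (k : ℕ)
    (hk : ∀ p ∈ P, dotCount P p ≤ k) : #P ≤ k ^ 2 := by
  by_cases hpar : ∀ p ∈ P, ∀ q ∈ P, p.1 * q.2 - p.2 * q.1 = 0
  · obtain ⟨p, hp⟩ := hP
    have hpp : p.1 ^ 2 + p.2 ^ 2 ≠ 0 := by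
      intro h
      have h1 : p.1 = 0 := by nlinarith
      have h2 : p.2 = 0 := by nlinarith
      exact h0 ((Prod.ext h1 h2 : p = (0, 0)) ▸ hp)
    have h1 : #P = dotCount P p := by
      refine (card_image_of_injOn ?_).symm
      intro r hr r' hr' heq
      simp only at heq
      have a := hpar p hp r hr
      have b := hpar p hp r' hr'
      refine Prod.ext (mul_left_cancel₀ hpp ?_) (mul_left_cancel₀ hpp ?_)
      · linear_combination p.1 * heq - p.2 * (a - b)
      · linear_combination p.2 * heq + p.1 * (a - b)
    have h2 := hk p hp
    nlinarith
  · push Not at hpar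
    obtain ⟨p, hp, q, hq, hdet⟩ := hpar
    have h1 : #P ≤ dotCount P p * dotCount P q := by
      rw [dotCount, dotCount, ← card_product]
      refine card_le_card_of_injOn
        (fun r => (p.1 * r.1 + p.2 * r.2, q.1 * r.1 + q.2 * r.2)) ?_ ?_
      · intro r hr
        exact mem_coe.2 (mem_product.2 ⟨mem_image.2 ⟨r, hr, rfl⟩, mem_image.2 ⟨r, hr, rfl⟩⟩)
      · intro r hr r' hr' heq
        simp only [Prod.mk.injEq] at heq
        obtain ⟨a, b⟩ := heq
        refine Prod.ext (mul_left_cancel₀ hdet ?_) (mul_left_cancel₀ hdet ?_)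
        · linear_combination q.2 * a - p.2 * b
        · linear_combination p.1 * b - q.1 * a
    calc #P ≤ _ := h1
      _ ≤ k * k := Nat.mul_le_mul (hk p hp) (hk q hq)
      _ = k ^ 2 := (sq k).symm

open scoped Classical in
lemma card_mul_card_lines_le (P : Finset (ℝ × ℝ)) (hP : P.Nonempty) (h0 : (0, 0) ∉ P) (k : ℕ)
    (hk : ∀ p ∈ P, dotCount P p ≤ k) :
    #P * #(P.image fun q : ℝ × ℝ => Submodule.span ℝ ({q} : Set (ℝ × ℝ))) ≤ 10000 * k ^ 2 := by
  set L := P.image fun q : ℝ × ℝ => Submodule.span ℝ ({q} : Set (ℝ × ℝ)) with hL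
  rcases le_or_gt (#L) 100 with hl | hl
  · have := card_le_dotCount_sq P hP h0 k hk
    nlinarith
  -- the slopes of the lines orthogonal to the non-horizontal vectors of `P`
  set D := (P.filter fun p => p.2 ≠ 0).image fun p => -p.1 / p.2 with hD
  have hDP : #D ≤ #P := card_image_le.trans (card_filter_le _ _)
  have hLD : #L ≤ #D + 1 := by
    have hsub : L ⊆ insert (Submodule.span ℝ {((1 : ℝ), (0 : ℝ))})
        (D.image fun s => Submodule.span ℝ {(-s, (1 : ℝ))}) := by
      intro x hx
      obtain ⟨p, hp, rfl⟩ := mem_image.1 hx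
      by_cases hp2 : p.2 = 0
      · refine mem_insert.2 (Or.inl ?_)
        have hp1 : p.1 ≠ 0 := fun h => h0 ((Prod.ext h hp2 : p = (0, 0)) ▸ hp)
        have : p = p.1 • ((1 : ℝ), (0 : ℝ)) := Prod.ext (by simp) (by simp [hp2])
        rw [this]
        exact Submodule.span_singleton_smul_eq (IsUnit.mk0 _ hp1) _
      · refine mem_insert_of_mem (mem_image.2 ⟨-p.1 / p.2, ?_, ?_⟩)
        · exact mem_image.2 ⟨p, mem_filter.2 ⟨hp, hp2⟩, rfl⟩
        · have : p = p.2 • (-(-p.1 / p.2), (1 : ℝ)) :=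
            Prod.ext (by simp; field_simp) (by simp)
          conv_rhs => rw [this]
          exact (Submodule.span_singleton_smul_eq (IsUnit.mk0 _ hp2) _).symm
    have h1 := card_le_card hsub
    have h2 := card_insert_le (Submodule.span ℝ {((1 : ℝ), (0 : ℝ))})
      (D.image fun s => Submodule.span ℝ {(-s, (1 : ℝ))})
    have h3 : #(D.image fun s => Submodule.span ℝ {(-s, (1 : ℝ))}) ≤ #D := card_image_le
    omega
  have hkD : ∀ s ∈ D, #(P.image fun q => q.2 - s * q.1) ≤ k := by
    intro s hs
    obtain ⟨p, hp, rfl⟩ := mem_image.1 hs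
    obtain ⟨hp, hp2⟩ := mem_filter.1 hp
    have : (P.image fun q => q.2 - -p.1 / p.2 * q.1) =
        (P.image fun q : ℝ × ℝ => p.1 * q.1 + p.2 * q.2).image fun y => y / p.2 := by
      rw [image_image]
      refine image_congr fun q _ => ?_
      simp only [Function.comp]
      field_simp
      ring
    rw [this]
    exact card_image_le.trans (hk p hp)
  have := directions_bound P D k (by omega) hDP hkD
  have h2 : #L ≤ 2 * #D := by omega
  nlinarith [Nat.mul_le_mul_left (#P) h2]

open scoped Classical in
theorem dot_products_from_lines_through_origin :
    ∃ c : ℝ, 0 < c ∧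
      ∀ P : Finset (ℝ × ℝ), P.Nonempty → (0, 0) ∉ P →
        ∃ p ∈ P,
          c * (P.card : ℝ) ^ ((1 : ℝ) / 2) *
            ((P.image fun q : ℝ × ℝ => Submodule.span ℝ ({q} : Set (ℝ × ℝ))).card : ℝ) ^
              ((1 : ℝ) / 2) ≤
          ((P.image fun q : ℝ × ℝ => p.1 * q.1 + p.2 * q.2).card : ℝ) := by
  refine ⟨1 / 100, by norm_num, fun P hP h0 => ?_⟩
  obtain ⟨p, hp, hmax⟩ := P.exists_max_image (dotCount P) hP
  refine ⟨p, hp, ?_⟩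
  have key := card_mul_card_lines_le P hP h0 (dotCount P p) hmax
  have hdot : #(P.image fun q : ℝ × ℝ => p.1 * q.1 + p.2 * q.2) = dotCount P p := by
    unfold dotCount
    congr!
  rw [hdot]
  generalize #(P.image fun q : ℝ × ℝ => Submodule.span ℝ ({q} : Set (ℝ × ℝ))) = l at *
  rw [← Real.sqrt_eq_rpow, ← Real.sqrt_eq_rpow, mul_assoc, ← Real.sqrt_mul (by positivity)]
  have key' : (#P : ℝ) * l ≤ (100 * dotCount P p) ^ 2 := by
    have : (#P : ℝ) * l ≤ 10000 * (dotCount P p : ℝ) ^ 2 := by exact_mod_cast key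
    linarith
  have := Real.sqrt_le_left (by positivity) |>.2 key'
  linarith
end

section
/- There exist absolute constants c > 0 and C > 0 such that for every finite set A of positive reals with |A| ≥ 2, there exist a, a' ∈ A such that |(a+A)^{(2)}(a'+A)^{(2)} / ((a+A)^{(2)}(a'+A))| ≥ c · |A|^{5/2} / (log |A|)^C. -/
/-!
The bound holds without any logarithmic loss; the argument is a squeezing argument.

List part of `A` as `x 0 < x 1 < ⋯` and, for `a < a'` in `A`, put `M x = (a' + x) / (a + x)`, a
function which decreases in `x` and exceeds `1`. For an index `k` let `ρ k = M (x k) / M (x (k + 1))`.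
Every number `(a + x i) * M (x (j + 1)) * ρ k` lies in `(a+A)²(a'+A)² / ((a+A)²(a'+A))`. If
`ρ k ≤ ρ j`, this number lies between `(a + x i) * M (x (j + 1))` and `(a + x i) * M (x j)`. If
moreover `i ≤ j` and the gap `a' - a` is at most `x (i + 1) - x i`, then it lies between `a + x i`
and `a + x (i + 1)`. Hence the triple `(i, j, ρ k)` is determined by the number
(`card_lower_bound`): the indices `i` and `j` contribute `≫ |A|` choices each, and it remains to
find `≫ |A|^{1/2}` distinct values of `ρ`.

To this end take two different gaps `(a, a')` and `(b, b')` of `A`, as short as possible. The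
equation `M (x k) = ρ * M (x (k + 1))` says that `x (k + 1)` is the image of `x k` under a Möbius map
with fixed points `-a`, `-a'`. The maps for the two gaps have different fixed points, so they agree
at no more than two points, and the pair of ratios determines `k` up to two choices
(`card_le_two_of_ratios`). Therefore one of the two gaps has `≫ |A|^{1/2}` different ratios.
-/

open Finset Pointwise

/-- For `a : ℝ` and a finite set `A ⊆ ℝ`, the translate `a + A = {a + x : x ∈ A}`. -/
noncomputable def ashift (a : ℝ) (A : Finset ℝ) : Finset ℝ := A.image fun x => a + x

/-- The set `(a+A)²(a'+A)² / ((a+A)²(a'+A))`. -/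
noncomputable def expander (a a' : ℝ) (A : Finset ℝ) : Finset ℝ :=
  (ashift a A * ashift a A * (ashift a' A * ashift a' A)) /
    (ashift a A * ashift a A * ashift a' A)

/-- The Möbius function `x ↦ (a' + x) / (a + x)`. -/
noncomputable def mob (a a' x : ℝ) : ℝ := (a' + x) / (a + x)

/-- The ratio of the values of `mob a a'` at two consecutive terms of the sequence `x`. -/
noncomputable def ratio (a a' : ℝ) (x : ℕ → ℝ) (k : ℕ) : ℝ :=
  mob a a' (x k) / mob a a' (x (k + 1))

lemma mob_gt_one {a a' x : ℝ} (ha : 0 < a) (h : a < a') (hx : 0 < x) : 1 < mob a a' x := by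
  unfold mob
  rw [one_lt_div (by positivity)]
  linarith

lemma mob_strictAnti {a a' x y : ℝ} (ha : 0 < a) (h : a < a') (hx : 0 < x) (hxy : x < y) :
    mob a a' y < mob a a' x := by
  unfold mob
  have hy : 0 < y := hx.trans hxy
  rw [div_lt_div_iff₀ (by positivity) (by positivity)]
  nlinarith

lemma mem_expander {A : Finset ℝ} {a a' x y z w : ℝ} (hx : x ∈ A) (hy : y ∈ A) (hz : z ∈ A)
    (hw : w ∈ A) :
    (a + x) * mob a a' y * (mob a a' z / mob a a' w) ∈ expander a a' A := by
  have hs : ∀ (b : ℝ) {t : ℝ}, t ∈ A → b + t ∈ ashift b A := fun b t ht =>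
    Finset.mem_image_of_mem _ ht
  have e : (a + x) * mob a a' y * (mob a a' z / mob a a' w) =
      ((a + x) * (a + w) * ((a' + y) * (a' + z))) / ((a + y) * (a + z) * (a' + w)) := by
    unfold mob
    rw [div_div_div_eq, ← mul_div_assoc (a + x), div_mul_div_comm]
    congr 1 <;> ring
  rw [e]
  unfold expander
  exact Finset.div_mem_div
    (Finset.mul_mem_mul (Finset.mul_mem_mul (hs a hx) (hs a hw))
      (Finset.mul_mem_mul (hs a' hy) (hs a' hz)))
    (Finset.mul_mem_mul (Finset.mul_mem_mul (hs a hy) (hs a hz)) (hs a' hw))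

/-- The squeezing step: the products `(a + x i) * M (x (j + 1)) * r` with `i ∈ I`, `j ∈ J`, `r ∈ R`
are pairwise distinct elements of the expander. -/
lemma card_lower_bound {A : Finset ℝ} {n : ℕ} {x : ℕ → ℝ} {a a' : ℝ}
    (hxA : ∀ i < n, x i ∈ A) (hpos : ∀ y ∈ A, 0 < y)
    (hmono : ∀ i j, i < j → j < n → x i < x j)
    (ha : 0 < a) (haa : a < a')
    (I J : Finset ℕ) (R : Finset ℝ)
    (hI : ∀ i ∈ I, i + 1 < n ∧ a' - a ≤ x (i + 1) - x i)
    (hJ : ∀ j ∈ J, j + 1 < n) (hIJ : ∀ i ∈ I, ∀ j ∈ J, i < j)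
    (hR : ∀ r ∈ R, ∃ k, k + 1 < n ∧ r = ratio a a' x k)
    (hRJ : ∀ r ∈ R, ∀ j ∈ J, r ≤ ratio a a' x j) :
    I.card * J.card * R.card ≤ (expander a a' A).card := by
  have hx : ∀ i < n, 0 < x i := fun i hi => hpos _ (hxA i hi)
  have hM : ∀ i < n, 1 < mob a a' (x i) := fun i hi => mob_gt_one ha haa (hx i hi)
  have hR1 : ∀ r ∈ R, 1 < r := by
    intro r hr
    obtain ⟨k, hk, rfl⟩ := hR r hr
    unfold ratio
    have h1 := hM (k + 1) hk
    rw [one_lt_div (by linarith)]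
    exact mob_strictAnti ha haa (hx k (by omega)) (hmono k (k + 1) (by omega) hk)
  set F : ℕ × ℕ × ℝ → ℝ := fun t => (a + x t.1) * mob a a' (x (t.2.1 + 1)) * t.2.2 with hF
  have key : ∀ i ∈ I, ∀ j ∈ J, ∀ r ∈ R,
      mob a a' (x (j + 1)) < mob a a' (x (j + 1)) * r ∧
      mob a a' (x (j + 1)) * r ≤ mob a a' (x j) ∧
      a + x i < F (i, j, r) ∧ F (i, j, r) ≤ a + x (i + 1) := by
    intro i hi j hj r hr
    have hj1 := hJ j hj
    obtain ⟨hi1, hgap⟩ := hI i hi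
    have hij := hIJ i hi j hj
    have h1 := hM (j + 1) hj1
    have hr1 := hR1 r hr
    have hxi := hx i (by omega)
    have hxj := hx j (by omega)
    have hxij := hmono i j hij (by omega)
    have l1 : mob a a' (x (j + 1)) < mob a a' (x (j + 1)) * r := by nlinarith
    have l2 : mob a a' (x (j + 1)) * r ≤ mob a a' (x j) := by
      have := hRJ r hr j hj
      unfold ratio at this
      rw [le_div_iff₀ (by linarith)] at this
      linarith
    refine ⟨l1, l2, ?_, ?_⟩
    · simp only [hF, mul_assoc]
      have : 0 < a + x i := by linarith
      nlinarith
    · have hp : 0 < a + x i := by linarith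
      have l3 : (a + x i) * mob a a' (x j) ≤ a + x (i + 1) := by
        unfold mob
        rw [← mul_div_assoc, div_le_iff₀ (by linarith)]
        nlinarith
      simp only [hF, mul_assoc]
      exact (mul_le_mul_of_nonneg_left l2 hp.le).trans l3
  have hmono' : ∀ i j, i ≤ j → j < n → x i ≤ x j := by
    intro i j hij hj
    rcases hij.eq_or_lt with rfl | h
    · exact le_rfl
    · exact (hmono i j h hj).le
  rw [mul_assoc, ← Finset.card_product J R, ← Finset.card_product I]
  refine Finset.card_le_card_of_injOn F ?_ ?_
  · rintro ⟨i, j, r⟩ ht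
    simp only [Finset.coe_product, Set.mem_prod, Finset.mem_coe] at ht
    obtain ⟨hi, hj, hr⟩ := ht
    obtain ⟨k, hk, rfl⟩ := hR r hr
    exact mem_expander (hxA _ (by have := (hI i hi).1; omega)) (hxA _ (hJ j hj))
      (hxA _ (by omega)) (hxA _ hk)
  · rintro ⟨i, j, r⟩ ht ⟨i', j', r'⟩ ht' he
    simp only [Finset.coe_product, Set.mem_prod, Finset.mem_coe] at ht ht'
    obtain ⟨hi, hj, hr⟩ := ht
    obtain ⟨hi', hj', hr'⟩ := ht'
    obtain ⟨p1, p2, p3, p4⟩ := key i hi j hj r hr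
    obtain ⟨q1, q2, q3, q4⟩ := key i' hi' j' hj' r' hr'
    have eij : i = i' := by
      rcases lt_trichotomy i i' with h | h | h
      · have := hmono' (i + 1) i' h (by have := (hI i' hi').1; omega)
        linarith
      · exact h
      · have := hmono' (i' + 1) i h (by have := (hI i hi).1; omega)
        linarith
    subst eij
    have hp : 0 < a + x i := by
      have := hx i (by have := (hI i hi).1; omega)
      linarith
    simp only [hF, mul_assoc] at he
    have he' := mul_left_cancel₀ hp.ne' he
    have hMmono : ∀ u v, u ≤ v → v < n → mob a a' (x v) ≤ mob a a' (x u) := by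
      intro u v huv hv
      rcases huv.eq_or_lt with rfl | h
      · exact le_rfl
      · exact (mob_strictAnti ha haa (hx u (by omega)) (hmono u v h hv)).le
    have ej : j = j' := by
      rcases lt_trichotomy j j' with h | h | h
      · have := hMmono (j + 1) j' h (by have := hJ j' hj'; omega)
        linarith
      · exact h
      · have := hMmono (j' + 1) j h (by have := hJ j hj; omega)
        linarith
    subst ej
    have h1 := hM (j + 1) (hJ j hj)
    have er : r = r' := mul_left_cancel₀ (by linarith) he'
    rw [er]

/-- Eliminating `y` from the two Möbius relations leaves a quadratic equation in `x` which does not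
vanish at `x = -a`, so at most two values of `x` are possible. -/
lemma card_roots_le_two {a a' b b' ρ σ : ℝ} (haa : a' ≠ a) (hab : b ≠ a) (hab' : b' ≠ a)
    (hσ : σ ≠ 1) (T : Finset ℝ)
    (hT : ∀ x ∈ T, ∃ y, (a' + x) * (a + y) = ρ * ((a + x) * (a' + y)) ∧
      (b' + x) * (b + y) = σ * ((b + x) * (b' + y))) : T.card ≤ 2 := by
  -- The eliminant, with the coefficients of `y` and the constant terms read off both relations.
  let Q : Polynomial ℝ :=
    (Polynomial.C (ρ * a' - a) * Polynomial.X + Polynomial.C (ρ * a' * a - a * a')) *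
        (Polynomial.C (1 - σ) * Polynomial.X + Polynomial.C (b' - σ * b)) -
      (Polynomial.C (σ * b' - b) * Polynomial.X + Polynomial.C (σ * b' * b - b * b')) *
        (Polynomial.C (1 - ρ) * Polynomial.X + Polynomial.C (a' - ρ * a))
  have hQ0 : Q ≠ 0 := by
    intro h
    have h1 : Q.eval (-a) = (a' - a) * ((b - a) * ((b' - a) * (1 - σ))) := by
      simp [Q]
      ring
    rw [h, Polynomial.eval_zero] at h1
    have : (a' - a) * ((b - a) * ((b' - a) * (1 - σ))) ≠ 0 :=
      mul_ne_zero (sub_ne_zero.2 haa) (mul_ne_zero (sub_ne_zero.2 hab)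
        (mul_ne_zero (sub_ne_zero.2 hab') (sub_ne_zero.2 hσ.symm)))
    exact this h1.symm
  have hdeg : Q.natDegree ≤ 2 := by
    simp only [Q]
    compute_degree
  refine le_trans ?_ hdeg
  refine Polynomial.card_le_degree_of_subset_roots fun x hx => ?_
  obtain ⟨y, e1, e2⟩ := hT x (by simpa using hx)
  rw [Polynomial.mem_roots hQ0, Polynomial.IsRoot.def]
  simp only [Q, Polynomial.eval_sub, Polynomial.eval_mul, Polynomial.eval_add, Polynomial.eval_C,
    Polynomial.eval_X]
  linear_combination ((b' + x) - σ * (b + x)) * (-e1) + ((a' + x) - ρ * (a + x)) * e2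

/-- The two ratios of an index with respect to the gaps `(a, a')` and `(b, b')` determine the index
up to two choices. -/
lemma card_le_two_of_ratios {n : ℕ} {x : ℕ → ℝ} {a a' b b' ρ σ : ℝ}
    (hx : ∀ i < n, 0 < x i) (hmono : ∀ i j, i < j → j < n → x i < x j)
    (ha : 0 < a) (haa : a < a') (hb : a' ≤ b) (hbb : b < b') (K : Finset ℕ)
    (hK : ∀ k ∈ K, k + 1 < n ∧ ratio a a' x k = ρ ∧ ratio b b' x k = σ) : K.card ≤ 2 := by
  rcases K.eq_empty_or_nonempty with rfl | ⟨k₀, hk₀⟩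
  · simp
  have hb0 : 0 < b := by linarith
  have hσ : σ ≠ 1 := by
    obtain ⟨hk, -, rfl⟩ := hK k₀ hk₀
    have h1 := mob_gt_one hb0 hbb (hx (k₀ + 1) hk)
    have h2 := mob_strictAnti hb0 hbb (hx k₀ (by omega)) (hmono k₀ (k₀ + 1) (by omega) hk)
    unfold ratio
    exact ((one_lt_div (by linarith)).2 h2).ne'
  have hinj : Set.InjOn x (K : Set ℕ) := by
    intro i hi j hj hij
    have hi' := (hK i hi).1
    have hj' := (hK j hj).1
    rcases lt_trichotomy i j with h | h | h
    · exact absurd hij (hmono i j h (by omega)).ne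
    · exact h
    · exact absurd hij (hmono j i h (by omega)).ne'
  have hrel : ∀ {c c' τ : ℝ} {k : ℕ}, 0 < c → c < c' → k + 1 < n → ratio c c' x k = τ →
      (c' + x k) * (c + x (k + 1)) = τ * ((c + x k) * (c' + x (k + 1))) := by
    rintro c c' τ k hc hcc hk rfl
    have h1 := hx k (by omega)
    have h2 := hx (k + 1) hk
    have h3 : c + x k ≠ 0 := by positivity
    have h4 : c + x (k + 1) ≠ 0 := by positivity
    have h5 : c' + x (k + 1) ≠ 0 := by linarith
    unfold ratio mob
    field_simp
  rw [← Finset.card_image_of_injOn hinj]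
  refine card_roots_le_two (a := a) (a' := a') (b := b) (b' := b') (ρ := ρ) (σ := σ)
    haa.ne' (by linarith : a < b).ne' (by linarith : a < b').ne' hσ _ ?_
  intro y hy
  obtain ⟨k, hk, rfl⟩ := Finset.mem_image.1 hy
  obtain ⟨hk1, e1, e2⟩ := hK k hk
  exact ⟨x (k + 1), hrel ha haa hk1 e1, hrel hb0 hbb hk1 e2⟩

lemma exists_top (K : Finset ℕ) (r : ℕ → ℝ) (w : ℕ) (hw : w ≤ K.card) :
    ∃ J ⊆ K, J.card = w ∧ ∀ k ∈ K \ J, ∀ j ∈ J, r k ≤ r j := by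
  induction w with
  | zero => exact ⟨∅, by simp⟩
  | succ w ih =>
    obtain ⟨J, hJK, hJ, hJr⟩ := ih (by omega)
    have hne : (K \ J).Nonempty := by
      rw [← Finset.card_pos, Finset.card_sdiff_of_subset hJK]
      omega
    obtain ⟨t, ht, hmax⟩ := Finset.exists_max_image (K \ J) r hne
    obtain ⟨htK, htJ⟩ := Finset.mem_sdiff.1 ht
    refine ⟨insert t J, Finset.insert_subset htK hJK, by
      rw [Finset.card_insert_of_notMem htJ, hJ], ?_⟩
    intro k hk j hj
    simp only [Finset.mem_sdiff, Finset.mem_insert, not_or] at hk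
    have hk' : k ∈ K \ J := Finset.mem_sdiff.2 ⟨hk.1, hk.2.2⟩
    rcases Finset.mem_insert.1 hj with rfl | hj
    · exact hmax k hk'
    · exact hJr k hk' j hj

/-- The integer form of the bound: if `|A| > 8 w`, some pair `a, a'` gives at least
`3 w² s` elements, where `s² ≥ w`. -/
lemma exists_expander_card {A : Finset ℝ} (hpos : ∀ y ∈ A, 0 < y) {w : ℕ} (hw : 1 ≤ w)
    (hA : 8 * w + 1 ≤ A.card) :
    ∃ a ∈ A, ∃ a' ∈ A, ∃ s : ℕ, w ≤ s * s ∧ 3 * w * w * s ≤ (expander a a' A).card := by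
  set n := A.card with hn
  obtain ⟨x, hxA, hmono⟩ : ∃ x : ℕ → ℝ, (∀ i < n, x i ∈ A) ∧
      ∀ i j, i < j → j < n → x i < x j := by
    refine ⟨fun i => if h : i < n then A.orderEmbOfFin hn.symm ⟨i, h⟩ else 0, ?_, ?_⟩
    · intro i hi
      simp only [hi, dif_pos]
      exact Finset.orderEmbOfFin_mem _ _ _
    · intro i j hij hj
      have hi : i < n := hij.trans hj
      simp only [hi, hj, dif_pos]
      exact (A.orderEmbOfFin hn.symm).strictMono hij
  have hx : ∀ i < n, 0 < x i := fun i hi => hpos _ (hxA i hi)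
  -- The gaps at `p` and `q` are the shortest and the second shortest one.
  obtain ⟨p, hp, hpmin⟩ := Finset.exists_min_image (Finset.range (n - 1))
    (fun i => x (i + 1) - x i) ⟨0, Finset.mem_range.2 (by omega)⟩
  obtain ⟨q, hq, hqmin⟩ := Finset.exists_min_image ((Finset.range (n - 1)).erase p)
    (fun i => x (i + 1) - x i) (by
      rw [← Finset.card_pos, Finset.card_erase_of_mem hp, Finset.card_range]; omega)
  obtain ⟨hqp, hq⟩ := Finset.mem_erase.1 hq
  have hp' := Finset.mem_range.1 hp
  have hq' := Finset.mem_range.1 hq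
  have hpq : x (p + 1) - x p ≤ x (q + 1) - x q := hpmin q hq
  have hgap : ∀ i < n - 1, i ≠ p → x (q + 1) - x q ≤ x (i + 1) - x i := fun i hi hip =>
    hqmin i (Finset.mem_erase.2 ⟨hip, Finset.mem_range.2 hi⟩)
  -- The same two gaps, in the order in which they occur in `A`.
  obtain ⟨u, v, huv, hv, hgu, hgv⟩ : ∃ u v, u < v ∧ v + 1 < n ∧
      (∀ i < n - 1, i ≠ p → x (u + 1) - x u ≤ x (i + 1) - x i) ∧
      (∀ i < n - 1, i ≠ p → x (v + 1) - x v ≤ x (i + 1) - x i) := by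
    rcases lt_or_gt_of_ne hqp with h | h
    · exact ⟨q, p, h, by omega, hgap, fun i hi hip => hpq.trans (hgap i hi hip)⟩
    · exact ⟨p, q, h, by omega, fun i hi hip => hpq.trans (hgap i hi hip), hgap⟩
  set I := (Finset.range (4 * w)).erase p with hI
  set K := Finset.Ico (4 * w) (8 * w) with hK
  have hIcard : 3 * w ≤ I.card := by
    have := Finset.pred_card_le_card_erase (s := Finset.range (4 * w)) (a := p)
    rw [Finset.card_range, ← hI] at this
    omega
  have hKcard : K.card = 4 * w := by
    rw [hK, Nat.card_Ico]
    omega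
  have main : ∀ t, t + 1 < n → (∀ i < n - 1, i ≠ p → x (t + 1) - x t ≤ x (i + 1) - x i) →
      ∀ J ⊆ K, J.card = w →
      (∀ k ∈ K \ J, ∀ j ∈ J, ratio (x t) (x (t + 1)) x k ≤ ratio (x t) (x (t + 1)) x j) →
      3 * w * w * ((K \ J).image (ratio (x t) (x (t + 1)) x)).card ≤
        (expander (x t) (x (t + 1)) A).card := by
    intro t ht hgt J hJK hJ hJr
    refine le_trans ?_ (card_lower_bound hxA hpos hmono (hx t (by omega))
      (hmono t (t + 1) (by omega) ht) I J ((K \ J).image (ratio (x t) (x (t + 1)) x))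
      ?_ ?_ ?_ ?_ ?_)
    · rw [hJ]
      gcongr
    · intro i hi
      obtain ⟨hip, hi⟩ := Finset.mem_erase.1 hi
      have := Finset.mem_range.1 hi
      exact ⟨by omega, hgt i (by omega) hip⟩
    · intro j hj
      have := Finset.mem_Ico.1 (hJK hj)
      omega
    · intro i hi j hj
      have h1 := Finset.mem_Ico.1 (hJK hj)
      have h2 := Finset.mem_range.1 (Finset.mem_erase.1 hi).2
      omega
    · intro r hr
      obtain ⟨k, hk, rfl⟩ := Finset.mem_image.1 hr
      have := Finset.mem_Ico.1 (Finset.mem_sdiff.1 hk).1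
      exact ⟨k, by omega, rfl⟩
    · intro r hr j hj
      obtain ⟨k, hk, rfl⟩ := Finset.mem_image.1 hr
      exact hJr k hk j hj
  obtain ⟨J, hJK, hJ, hJr⟩ := exists_top K (ratio (x u) (x (u + 1)) x) w (by omega)
  obtain ⟨L, hLK, hL, hLr⟩ := exists_top K (ratio (x v) (x (v + 1)) x) w (by omega)
  set R := (K \ J).image (ratio (x u) (x (u + 1)) x) with hR
  set T := (K \ L).image (ratio (x v) (x (v + 1)) x) with hT
  have hRT : w ≤ R.card * T.card := by
    -- Indices outside both `J` and `L`: their pairs of ratios lie in `R ×ˢ T`.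
    set G := K \ (J ∪ L) with hG
    have hGcard : 2 * w ≤ G.card := by
      have h1 := Finset.le_card_sdiff (J ∪ L) K
      have h2 := Finset.card_union_le J L
      rw [← hG] at h1
      omega
    have hfib := Finset.card_le_mul_card_image_of_maps_to
      (s := G) (t := R ×ˢ T)
      (f := fun k => (ratio (x u) (x (u + 1)) x k, ratio (x v) (x (v + 1)) x k))
      (fun k hk => by
        simp only [hG, Finset.mem_sdiff, Finset.mem_union, not_or] at hk
        exact Finset.mem_product.2
          ⟨Finset.mem_image_of_mem _ (Finset.mem_sdiff.2 ⟨hk.1, hk.2.1⟩),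
            Finset.mem_image_of_mem _ (Finset.mem_sdiff.2 ⟨hk.1, hk.2.2⟩)⟩) 2
      (fun y _ => by
        refine card_le_two_of_ratios (n := n) (x := x) (a := x u) (a' := x (u + 1)) (b := x v)
          (b' := x (v + 1)) (ρ := y.1) (σ := y.2) hx hmono (hx u (by omega))
          (hmono u (u + 1) (by omega) (by omega)) ?_ (hmono v (v + 1) (by omega) hv) _ ?_
        · rcases (Nat.succ_le_of_lt huv).eq_or_lt with h | h
          · rw [← h]
          · exact (hmono _ _ h (by omega)).le
        · intro k hk
          obtain ⟨hk, he⟩ := Finset.mem_filter.1 hk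
          have := Finset.mem_Ico.1 (Finset.mem_sdiff.1 hk).1
          exact ⟨by omega, congrArg Prod.fst he, congrArg Prod.snd he⟩)
    rw [Finset.card_product] at hfib
    omega
  rcases le_total T.card R.card with h | h
  · exact ⟨x u, hxA u (by omega), x (u + 1), hxA _ (by omega), R.card,
      hRT.trans (Nat.mul_le_mul_left _ h), main u (by omega) hgu J hJK hJ hJr⟩
  · exact ⟨x v, hxA v (by omega), x (v + 1), hxA _ hv, T.card,
      hRT.trans (Nat.mul_le_mul_right _ h), main v hv hgv L hLK hL hLr⟩

theorem superquadratic_additive_shift_expander :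
    ∃ c C : ℝ, 0 < c ∧ 0 < C ∧
      ∀ A : Finset ℝ, (∀ x ∈ A, 0 < x) → 2 ≤ A.card →
        ∃ a ∈ A, ∃ a' ∈ A,
          c * (A.card : ℝ) ^ ((5 : ℝ) / 2) / (Real.log A.card) ^ C ≤
            (((ashift a A * ashift a A * (ashift a' A * ashift a' A)) /
              (ashift a A * ashift a A * ashift a' A)).card : ℝ) := by
  refine ⟨1 / 2048, 1, by norm_num, one_pos, ?_⟩
  intro A hpos h2
  -- Since `log |A| ≥ log 2 > 1 / 2`, it suffices to bound the cardinality by `|A|^{5/2} / 1024`.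
  have hlog : (1 : ℝ) / 2 ≤ Real.log A.card := by
    have h1 : Real.log 2 ≤ Real.log A.card :=
      Real.log_le_log (by norm_num) (by exact_mod_cast h2)
    have := Real.log_two_gt_d9
    linarith
  suffices h : ∃ a ∈ A, ∃ a' ∈ A,
      (A.card : ℝ) ^ ((5 : ℝ) / 2) ≤ 1024 * ((expander a a' A).card : ℝ) by
    obtain ⟨a, ha, a', ha', h⟩ := h
    refine ⟨a, ha, a', ha', ?_⟩
    change _ ≤ ((expander a a' A).card : ℝ)
    rw [Real.rpow_one, div_le_iff₀ (by linarith)]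
    have h0 : (0 : ℝ) ≤ (expander a a' A).card := Nat.cast_nonneg _
    nlinarith
  have hpow : ∀ y z : ℝ, 0 ≤ y → y ≤ 16 * z → y ^ ((5 : ℝ) / 2) ≤ 1024 * z ^ ((5 : ℝ) / 2) := by
    intro y z hy hyz
    have hz : 0 ≤ z := by linarith
    have h16 : (16 : ℝ) ^ ((5 : ℝ) / 2) = 1024 := by
      rw [show (16 : ℝ) = 4 ^ (2 : ℝ) by norm_num, ← Real.rpow_mul (by norm_num)]
      norm_num
    calc y ^ ((5 : ℝ) / 2) ≤ (16 * z) ^ ((5 : ℝ) / 2) :=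
          Real.rpow_le_rpow hy hyz (by norm_num)
      _ = _ := by rw [Real.mul_rpow (by norm_num) hz, h16]
  rcases lt_or_ge A.card 9 with hsmall | hbig
  · obtain ⟨a, ha⟩ := Finset.card_pos.1 (by omega : 0 < A.card)
    refine ⟨a, ha, a, ha, ?_⟩
    have hcard : (1 : ℝ) ≤ (expander a a A).card := by
      exact_mod_cast Finset.card_pos.2 ⟨_, mem_expander ha ha ha ha⟩
    have h9 : (A.card : ℝ) ≤ 16 * 1 := by
      have : (A.card : ℝ) < 9 := by exact_mod_cast hsmall
      linarith
    have := hpow A.card 1 (Nat.cast_nonneg _) h9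
    rw [Real.one_rpow] at this
    linarith
  · obtain ⟨w, hw1, hw2, hw3⟩ : ∃ w : ℕ, 1 ≤ w ∧ 8 * w + 1 ≤ A.card ∧ A.card ≤ 16 * w :=
      ⟨(A.card - 1) / 8, by omega, by omega, by omega⟩
    obtain ⟨a, ha, a', ha', s, hs, hcard⟩ := exists_expander_card hpos hw1 hw2
    refine ⟨a, ha, a', ha', (hpow A.card w (Nat.cast_nonneg _) (by exact_mod_cast hw3)).trans ?_⟩
    have hsqrt : (w : ℝ) ^ ((1 : ℝ) / 2) ≤ s := by
      rw [← Real.sqrt_eq_rpow]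
      exact Real.sqrt_le_iff.2 ⟨Nat.cast_nonneg _, by rw [sq]; exact_mod_cast hs⟩
    have hw0 : (0 : ℝ) < w := by exact_mod_cast hw1
    have hsplit : (w : ℝ) ^ ((5 : ℝ) / 2) = w * w * (w : ℝ) ^ ((1 : ℝ) / 2) := by
      rw [show (5 : ℝ) / 2 = 2 + 1 / 2 by norm_num, Real.rpow_add hw0, Real.rpow_two, sq]
    have hcard' : (3 : ℝ) * w * w * s ≤ (expander a a' A).card := by exact_mod_cast hcard
    have h1 : (w : ℝ) * w * (w : ℝ) ^ ((1 : ℝ) / 2) ≤ w * w * s := by gcongr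
    have h2 : (0 : ℝ) ≤ w * w * s := by positivity
    rw [hsplit]
    nlinarith
end
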